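/- arXiv:1907.07436 — 5 statements merged into one kernel-verified Lean document; each statement's English description precedes it below -/
import Mathlib

section
/- Let Ω ⊆ ℝⁿ be an open set, F : Ω → ℝⁿ a continuous vector field and V : Ω → ℝ continuous. The following are equivalent: (i) V is a viscosity subsolution of −F(x)·∇V(x) ≤ 0 in Ω, i.e. for every C¹ function φ : Ω → ℝ and every point x₀ ∈ Ω at which V − φ attains a local maximum one has −F(x₀)·∇φ(x₀) ≤ 0; (ii) the pair (V,F) is forward weakly increasing, i.e. for every x₀ ∈ Ω there exist ε > 0 and a C¹ curve x : [0,ε) → Ω with x(0) = x₀, ẋ(t) = F(x(t)) for all t ∈ [0,ε), and V(x(s)) ≤ V(x(t)) whenever 0 ≤ s ≤ t < ε. -/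
open Set
open scoped RealInnerProductSpace

section helpers
open Filter Topology

lemma aux_inner_gradient {E : Type*} [NormedAddCommGroup E] [InnerProductSpace ℝ E]
    [CompleteSpace E] (φ : E → ℝ) (x v : E) : ⟪v, gradient φ x⟫ = fderiv ℝ φ x v := by
  rw [real_inner_comm, gradient, InnerProductSpace.toDual_symm_apply]

lemma aux_easy {E : Type*} [NormedAddCommGroup E] [InnerProductSpace ℝ E]
    [CompleteSpace E] (Ω : Set E) (hΩ : IsOpen Ω) (F : E → E) (V : E → ℝ)
    (H : ∀ x₀ ∈ Ω, ∃ ε > (0:ℝ), ∃ x : ℝ → E,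
        x 0 = x₀ ∧ (∀ t ∈ Ico (0:ℝ) ε, x t ∈ Ω) ∧
        (∀ t ∈ Ico (0:ℝ) ε, HasDerivWithinAt x (F (x t)) (Ico (0:ℝ) ε) t) ∧
        ∀ s t : ℝ, 0 ≤ s → s ≤ t → t < ε → V (x s) ≤ V (x t))
    (φ : E → ℝ) (hφ : ContDiff ℝ 1 φ) (x₀ : E) (hx₀ : x₀ ∈ Ω)
    (hmax : IsLocalMaxOn (fun x => V x - φ x) Ω x₀) : -⟪F x₀, gradient φ x₀⟫ ≤ 0 := by
  obtain ⟨ε, hε, x, hx0, hxΩ, hxd, hxm⟩ := H x₀ hx₀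
  rw [aux_inner_gradient]
  have h0 : (0:ℝ) ∈ Ico (0:ℝ) ε := ⟨le_rfl, hε⟩
  have hd := hxd 0 h0
  have hφd : HasFDerivAt φ (fderiv ℝ φ x₀) (x 0) := by
    rw [hx0]; exact (hφ.differentiable (by norm_num) x₀).hasFDerivAt
  have hc : HasDerivWithinAt (φ ∘ x) (fderiv ℝ φ x₀ (F (x 0))) (Ico 0 ε) 0 :=
    hφd.comp_hasDerivWithinAt 0 hd
  rw [hx0] at hc
  have hcont : Tendsto x (𝓝[Ico 0 ε] 0) (𝓝[Ω] x₀) := by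
    rw [tendsto_nhdsWithin_iff]
    refine ⟨by have := hd.continuousWithinAt.tendsto; rwa [hx0] at this, ?_⟩
    exact eventually_nhdsWithin_of_forall hxΩ
  have hev := hcont.eventually hmax
  rw [hasDerivWithinAt_iff_tendsto_slope] at hc
  have hsub : Ioo 0 ε ⊆ Ico 0 ε \ {0} := fun t ht => ⟨⟨ht.1.le, ht.2⟩, ne_of_gt ht.1⟩
  have hc2 := hc.mono_left (nhdsWithin_mono 0 hsub)
  have hev2 : ∀ᶠ t in 𝓝[Ioo 0 ε] 0, V (x t) - φ (x t) ≤ V x₀ - φ x₀ :=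
    hev.filter_mono (nhdsWithin_mono 0 Ioo_subset_Ico_self)
  haveI : (𝓝[Ioo 0 ε] (0:ℝ)).NeBot := by
    rw [nhdsWithin_Ioo_eq_nhdsGT hε]; infer_instance
  have : 0 ≤ fderiv ℝ φ x₀ (F x₀) := by
    refine ge_of_tendsto hc2 ?_
    filter_upwards [hev2, self_mem_nhdsWithin] with t ht ht2
    rw [slope_def_field]
    have := hxm 0 t le_rfl ht2.1.le ht2.2
    rw [hx0] at this
    simp only [Function.comp, hx0]
    apply div_nonneg <;> linarith [ht2.1]
  linarith

/-- discrete Euler estimate -/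
lemma aux_euler {E : Type*} [NormedAddCommGroup E] [NormedSpace ℝ E]
    (X G : ℕ → E) (h c : ℝ) (hh : 0 ≤ h) (w : E) (hX : ∀ k, X (k+1) = X k + h • G k)
    (p q : ℕ) (hpq : p ≤ q) (hG : ∀ k, p ≤ k → k < q → ‖G k - w‖ ≤ c) :
    ‖X q - X p - (((q:ℝ) - p) * h) • w‖ ≤ c * (((q:ℝ) - p) * h) := by
  induction q, hpq using Nat.le_induction with
  | base => simp
  | succ q hq ih =>
    have h1 := ih (fun k hk hk' => hG k hk (by omega))
    have h2 := hG q hq (by omega)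
    have e : X (q+1) - X p - ((((q+1:ℕ):ℝ) - p) * h) • w
        = (X q - X p - (((q:ℝ) - p) * h) • w) + h • (G q - w) := by
      rw [hX]; push_cast; module
    rw [e]
    refine (norm_add_le _ _).trans ?_
    rw [norm_smul, Real.norm_of_nonneg hh]
    have := mul_le_mul_of_nonneg_left h2 hh
    push_cast
    linarith

lemma aux_lip {E : Type*} [NormedAddCommGroup E] [NormedSpace ℝ E]
    (X G : ℕ → E) (h M : ℝ) (hh : 0 ≤ h) (hX : ∀ k, X (k+1) = X k + h • G k)
    (hG : ∀ k, ‖G k‖ ≤ M) (p q : ℕ) : ‖X q - X p‖ ≤ M * (|(q:ℝ) - p| * h) := by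
  rcases le_total p q with hpq | hpq
  · have := aux_euler X G h M hh 0 hX p q hpq (fun k _ _ => by simpa using hG k)
    rw [abs_of_nonneg (by simpa using hpq)]
    simpa using this
  · have := aux_euler X G h M hh 0 hX q p hpq (fun k _ _ => by simpa using hG k)
    rw [abs_sub_comm, abs_of_nonneg (by simpa using hpq), norm_sub_rev]
    simpa using this

/-- the sup-convolution Euler scheme -/
lemma aux_scheme {E : Type*} [NormedAddCommGroup E] [InnerProductSpace ℝ E]
    [CompleteSpace E] [ProperSpace E] (Ω : Set E) (F : E → E) (V : E → ℝ)
    (H : ∀ φ : E → ℝ, ContDiff ℝ 1 φ → ∀ x₀ ∈ Ω,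
        IsLocalMaxOn (fun x => V x - φ x) Ω x₀ → -⟪F x₀, gradient φ x₀⟫ ≤ 0)
    (x₀ : E) (R M C T : ℝ) (hR : 0 < R) (hB : Metric.closedBall x₀ R ⊆ Ω)
    (hV : ContinuousOn V (Metric.closedBall x₀ R))
    (hM : ∀ x ∈ Metric.closedBall x₀ R, ‖F x‖ ≤ M) (hM0 : 0 < M)
    (hC : ∀ x ∈ Metric.closedBall x₀ R, ‖V x‖ ≤ C)
    (hT : T * M ≤ R / 2) (e : ℝ) (he : 0 < e) (heC : 4 * e * C < (R / 2) ^ 2) :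
    ∃ X Y : ℕ → E, X 0 = x₀ ∧ (∀ k, X (k+1) = X k + e^2 • F (Y k)) ∧
      (∀ k, Y k ∈ Metric.closedBall x₀ R) ∧
      (∀ k : ℕ, k * e^2 ≤ T → X k ∈ Metric.closedBall x₀ (R/2)) ∧
      (∀ k : ℕ, k * e^2 ≤ T → ‖Y k - X k‖ ≤ √(4 * e * C)) ∧
      (∀ i j : ℕ, i ≤ j → j * e^2 ≤ T → V (X i) ≤ V (Y j) + T * e * M^2 / 2) := by
  have hmaxex : ∀ x : E, ∃ y ∈ Metric.closedBall x₀ R, ∀ z ∈ Metric.closedBall x₀ R,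
      V z - 1/(2*e) * ‖z - x‖^2 ≤ V y - 1/(2*e) * ‖y - x‖^2 := by
    intro x
    have := (isCompact_closedBall x₀ R).exists_isMaxOn
      ⟨x₀, Metric.mem_closedBall_self hR.le⟩
      (f := fun z => V z - 1/(2*e) * ‖z - x‖^2)
      (hV.sub (by fun_prop))
    exact this
  choose Q hQ hQmax using hmaxex
  let X : ℕ → E := fun k => Nat.rec x₀ (fun _ x => x + e^2 • F (Q x)) k
  have hX : ∀ k, X (k+1) = X k + e^2 • F (Q (X k)) := fun k => rfl
  have he2 : 0 ≤ e^2 := by positivity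
  have hMX : ∀ k, ‖F (Q (X k))‖ ≤ M := fun k => hM _ (hQ _)
  have hball : ∀ k : ℕ, k * e^2 ≤ T → X k ∈ Metric.closedBall x₀ (R/2) := by
    intro k hk
    have := aux_lip X (fun k => F (Q (X k))) (e^2) M he2 hX hMX 0 k
    rw [mem_closedBall_iff_norm]
    change ‖X k - x₀‖ ≤ _ at this
    simp only [Nat.cast_zero, sub_zero, Nat.abs_cast] at this
    nlinarith
  have hclose : ∀ k : ℕ, k * e^2 ≤ T → ‖Q (X k) - X k‖^2 ≤ 4 * e * C := by
    intro k hk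
    have hb : X k ∈ Metric.closedBall x₀ R :=
      Metric.closedBall_subset_closedBall (by linarith) (hball k hk)
    have h1 := hQmax (X k) (X k) hb
    have h2 := abs_le.1 (hC _ hb)
    have h3 := abs_le.1 (hC _ (hQ (X k)))
    simp only [sub_self, norm_zero] at h1
    have h4 : 1/(2*e) * ‖Q (X k) - X k‖^2 ≤ 2 * C := by
      norm_num at h1 ⊢
      linarith [h2.1, h3.2]
    rw [div_mul_eq_mul_div, one_mul, div_le_iff₀ (by positivity)] at h4
    linarith
  have hvisc : ∀ k : ℕ, k * e^2 ≤ T → 0 ≤ ⟪F (Q (X k)), Q (X k) - X k⟫ := by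
    intro k hk
    set x := X k with hx
    set y := Q x with hy
    have hyb : y ∈ Metric.ball x₀ R := by
      have h1 := hclose k hk
      have h2 : ‖y - x‖ < R / 2 := lt_of_pow_lt_pow_left₀ 2 (by positivity) (h1.trans_lt heC)
      have h3 := mem_closedBall_iff_norm.1 (hball k hk)
      rw [mem_ball_iff_norm]
      calc ‖y - x₀‖ = ‖(y - x) + (x - x₀)‖ := by congr 1; abel
        _ ≤ _ := norm_add_le _ _
        _ < R := by linarith
    have hd : HasFDerivAt (fun z : E => 1/(2*e) * ‖z - x‖^2)
        ((1/(2*e)) • (2 • (innerSL ℝ (y - x)).comp (ContinuousLinearMap.id ℝ E))) y :=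
      (((hasFDerivAt_id y).sub_const x).norm_sq).const_mul _
    have h := H (fun z => 1/(2*e) * ‖z - x‖^2)
      (contDiff_const.mul ((contDiff_id.sub contDiff_const).norm_sq ℝ)) y
      (hB (hQ x)) (by
        have : Metric.ball x₀ R ∈ 𝓝[Ω] y :=
          mem_nhdsWithin_of_mem_nhds (Metric.isOpen_ball.mem_nhds hyb)
        filter_upwards [this] with z hz
        exact hQmax x z (Metric.ball_subset_closedBall hz))
    rw [aux_inner_gradient, hd.fderiv] at h
    simp at h
    rw [real_inner_comm]
    have hp : 0 < e⁻¹ := by positivity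
    by_contra hcon
    push Not at hcon
    rw [inner_sub_left] at hcon
    nlinarith [mul_pos hp (neg_pos.2 hcon)]
  let W : ℕ → ℝ := fun k => V (Q (X k)) - 1/(2*e) * ‖Q (X k) - X k‖^2
  have hstep : ∀ k : ℕ, k * e^2 ≤ T → W k ≤ W (k+1) + e^3 * M^2 / 2 := by
    intro k hk
    have h1 := hQmax (X (k+1)) (Q (X k)) (hQ _)
    have h2 : ‖Q (X k) - X (k+1)‖^2 ≤ ‖Q (X k) - X k‖^2 + (e^2)^2 * M^2 := by
      have : Q (X k) - X (k+1) = (Q (X k) - X k) - e^2 • F (Q (X k)) := by rw [hX]; abel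
      rw [this, norm_sub_sq_real, inner_smul_right, real_inner_comm, norm_smul,
        Real.norm_of_nonneg he2, mul_pow]
      have h3 := mul_nonneg he2 (hvisc k hk)
      have h4 : ‖F (Q (X k))‖^2 ≤ M^2 := pow_le_pow_left₀ (norm_nonneg _) (hMX k) 2
      have := mul_le_mul_of_nonneg_left h4 (sq_nonneg (e^2))
      linarith
    have h3 := mul_le_mul_of_nonneg_left h2 (by positivity : 0 ≤ 1/(2*e))
    have h4 : 1/(2*e) * ((e^2)^2 * M^2) = e^3 * M^2 / 2 := by field_simp
    change V _ - _ ≤ V _ - _ + _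
    rw [mul_add, h4] at h3
    linarith
  have hsteps : ∀ i j : ℕ, i ≤ j → j * e^2 ≤ T →
      W i ≤ W j + ((j:ℝ) - i) * (e^3 * M^2 / 2) := by
    intro i j hij
    induction j, hij using Nat.le_induction with
    | base => intro _; simp
    | succ j hj ih =>
      intro hT'
      push_cast at hT' ⊢
      have hk : (j:ℝ) * e^2 ≤ T := by nlinarith
      have := ih hk
      have := hstep j hk
      linarith
  refine ⟨X, fun k => Q (X k), rfl, hX, fun k => hQ _, hball,
    fun k hk => Real.le_sqrt_of_sq_le (hclose k hk), ?_⟩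
  intro i j hij hj
  have hi : (i:ℝ) * e^2 ≤ T :=
    (mul_le_mul_of_nonneg_right (by exact_mod_cast hij) he2).trans hj
  have h1 := hsteps i j hij hj
  have h2 := hQmax (X i) (X i)
    (Metric.closedBall_subset_closedBall (by linarith) (hball i hi))
  simp only [sub_self, norm_zero] at h2
  have h3 : 0 ≤ 1/(2*e) * ‖Q (X j) - X j‖^2 := by positivity
  have h4 : ((j:ℝ) - i) * (e^3 * M^2 / 2) ≤ T * e * M^2 / 2 := by
    have : ((j:ℝ) - i) * e^2 ≤ T := by
      have : 0 ≤ (i:ℝ) * e^2 := by positivity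
      linarith
    have := mul_le_mul_of_nonneg_right this (by positivity : 0 ≤ e * M^2/2)
    linarith
  change V _ - _ ≤ V _ - _ + _ at h1
  norm_num at h2 h1 h3 ⊢
  linarith

lemma aux_floor (t h : ℝ) (ht : 0 ≤ t) (hh : 0 < h) :
    (⌊t/h⌋₊ : ℝ) * h ≤ t ∧ t - h < (⌊t/h⌋₊ : ℝ) * h := by
  constructor
  · have := Nat.floor_le (div_nonneg ht hh.le)
    rwa [le_div_iff₀ hh] at this
  · have := Nat.lt_floor_add_one (t/h)
    rw [div_lt_iff₀ hh] at this
    linarith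

lemma aux_hard {E : Type*} [NormedAddCommGroup E] [InnerProductSpace ℝ E]
    [CompleteSpace E] [ProperSpace E] (Ω : Set E) (hΩ : IsOpen Ω) (F : E → E)
    (hF : ContinuousOn F Ω) (V : E → ℝ) (hV : ContinuousOn V Ω)
    (H : ∀ φ : E → ℝ, ContDiff ℝ 1 φ → ∀ x₀ ∈ Ω,
        IsLocalMaxOn (fun x => V x - φ x) Ω x₀ → -⟪F x₀, gradient φ x₀⟫ ≤ 0)
    (x₀ : E) (hx₀ : x₀ ∈ Ω) :
    ∃ ε > (0:ℝ), ∃ x : ℝ → E,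
        x 0 = x₀ ∧ (∀ t ∈ Ico (0:ℝ) ε, x t ∈ Ω) ∧
        (∀ t ∈ Ico (0:ℝ) ε, HasDerivWithinAt x (F (x t)) (Ico (0:ℝ) ε) t) ∧
        ∀ s t : ℝ, 0 ≤ s → s ≤ t → t < ε → V (x s) ≤ V (x t) := by
  obtain ⟨R, hR, hB⟩ := Metric.nhds_basis_closedBall.mem_iff.1 (hΩ.mem_nhds hx₀)
  have hcomp := isCompact_closedBall x₀ R
  obtain ⟨M', hM'⟩ := hcomp.exists_bound_of_continuousOn (hF.mono hB)
  obtain ⟨C, hC⟩ := hcomp.exists_bound_of_continuousOn (hV.mono hB)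
  obtain ⟨M, hM0, hM⟩ : ∃ M : ℝ, 0 < M ∧ ∀ x ∈ Metric.closedBall x₀ R, ‖F x‖ ≤ M :=
    ⟨max M' 1, by positivity, fun x hx => (hM' x hx).trans (le_max_left _ _)⟩
  obtain ⟨T, hT0, hT⟩ : ∃ T : ℝ, 0 < T ∧ T * M ≤ R / 2 :=
    ⟨R/2/M, by positivity, by field_simp; rfl⟩
  have hsch := aux_scheme Ω F V H x₀ R M C T hR hB (hV.mono hB) hM hM0 hC hT
  have hsch' : ∀ e : ℝ, ∃ X Y : ℕ → E, 0 < e → 4 * e * C < (R / 2) ^ 2 →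
      X 0 = x₀ ∧ (∀ k, X (k+1) = X k + e^2 • F (Y k)) ∧
      (∀ k, Y k ∈ Metric.closedBall x₀ R) ∧
      (∀ k : ℕ, k * e^2 ≤ T → X k ∈ Metric.closedBall x₀ (R/2)) ∧
      (∀ k : ℕ, k * e^2 ≤ T → ‖Y k - X k‖ ≤ √(4 * e * C)) ∧
      (∀ i j : ℕ, i ≤ j → j * e^2 ≤ T → V (X i) ≤ V (Y j) + T * e * M^2 / 2) := by
    intro e
    by_cases h : 0 < e ∧ 4 * e * C < (R / 2) ^ 2
    · obtain ⟨X, Y, hXY⟩ := hsch e h.1 h.2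
      exact ⟨X, Y, fun _ _ => hXY⟩
    · exact ⟨fun _ => 0, fun _ => 0, fun h1 h2 => absurd ⟨h1, h2⟩ h⟩
  choose X Y hXY using hsch'
  let U : Ultrafilter ℝ := Ultrafilter.of (𝓝[>] (0:ℝ))
  have hU : (U : Filter ℝ) ≤ 𝓝[>] (0:ℝ) := Ultrafilter.of_le _
  have hU0 : Tendsto (fun e : ℝ => e) U (𝓝 0) := hU.trans nhdsWithin_le_nhds
  have hpos : ∀ᶠ e in (U : Filter ℝ), 0 < e := hU self_mem_nhdsWithin
  have hsmall : ∀ᶠ e in (U : Filter ℝ), 4 * e * C < (R/2)^2 := by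
    have : Tendsto (fun e : ℝ => 4 * e * C) U (𝓝 (4 * 0 * C)) :=
      (hU0.const_mul 4).mul_const C
    exact this.eventually_lt_const (by simp; positivity)
  have hsq : Tendsto (fun e : ℝ => e^2) U (𝓝 0) := by simpa using hU0.pow 2
  have hrt : Tendsto (fun e : ℝ => √(4 * e * C)) U (𝓝 0) := by
    have : Tendsto (fun e : ℝ => √(4 * e * C)) U (𝓝 √(4 * 0 * C)) :=
      ((hU0.const_mul 4).mul_const C).sqrt
    simpa using this
  let I : ℝ → ℝ → ℕ := fun t e => ⌊t/e^2⌋₊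
  have hI : ∀ t, 0 ≤ t → ∀ e, 0 < e → (I t e : ℝ) * e^2 ≤ t ∧ t - e^2 < (I t e : ℝ) * e^2 :=
    fun t ht e he => aux_floor t (e^2) ht (by positivity)
  have hIt : ∀ t, 0 ≤ t → Tendsto (fun e => (I t e : ℝ) * e^2) U (𝓝 t) := by
    intro t ht
    have h1 : Tendsto (fun e : ℝ => t - e^2) U (𝓝 t) := by
      simpa using (tendsto_const_nhds (x := t)).sub hsq
    refine tendsto_of_tendsto_of_tendsto_of_le_of_le' h1 tendsto_const_nhds ?_ ?_
    · filter_upwards [hpos] with e he using (hI t ht e he).2.le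
    · filter_upwards [hpos] with e he using (hI t ht e he).1
  have hlim : ∀ t : ℝ, ∃ z : E, t ∈ Ico 0 T → z ∈ Metric.closedBall x₀ (R/2) ∧
      Tendsto (fun e => X e (I t e)) U (𝓝 z) := by
    intro t
    by_cases ht : t ∈ Ico 0 T
    · have hc := (isCompact_closedBall x₀ (R/2)).ultrafilter_le_nhds
        (U.map (fun e => X e (I t e))) (by
          rw [le_principal_iff, Ultrafilter.mem_coe, Ultrafilter.mem_map]
          change ∀ᶠ e in (U : Filter ℝ), X e (I t e) ∈ Metric.closedBall x₀ (R/2)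
          filter_upwards [hpos, hsmall] with e he he'
          exact (hXY e he he').2.2.2.1 _ ((hI t ht.1 e he).1.trans ht.2.le))
      obtain ⟨z, hz, hz'⟩ := hc
      exact ⟨z, fun _ => ⟨hz, hz'⟩⟩
    · exact ⟨0, fun h => absurd h ht⟩
  choose x hx using hlim
  have hxΩ : ∀ t ∈ Ico 0 T, x t ∈ Ω := fun t ht =>
    hB (Metric.closedBall_subset_closedBall (by linarith) (hx t ht).1)
  -- key increment estimate
  have hinc : ∀ a b : ℝ, a ∈ Ico 0 T → b ∈ Ico 0 T → a ≤ b → ∀ (w : E) (c : ℝ),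
      (∀ᶠ e in (U : Filter ℝ), ∀ k : ℕ, I a e ≤ k → k < I b e → ‖F (Y e k) - w‖ ≤ c) →
      ‖x b - x a - (b - a) • w‖ ≤ c * (b - a) := by
    intro a b ha hb hab w c hev
    have h1 : Tendsto (fun e => ((I b e : ℝ) - I a e) * e^2) U (𝓝 (b - a)) := by
      simpa only [sub_mul] using (hIt b hb.1).sub (hIt a ha.1)
    have h2 : Tendsto (fun e => ‖X e (I b e) - X e (I a e) - (((I b e : ℝ) - I a e) * e^2) • w‖)
        U (𝓝 ‖x b - x a - (b - a) • w‖) :=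
      ((((hx b hb).2.sub (hx a ha).2)).sub (h1.smul_const w)).norm
    refine le_of_tendsto_of_tendsto h2 (h1.const_mul c) ?_
    filter_upwards [hev, hpos, hsmall] with e hk he he'
    refine aux_euler (X e) (fun k => F (Y e k)) (e^2) c (by positivity) w
      (hXY e he he').2.1 _ _ ?_ hk
    exact Nat.floor_le_floor (by gcongr)
  refine ⟨T, hT0, x, ?_, hxΩ, ?_, ?_⟩
  · have h0 : (0:ℝ) ∈ Ico 0 T := ⟨le_rfl, hT0⟩
    refine tendsto_nhds_unique_of_eventuallyEq (hx 0 h0).2 (tendsto_const_nhds (x := x₀)) ?_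
    filter_upwards [hpos, hsmall] with e he he'
    simpa [I] using (hXY e he he').1
  · intro s hs
    rw [hasDerivWithinAt_iff_isLittleO, Asymptotics.isLittleO_iff]
    intro c hc
    obtain ⟨δ, hδ, hδF⟩ := Metric.continuousAt_iff.1
      (hF.continuousAt (hΩ.mem_nhds (hxΩ s hs))) c hc
    have hnear : ∀ᶠ t in 𝓝[Ico 0 T] s, M * |t - s| < δ/2 := by
      have : Tendsto (fun t : ℝ => M * |t - s|) (𝓝[Ico 0 T] s) (𝓝 (M * |s - s|)) :=
        (Continuous.tendsto (by fun_prop) s).mono_left nhdsWithin_le_nhds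
      exact this.eventually_lt_const (by simp; positivity)
    filter_upwards [hnear, self_mem_nhdsWithin] with t ht htI
    -- closeness of the velocities
    have hfin : ∀ᶠ e in (U : Filter ℝ), √(4*e*C) + M * e^2 + ‖X e (I s e) - x s‖ < δ/2 := by
      have h1 : Tendsto (fun e => ‖X e (I s e) - x s‖) U (𝓝 0) :=
        tendsto_iff_norm_sub_tendsto_zero.1 (hx s hs).2
      have h2 := (hrt.add (hsq.const_mul M)).add h1
      exact h2.eventually_lt_const (by simp; positivity)
    have hvel : ∀ᶠ e in (U : Filter ℝ), ∀ k : ℕ, (k:ℝ) * e^2 ≤ T →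
        |(k:ℝ) - I s e| * e^2 ≤ |t - s| + e^2 → ‖F (Y e k) - F (x s)‖ ≤ c := by
      filter_upwards [hfin, hpos, hsmall] with e h1 he he' k hk hk'
      obtain ⟨-, hX, hY, -, hYX, -⟩ := hXY e he he'
      have h2 := aux_lip (X e) (fun k => F (Y e k)) (e^2) M (by positivity) hX
        (fun k => hM _ (hY k)) (I s e) k
      have h3 := hYX k hk
      have h4 := mul_le_mul_of_nonneg_left hk' hM0.le
      have h5 : ‖Y e k - x s‖ < δ := by
        calc ‖Y e k - x s‖
            = ‖(Y e k - X e k) + (X e k - X e (I s e)) + (X e (I s e) - x s)‖ := by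
              congr 1; abel
          _ ≤ _ := norm_add₃_le
          _ < δ := by linarith
      have := hδF (by rwa [dist_eq_norm])
      rw [dist_eq_norm] at this
      exact this.le
    rcases le_total s t with hst | hst
    · have := hinc s t hs htI hst (F (x s)) c (by
        filter_upwards [hvel, hpos] with e hv he k hk1 hk2
        have a1 := hI s hs.1 e he
        have a2 := hI t htI.1 e he
        have k1 : (I s e : ℝ) ≤ k := by exact_mod_cast hk1
        have k2 : (k : ℝ) ≤ I t e := by exact_mod_cast hk2.le
        have he2 : 0 ≤ e^2 := by positivity
        have m2 := mul_le_mul_of_nonneg_right k2 he2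
        refine hv k (by linarith [htI.2]) ?_
        rw [abs_of_nonneg (by linarith), abs_of_nonneg (by linarith)]
        linarith)
      rwa [Real.norm_of_nonneg (by linarith)]
    · have := hinc t s htI hs hst (F (x s)) c (by
        filter_upwards [hvel, hpos] with e hv he k hk1 hk2
        have a1 := hI s hs.1 e he
        have a2 := hI t htI.1 e he
        have k1 : (I t e : ℝ) ≤ k := by exact_mod_cast hk1
        have k2 : (k : ℝ) ≤ I s e := by exact_mod_cast hk2.le
        have he2 : 0 ≤ e^2 := by positivity
        have m1 := mul_le_mul_of_nonneg_right k1 he2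
        have m2 := mul_le_mul_of_nonneg_right k2 he2
        refine hv k (by linarith [hs.2]) ?_
        rw [abs_of_nonpos (by linarith), abs_of_nonpos (by linarith)]
        linarith)
      rw [← norm_neg, Real.norm_of_nonpos (by linarith)]
      have e1 : -(x t - x s - (t - s) • F (x s)) = x s - x t - (s - t) • F (x s) := by module
      rw [e1]
      linarith
  · intro s t hs hst htT
    have hsI : s ∈ Ico 0 T := ⟨hs, by linarith⟩
    have htI : t ∈ Ico 0 T := ⟨by linarith, htT⟩
    have hYt : Tendsto (fun e => Y e (I t e)) U (𝓝 (x t)) := by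
      have h1 : Tendsto (fun e => Y e (I t e) - X e (I t e)) U (𝓝 0) := by
        refine squeeze_zero_norm' ?_ hrt
        filter_upwards [hpos, hsmall] with e he he'
        exact (hXY e he he').2.2.2.2.1 _ ((hI t htI.1 e he).1.trans htI.2.le)
      simpa using h1.add (hx t htI).2
    have hVs : Tendsto (fun e => V (X e (I s e))) U (𝓝 (V (x s))) :=
      (hV.continuousAt (hΩ.mem_nhds (hxΩ s hsI))).tendsto.comp (hx s hsI).2
    have hVt : Tendsto (fun e => V (Y e (I t e)) + T * e * M^2 / 2) U
        (𝓝 (V (x t) + T * 0 * M^2 / 2)) :=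
      ((hV.continuousAt (hΩ.mem_nhds (hxΩ t htI))).tendsto.comp hYt).add
        (((hU0.const_mul T).mul_const _).div_const _)
    have : V (x s) ≤ V (x t) + T * 0 * M^2 / 2 := by
      refine le_of_tendsto_of_tendsto hVs hVt ?_
      filter_upwards [hpos, hsmall] with e he he'
      refine (hXY e he he').2.2.2.2.2 _ _ ?_ ((hI t htI.1 e he).1.trans htI.2.le)
      exact Nat.floor_le_floor (by gcongr)
    simpa using this

end helpers

/-- equivalence between being a viscosity subsolution of
`-F(x)·∇V(x) ≤ 0` and forward weak monotonicity of `V` along the flow of `F`. -/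
theorem stmt_0 {n : ℕ} (Ω : Set (EuclideanSpace ℝ (Fin n))) (hΩ : IsOpen Ω)
    (F : EuclideanSpace ℝ (Fin n) → EuclideanSpace ℝ (Fin n)) (hF : ContinuousOn F Ω)
    (V : EuclideanSpace ℝ (Fin n) → ℝ) (hV : ContinuousOn V Ω) :
    (∀ φ : EuclideanSpace ℝ (Fin n) → ℝ, ContDiff ℝ 1 φ → ∀ x₀ ∈ Ω,
        IsLocalMaxOn (fun x => V x - φ x) Ω x₀ → -⟪F x₀, gradient φ x₀⟫ ≤ 0)
    ↔
    (∀ x₀ ∈ Ω, ∃ ε > (0:ℝ), ∃ x : ℝ → EuclideanSpace ℝ (Fin n),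
        x 0 = x₀ ∧ (∀ t ∈ Ico (0:ℝ) ε, x t ∈ Ω) ∧
        (∀ t ∈ Ico (0:ℝ) ε, HasDerivWithinAt x (F (x t)) (Ico (0:ℝ) ε) t) ∧
        ∀ s t : ℝ, 0 ≤ s → s ≤ t → t < ε → V (x s) ≤ V (x t)) := by
  constructor
  · intro H x₀ hx₀
    exact aux_hard Ω hΩ F hF V hV H x₀ hx₀
  · intro H φ hφ x₀ hx₀ hmax
    exact aux_easy Ω hΩ F V H φ hφ x₀ hx₀ hmax
end

section
/- Let Ω ⊆ ℝⁿ be an open set, F : Ω → ℝⁿ a continuous vector field and V : Ω → ℝ continuous. The following are equivalent: (iii) V is a viscosity supersolution of F(x)·∇V(x) ≥ 0 in Ω, i.e. for every C¹ function φ : Ω → ℝ and every point x₀ ∈ Ω at which V − φ attains a local minimum one has F(x₀)·∇φ(x₀) ≥ 0; (iv) the pair (V,F) is backward weakly increasing, i.e. for every x₀ ∈ Ω there exist ε > 0 and a C¹ curve x : (−ε,0] → Ω with x(0) = x₀, ẋ(t) = F(x(t)) for all t ∈ (−ε,0], and V(x(s)) ≤ V(x(t)) whenever −ε < s ≤ t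 ≤ 0. -/
open Set
open scoped RealInnerProductSpace

namespace Visc
open Filter Topology Metric

variable {n : ℕ}

theorem inner_grad (φ : (EuclideanSpace ℝ (Fin n)) → ℝ) (y v : EuclideanSpace ℝ (Fin n)) : ⟪v, gradient φ y⟫ = fderiv ℝ φ y v := by
  rw [real_inner_comm, gradient, InnerProductSpace.toDual_symm_apply]

/-- Proximal inequality from the viscosity condition. -/
theorem prox {Ω : Set (EuclideanSpace ℝ (Fin n))} {F : (EuclideanSpace ℝ (Fin n)) → (EuclideanSpace ℝ (Fin n))} {V : (EuclideanSpace ℝ (Fin n)) → ℝ}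
    (H : ∀ φ : (EuclideanSpace ℝ (Fin n)) → ℝ, ContDiff ℝ 1 φ → ∀ x₀ ∈ Ω,
        IsLocalMinOn (fun x => V x - φ x) Ω x₀ → 0 ≤ ⟪F x₀, gradient φ x₀⟫)
    {c : EuclideanSpace ℝ (Fin n)} {R lam : ℝ} (hR : closedBall c R ⊆ Ω) (hl : 0 < lam) {x y : EuclideanSpace ℝ (Fin n)}
    (hy : y ∈ ball c R)
    (hmin : ∀ p ∈ closedBall c R, V y + ‖y - x‖^2 / (2*lam) ≤ V p + ‖p - x‖^2/(2*lam)) :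
    0 ≤ ⟪x - y, F y⟫ := by
  have hd : HasFDerivAt (fun p : EuclideanSpace ℝ (Fin n) => -(1/(2*lam)) * ‖p - x‖^2)
      ((-(1/(2*lam))) • (2 • (innerSL ℝ (y - x)).comp (ContinuousLinearMap.id ℝ (EuclideanSpace ℝ (Fin n))))) y := by
    have h1 : HasFDerivAt (fun p : EuclideanSpace ℝ (Fin n) => p - x) (ContinuousLinearMap.id ℝ (EuclideanSpace ℝ (Fin n))) y :=
      (hasFDerivAt_id y).sub_const x
    exact h1.norm_sq.const_mul _
  have h := H (fun p => -(1/(2*lam)) * ‖p - x‖^2)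
    (contDiff_const.mul ((contDiff_id.sub contDiff_const).norm_sq ℝ)) y
    (hR (ball_subset_closedBall hy)) ?_
  · rw [inner_grad, hd.fderiv] at h
    simp at h
    rw [inner_sub_left]
    have h2 : 0 ≤ lam⁻¹ * (⟪x, F y⟫ - ⟪y, F y⟫) := by linarith
    exact nonneg_of_mul_nonneg_right h2 (inv_pos.2 hl)
  · have : ∀ᶠ p in 𝓝 y, p ∈ ball c R := isOpen_ball.mem_nhds hy
    refine Filter.Eventually.filter_mono nhdsWithin_le_nhds ?_
    filter_upwards [this] with p hp
    have := hmin p (ball_subset_closedBall hp)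
    have e : ∀ a : ℝ, -(1/(2*lam)) * a = - (a / (2*lam)) := fun a => by ring
    simp only [e]
    linarith

/-- discrete scheme -/
theorem scheme {Ω : Set (EuclideanSpace ℝ (Fin n))} {F : (EuclideanSpace ℝ (Fin n)) → (EuclideanSpace ℝ (Fin n))} {V : (EuclideanSpace ℝ (Fin n)) → ℝ}
    (H : ∀ φ : (EuclideanSpace ℝ (Fin n)) → ℝ, ContDiff ℝ 1 φ → ∀ x₀ ∈ Ω,
        IsLocalMinOn (fun x => V x - φ x) Ω x₀ → 0 ≤ ⟪F x₀, gradient φ x₀⟫)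
    {c : EuclideanSpace ℝ (Fin n)} {R M C lam h : ℝ} (hRΩ : closedBall c R ⊆ Ω) (hR : 0 < R) (hl : 0 < lam)
    (hh : 0 < h) (hV : ContinuousOn V (closedBall c R))
    (hFM : ∀ p ∈ closedBall c R, ‖F p‖ ≤ M) (hVC : ∀ p ∈ closedBall c R, |V p| ≤ C)
    (hlam : 4 * C * lam < (R/2)^2) :
    ∃ X Y : ℕ → (EuclideanSpace ℝ (Fin n)), X 0 = c ∧ (∀ k, X (k+1) = X k - h • F (Y k)) ∧
      (∀ k, Y k ∈ closedBall c R) ∧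
      (∀ k : ℕ, k * h * M ≤ R/2 → ‖X k - Y k‖ ≤ √(4*C*lam)) ∧
      (∀ j k : ℕ, j ≤ k → k * h * M ≤ R/2 →
        V (Y k) ≤ V (X j) + (k - j) * (h^2 * M^2/(2*lam))) := by
  have hM : 0 ≤ M := (norm_nonneg _).trans (hFM c (mem_closedBall_self hR.le))
  have hex : ∀ x : EuclideanSpace ℝ (Fin n), ∃ y ∈ closedBall c R, ∀ p ∈ closedBall c R,
      V y + ‖y - x‖^2 / (2*lam) ≤ V p + ‖p - x‖^2/(2*lam) := by
    intro x
    have hc : ContinuousOn (fun p => V p + ‖p - x‖^2/(2*lam)) (closedBall c R) :=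
      hV.add (by fun_prop)
    exact (isCompact_closedBall c R).exists_isMinOn ⟨c, mem_closedBall_self hR.le⟩ hc
  choose G hG hGmin using hex
  let X : ℕ → (EuclideanSpace ℝ (Fin n)) := fun k => Nat.rec c (fun _ x => x - h • F (G x)) k
  have hX0 : X 0 = c := rfl
  have hXs : ∀ k, X (k+1) = X k - h • F (G (X k)) := fun k => rfl
  have hXb : ∀ k : ℕ, ‖X k - c‖ ≤ k * h * M := by
    intro k
    induction k with
    | zero => simp [hX0]
    | succ k ih =>
      rw [hXs]
      have h1 : ‖h • F (G (X k))‖ ≤ h * M := by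
        rw [norm_smul, Real.norm_of_nonneg hh.le]
        exact mul_le_mul_of_nonneg_left (hFM _ (hG _)) hh.le
      calc ‖X k - h • F (G (X k)) - c‖ = ‖(X k - c) - h • F (G (X k))‖ := by congr 1; abel
        _ ≤ ‖X k - c‖ + ‖h • F (G (X k))‖ := norm_sub_le _ _
        _ ≤ k * h * M + h * M := add_le_add ih h1
        _ = _ := by push_cast; ring
  have hXm : ∀ k : ℕ, k * h * M ≤ R/2 → X k ∈ closedBall c R := fun k hk => by
    rw [mem_closedBall, dist_eq_norm]; linarith [hXb k]
  have hsq : ∀ k : ℕ, k * h * M ≤ R/2 → ‖G (X k) - X k‖^2 ≤ 4*C*lam := by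
    intro k hk
    have h1 := hGmin (X k) (X k) (hXm k hk)
    simp only [sub_self, norm_zero] at h1
    have h2 := abs_le.1 (hVC _ (hXm k hk))
    have h3 := abs_le.1 (hVC _ (hG (X k)))
    have h4 : ‖G (X k) - X k‖^2 / (2*lam) ≤ 2*C := by
      norm_num at h1; linarith
    rw [div_le_iff₀ (by positivity)] at h4
    linarith
  have hball : ∀ k : ℕ, k * h * M ≤ R/2 → G (X k) ∈ ball c R := by
    intro k hk
    have h1 : ‖G (X k) - X k‖ < R/2 :=
      lt_of_pow_lt_pow_left₀ 2 (by positivity) ((hsq k hk).trans_lt hlam)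
    rw [mem_ball, dist_eq_norm]
    calc ‖G (X k) - c‖ = ‖(G (X k) - X k) + (X k - c)‖ := by congr 1; abel
      _ ≤ ‖G (X k) - X k‖ + ‖X k - c‖ := norm_add_le _ _
      _ < R := by linarith [hXb k]
  let W : ℕ → ℝ := fun k => V (G (X k)) + ‖G (X k) - X k‖^2/(2*lam)
  have hstep : ∀ k : ℕ, k * h * M ≤ R/2 → W (k+1) ≤ W k + h^2 * M^2/(2*lam) := by
    intro k hk
    have h1 := hGmin (X (k+1)) (G (X k)) (hG _)
    have h2 := prox H hRΩ hl (hball k hk) (hGmin (X k))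
    have h3 : ‖G (X k) - X (k+1)‖^2 ≤ ‖G (X k) - X k‖^2 + h^2*M^2 := by
      have e : G (X k) - X (k+1) = (G (X k) - X k) + h • F (G (X k)) := by rw [hXs]; abel
      rw [e, norm_add_sq_real, inner_smul_right, norm_smul, Real.norm_of_nonneg hh.le, mul_pow]
      have h4 : ‖F (G (X k))‖^2 ≤ M^2 := pow_le_pow_left₀ (norm_nonneg _) (hFM _ (hG _)) 2
      have h5 : ⟪G (X k) - X k, F (G (X k))⟫ ≤ 0 := by
        rw [← neg_sub, inner_neg_left]; linarith
      have h6 := mul_le_mul_of_nonneg_left h4 (sq_nonneg h)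
      have h7 := mul_nonpos_of_nonneg_of_nonpos hh.le h5
      linarith
    have h8 := div_le_div_of_nonneg_right h3 (by positivity : 0 ≤ 2*lam)
    rw [add_div] at h8
    simp only [W]
    linarith
  refine ⟨X, fun k => G (X k), hX0, hXs, fun k => hG _, ?_, ?_⟩
  · intro k hk
    rw [norm_sub_rev]
    exact Real.le_sqrt_of_sq_le (hsq k hk)
  · intro j k hjk
    have key : k * h * M ≤ R/2 → W k ≤ W j + (k - j) * (h^2 * M^2/(2*lam)) := by
      induction k, hjk using Nat.le_induction with
      | base => intro _; simp
      | succ k hjk ih =>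
        intro hk
        have hk' : k * h * M ≤ R/2 := by
          refine le_trans ?_ hk
          push_cast
          have : 0 ≤ h * M := by positivity
          linarith
        have := ih hk'
        have := hstep k hk'
        push_cast
        linarith
    intro hk
    have hj : j * h * M ≤ R/2 := by
      refine le_trans ?_ hk
      have : (j:ℝ) ≤ k := by exact_mod_cast hjk
      gcongr
    have h1 := key hk
    have h2 := hGmin (X j) (X j) (hXm j hj)
    simp only [sub_self, norm_zero] at h2
    have h3 : 0 ≤ ‖G (X k) - X k‖^2/(2*lam) := by positivity
    simp only [W] at h1
    norm_num at h2
    linarith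

theorem disc_est {F : (EuclideanSpace ℝ (Fin n)) → (EuclideanSpace ℝ (Fin n))} {X Y : ℕ → (EuclideanSpace ℝ (Fin n))} {h ε : ℝ} (hh : 0 < h)
    (hX : ∀ k, X (k+1) = X k - h • F (Y k)) (v : EuclideanSpace ℝ (Fin n)) {j k : ℕ} (hjk : j ≤ k)
    (hv : ∀ i, j ≤ i → i < k → ‖F (Y i) - v‖ ≤ ε) :
    ‖X k - X j + (((k:ℝ) - j) * h) • v‖ ≤ ε * (((k:ℝ) - j) * h) := by
  induction k, hjk using Nat.le_induction with
  | base => simp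
  | succ k hjk ih =>
    have h1 := ih (fun i hi hik => hv i hi (by omega))
    have h2 := hv k hjk (by omega)
    have e : X (k+1) - X j + ((((k+1:ℕ):ℝ) - j) * h) • v =
      (X k - X j + (((k:ℝ) - j) * h) • v) - h • (F (Y k) - v) := by
      rw [hX]; push_cast; module
    rw [e]
    refine (norm_sub_le _ _).trans ?_
    rw [norm_smul, Real.norm_of_nonneg hh.le]
    have := mul_le_mul_of_nonneg_left h2 hh.le
    push_cast
    linarith

theorem floor_lim {h : ℕ → ℝ} (hh : ∀ m, 0 < h m) (hlim : Tendsto h atTop (𝓝 0)) {t : ℝ}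
    (ht : 0 ≤ t) : Tendsto (fun m => (⌊t / h m⌋₊ : ℝ) * h m) atTop (𝓝 t) := by
  have h1 : Tendsto (fun m => t - h m) atTop (𝓝 t) := by simpa using tendsto_const_nhds.sub hlim
  refine tendsto_of_tendsto_of_tendsto_of_le_of_le h1 tendsto_const_nhds ?_ ?_
  · intro m
    have := Nat.lt_floor_add_one (t / h m)
    rw [div_lt_iff₀ (hh m)] at this
    show t - h m ≤ _
    linarith
  · intro m
    have := Nat.floor_le (div_nonneg ht (hh m).le)
    rwa [le_div_iff₀ (hh m)] at this

theorem limit {F : (EuclideanSpace ℝ (Fin n)) → (EuclideanSpace ℝ (Fin n))} {V : (EuclideanSpace ℝ (Fin n)) → ℝ} {c : EuclideanSpace ℝ (Fin n)} {R M T : ℝ} (hM : 0 < M)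
    (hT : 0 < T)
    (hF : ContinuousOn F (closedBall c R)) (hV : ContinuousOn V (closedBall c R))
    (hFM : ∀ p ∈ closedBall c R, ‖F p‖ ≤ M) (hTM : T * M ≤ R)
    (X Y : ℕ → ℕ → (EuclideanSpace ℝ (Fin n))) (h η : ℕ → ℝ) (hh : ∀ m, 0 < h m)
    (hlim : Tendsto h atTop (𝓝 0)) (hη : Tendsto η atTop (𝓝 0))
    (hX0 : ∀ m, X m 0 = c) (hX : ∀ m k, X m (k+1) = X m k - h m • F (Y m k))
    (hY : ∀ m k, Y m k ∈ closedBall c R)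
    (hXY : ∀ m (k : ℕ), k * h m ≤ T → ‖X m k - Y m k‖ ≤ η m)
    (hVV : ∀ m (j k : ℕ), j ≤ k → k * h m ≤ T → V (Y m k) ≤ V (X m j) + η m) :
    ∃ x : ℝ → (EuclideanSpace ℝ (Fin n)), x 0 = c ∧ (∀ t ∈ Icc 0 T, x t ∈ closedBall c R) ∧
      (∀ t ∈ Icc 0 T, HasDerivWithinAt x (- F (x t)) (Icc 0 T) t) ∧
      (∀ s t : ℝ, 0 ≤ s → s ≤ t → t ≤ T → V (x t) ≤ V (x s)) := by
  let U : Ultrafilter ℕ := hyperfilter ℕ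
  have hU : (U : Filter ℕ) ≤ atTop := by
    rw [← Nat.cofinite_eq_atTop]; exact hyperfilter_le_cofinite
  have hfl : ∀ m t, 0 ≤ t → (⌊t / h m⌋₊ : ℝ) * h m ≤ t := by
    intro m t ht
    have := Nat.floor_le (div_nonneg ht (hh m).le)
    rwa [le_div_iff₀ (hh m)] at this
  let z : ℕ → ℝ → (EuclideanSpace ℝ (Fin n)) := fun m t => X m ⌊t / h m⌋₊
  let w : ℕ → ℝ → (EuclideanSpace ℝ (Fin n)) := fun m t => Y m ⌊t / h m⌋₊
  have hXlip : ∀ m {j k : ℕ}, j ≤ k → ‖X m k - X m j‖ ≤ M * (((k:ℝ) - j) * h m) := by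
    intro m j k hjk
    have := disc_est (hh m) (hX m) 0 hjk (ε := M) (fun i _ _ => by
      rw [sub_zero]; exact hFM _ (hY m i))
    simpa using this
  have hz : ∀ m, ∀ t ∈ Icc 0 T, z m t ∈ closedBall c R := by
    intro m t ht
    rw [mem_closedBall, dist_eq_norm, ← hX0 m]
    refine (hXlip m (Nat.zero_le _)).trans ?_
    have := mul_le_mul_of_nonneg_left ((hfl m t ht.1).trans ht.2) hM.le
    simp only [Nat.cast_zero, sub_zero]
    linarith
  have hex : ∀ t, ∃ p : EuclideanSpace ℝ (Fin n), t ∈ Icc 0 T → p ∈ closedBall c R ∧ Tendsto (fun m => z m t) U (𝓝 p) := by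
    intro t
    by_cases ht : t ∈ Icc 0 T
    · obtain ⟨p, hp, hp2⟩ := (isCompact_closedBall c R).ultrafilter_le_nhds'
        (U.map (fun m => z m t)) (by
          rw [Ultrafilter.mem_map]
          exact Filter.univ_mem' (fun m => hz m t ht))
      exact ⟨p, fun _ => ⟨hp, hp2⟩⟩
    · exact ⟨c, fun h => absurd h ht⟩
  choose x hx using hex
  have hxm : ∀ t ∈ Icc 0 T, x t ∈ closedBall c R := fun t ht => (hx t ht).1
  have hxl : ∀ t ∈ Icc 0 T, Tendsto (fun m => z m t) U (𝓝 (x t)) := fun t ht => (hx t ht).2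
  have hwl : ∀ t ∈ Icc 0 T, Tendsto (fun m => w m t) U (𝓝 (x t)) := by
    intro t ht
    have h0 : Tendsto (fun m => z m t - w m t) U (𝓝 0) := by
      refine squeeze_zero_norm ?_ (hη.mono_left hU)
      intro m
      exact hXY m _ ((hfl m t ht.1).trans ht.2)
    simpa using (hxl t ht).sub h0
  -- main claim
  have claim : ∀ a b : ℝ, 0 ≤ a → a ≤ b → b ≤ T → ∀ (v : EuclideanSpace ℝ (Fin n)) (ε ρ : ℝ), 0 < ρ →
      (∀ p ∈ closedBall c R, ‖p - x a‖ ≤ M * (b - a) + ρ → ‖F p - v‖ ≤ ε) →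
      ‖x b - x a + (b - a) • v‖ ≤ ε * (b - a) := by
    intro a b ha hab hb v ε ρ hρ hv
    have hfa := (floor_lim hh hlim ha).mono_left hU
    have hfb := (floor_lim hh hlim (ha.trans hab)).mono_left hU
    have hfd : Tendsto (fun m => ((⌊b / h m⌋₊ : ℝ) - ⌊a / h m⌋₊) * h m) U (𝓝 (b - a)) := by
      simpa [sub_mul] using hfb.sub hfa
    have l1 := (((hxl b ⟨ha.trans hab, hb⟩).sub (hxl a ⟨ha, hab.trans hb⟩)).add
      (hfd.smul_const v)).norm
    have l2 := hfd.const_mul ε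
    refine le_of_tendsto_of_tendsto l1 l2 ?_
    have e1 : ∀ᶠ m in (U : Filter ℕ), ‖z m a - x a‖ < ρ/3 := by
      have := (hxl a ⟨ha, hab.trans hb⟩) (ball_mem_nhds _ (by positivity : 0 < ρ/3))
      filter_upwards [this] with m hm
      simpa [dist_eq_norm] using hm
    have e2 : ∀ᶠ m in (U : Filter ℕ), η m < ρ/3 :=
      (hη.mono_left hU).eventually_lt_const (by positivity)
    have e3 : ∀ᶠ m in (U : Filter ℕ), M * (((⌊b / h m⌋₊ : ℝ) - ⌊a / h m⌋₊) * h m) < M*(b - a) + ρ/3 :=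
      (hfd.const_mul M).eventually_lt_const (by linarith)
    filter_upwards [e1, e2, e3] with m h1 h2 h3
    refine disc_est (hh m) (hX m) v (Nat.floor_mono (by have := hh m; gcongr)) ?_
    intro i hi hik
    refine hv _ (hY m i) ?_
    have hik' : (i:ℝ) ≤ ⌊b / h m⌋₊ := by exact_mod_cast hik.le
    have h4 : (i:ℝ) * h m ≤ T := 
      (mul_le_mul_of_nonneg_right hik' (hh m).le).trans ((hfl m b (ha.trans hab)).trans hb)
    have h5 := hXY m i h4
    have h6 := hXlip m hi
    have h7 : M * (((i:ℝ) - ⌊a / h m⌋₊) * h m) ≤ M * (((⌊b / h m⌋₊ : ℝ) - ⌊a / h m⌋₊) * h m) := by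
      have := hh m
      gcongr
    calc ‖Y m i - x a‖ = ‖-(X m i - Y m i) + (X m i - z m a) + (z m a - x a)‖ := by congr 1; abel
      _ ≤ ‖X m i - Y m i‖ + ‖X m i - z m a‖ + ‖z m a - x a‖ := by
        refine norm_add₃_le.trans ?_
        rw [norm_neg]
      _ ≤ _ := by linarith
  have hlip : ∀ a b : ℝ, 0 ≤ a → a ≤ b → b ≤ T → ‖x b - x a‖ ≤ M * (b - a) := by
    intro a b ha hab hb
    have := claim a b ha hab hb 0 M 1 one_pos (fun p hp _ => by simpa using hFM p hp)
    simpa using this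
  refine ⟨x, ?_, hxm, ?_, ?_⟩
  · have h0 := hxl 0 ⟨le_rfl, hT.le⟩
    have : (fun m => z m 0) = fun _ => c := by
      funext m; simp [z, hX0]
    rw [this] at h0
    exact tendsto_nhds_unique h0 tendsto_const_nhds |>.symm ▸ rfl
  · intro t ht
    rw [hasDerivWithinAt_iff_isLittleO, Asymptotics.isLittleO_iff]
    intro ε hε
    obtain ⟨δ, hδ, hδF⟩ := Metric.continuousWithinAt_iff.1 (hF (x t) (hxm t ht)) ε hε
    have hpos : 0 < δ / (8 * M) := by positivity
    filter_upwards [self_mem_nhdsWithin, mem_nhdsWithin_of_mem_nhds (ball_mem_nhds t hpos)] with s hs hst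
    rw [mem_ball, Real.dist_eq, lt_div_iff₀ (by positivity)] at hst
    have hFb : ∀ p ∈ closedBall c R, ‖p - x t‖ < δ → ‖F p - F (x t)‖ ≤ ε := by
      intro p hp hpt
      have := hδF hp (by rwa [dist_eq_norm])
      rw [dist_eq_norm] at this
      exact this.le
    rcases le_total t s with hts | hts
    · rw [abs_of_nonneg (by linarith)] at hst
      have := claim t s ht.1 hts hs.2 (F (x t)) ε (δ/4) (by positivity) (by
        intro p hp hpt
        exact hFb p hp (by linarith))
      rw [Real.norm_of_nonneg (by linarith : 0 ≤ s - t), smul_neg, sub_neg_eq_add]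
      exact this
    · rw [abs_of_nonpos (by linarith)] at hst
      have := claim s t hs.1 hts ht.2 (F (x t)) ε (δ/4) (by positivity) (by
        intro p hp hpt
        refine hFb p hp ?_
        have h1 := hlip s t hs.1 hts ht.2
        calc ‖p - x t‖ = ‖(p - x s) - (x t - x s)‖ := by congr 1; abel
          _ ≤ ‖p - x s‖ + ‖x t - x s‖ := norm_sub_le _ _
          _ < δ := by linarith)
      rw [Real.norm_of_nonpos (by linarith : s - t ≤ 0), ← norm_neg]
      refine le_trans (le_of_eq ?_) (this.trans (le_of_eq (by ring)))
      congr 1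
      module
  · intro s t hs hst htT
    have hsI : s ∈ Icc 0 T := ⟨hs, hst.trans htT⟩
    have htI : t ∈ Icc 0 T := ⟨hs.trans hst, htT⟩
    have l1 : Tendsto (fun m => V (w m t)) U (𝓝 (V (x t))) :=
      (hV _ (hxm t htI)).tendsto.comp (tendsto_nhdsWithin_iff.2
        ⟨hwl t htI, Eventually.of_forall (fun m => hY m _)⟩)
    have l2 : Tendsto (fun m => V (z m s)) U (𝓝 (V (x s))) :=
      (hV _ (hxm s hsI)).tendsto.comp (tendsto_nhdsWithin_iff.2
        ⟨hxl s hsI, Eventually.of_forall (fun m => hz m s hsI)⟩)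
    have l3 := l2.add (hη.mono_left hU)
    rw [add_zero] at l3
    refine le_of_tendsto_of_tendsto' l1 l3 ?_
    intro m
    exact hVV m _ _ (Nat.floor_mono (by have := hh m; gcongr)) ((hfl m t htI.1).trans htT)

theorem backward {Ω : Set (EuclideanSpace ℝ (Fin n))} {F : (EuclideanSpace ℝ (Fin n)) → (EuclideanSpace ℝ (Fin n))} {V : (EuclideanSpace ℝ (Fin n)) → ℝ} {x₀ : EuclideanSpace ℝ (Fin n)} (hx₀ : x₀ ∈ Ω)
    {ε : ℝ} (hε : 0 < ε) {x : ℝ → (EuclideanSpace ℝ (Fin n))} (h0 : x 0 = x₀) (hxΩ : ∀ t ∈ Ioc (-ε) (0:ℝ), x t ∈ Ω)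
    (hd : HasDerivWithinAt x (F x₀) (Ioc (-ε) (0:ℝ)) 0)
    (hm : ∀ s : ℝ, -ε < s → s ≤ 0 → V (x s) ≤ V x₀)
    {φ : (EuclideanSpace ℝ (Fin n)) → ℝ} (hφ : ContDiff ℝ 1 φ)
    (hmin : IsLocalMinOn (fun x => V x - φ x) Ω x₀) : 0 ≤ ⟪F x₀, gradient φ x₀⟫ := by
  rw [inner_grad]
  have hφd : HasFDerivAt φ (fderiv ℝ φ x₀) (x 0) := by
    rw [h0]; exact (hφ.differentiable one_ne_zero x₀).hasFDerivAt
  have hc := hφd.comp_hasDerivWithinAt (0:ℝ) hd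
  have hsl := hasDerivWithinAt_iff_tendsto_slope.1 hc
  have hset : Ioc (-ε) (0:ℝ) \ {0} = Ioo (-ε) 0 := by
    ext s; simp only [Set.mem_sdiff, mem_Ioc, mem_Ioo, mem_singleton_iff]
    constructor
    · rintro ⟨⟨a, b⟩, c⟩; exact ⟨a, lt_of_le_of_ne b c⟩
    · rintro ⟨a, b⟩; exact ⟨⟨a, b.le⟩, b.ne⟩
  rw [hset] at hsl
  have : (𝓝[Ioo (-ε) (0:ℝ)] 0).NeBot := right_nhdsWithin_Ioo_neBot (by linarith)
  refine ge_of_tendsto hsl ?_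
  have hcx : Tendsto x (𝓝[Ioo (-ε) (0:ℝ)] 0) (𝓝[Ω] x₀) := by
    refine tendsto_nhdsWithin_iff.2 ⟨?_, ?_⟩
    · have := hd.continuousWithinAt.tendsto
      rw [h0] at this
      exact this.mono_left (nhdsWithin_mono _ Ioo_subset_Ioc_self)
    · filter_upwards [self_mem_nhdsWithin] with s hs using hxΩ s (Ioo_subset_Ioc_self hs)
  filter_upwards [hcx.eventually hmin, self_mem_nhdsWithin] with s hs1 hs2
  have h1 := hm s hs2.1 hs2.2.le
  rw [slope_def_field]
  refine div_nonneg_of_nonpos ?_ (by linarith [hs2.2])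
  simp only [Function.comp, h0]
  linarith

theorem forward {Ω : Set (EuclideanSpace ℝ (Fin n))} (hΩ : IsOpen Ω) {F : (EuclideanSpace ℝ (Fin n)) → (EuclideanSpace ℝ (Fin n))} (hF : ContinuousOn F Ω)
    {V : (EuclideanSpace ℝ (Fin n)) → ℝ} (hV : ContinuousOn V Ω)
    (H : ∀ φ : (EuclideanSpace ℝ (Fin n)) → ℝ, ContDiff ℝ 1 φ → ∀ x₀ ∈ Ω,
        IsLocalMinOn (fun x => V x - φ x) Ω x₀ → 0 ≤ ⟪F x₀, gradient φ x₀⟫)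
    {c : EuclideanSpace ℝ (Fin n)} (hc : c ∈ Ω) : ∃ T > (0:ℝ), ∃ x : ℝ → (EuclideanSpace ℝ (Fin n)), x 0 = c ∧ (∀ t ∈ Icc 0 T, x t ∈ Ω) ∧
      (∀ t ∈ Icc 0 T, HasDerivWithinAt x (- F (x t)) (Icc 0 T) t) ∧
      (∀ s t : ℝ, 0 ≤ s → s ≤ t → t ≤ T → V (x t) ≤ V (x s)) := by
  obtain ⟨R, hR, hRΩ⟩ := Metric.nhds_basis_closedBall.mem_iff.1 (hΩ.mem_nhds hc)
  have hF' := hF.mono hRΩ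
  have hV' := hV.mono hRΩ
  obtain ⟨M0, hM0⟩ := (isCompact_closedBall c R).exists_bound_of_continuousOn hF'
  obtain ⟨C, hC⟩ := (isCompact_closedBall c R).exists_bound_of_continuousOn hV'
  have hM0n : 0 ≤ M0 := (norm_nonneg _).trans (hM0 c (mem_closedBall_self hR.le))
  have hCn : 0 ≤ C := (norm_nonneg _).trans (hC c (mem_closedBall_self hR.le))
  obtain ⟨M, hM, hFM⟩ : ∃ M > 0, ∀ p ∈ closedBall c R, ‖F p‖ ≤ M :=
    ⟨M0 + 1, by positivity, fun p hp => (hM0 p hp).trans (by linarith)⟩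
  set T := R / (2*M) with hTdef
  have hT : 0 < T := by positivity
  have hTM : T * M = R/2 := by rw [hTdef]; field_simp
  set L := (R/2)^2 / (4*C+1) with hLdef
  have hL : 0 < L := by positivity
  let lam : ℕ → ℝ := fun m => L * (1/((m:ℝ)+1))
  have hlpos : ∀ m, 0 < lam m := fun m => by positivity
  have hlL : ∀ m, lam m ≤ L := fun m => by
    have : 1/((m:ℝ)+1) ≤ 1 := by
      rw [div_le_one (by positivity)]; linarith [(Nat.cast_nonneg m : (0:ℝ) ≤ m)]
    exact mul_le_of_le_one_right hL.le this
  have hllim : Tendsto lam atTop (𝓝 0) := by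
    simpa [lam] using tendsto_one_div_add_atTop_nhds_zero_nat.const_mul L
  have hsmall : ∀ m, 4 * C * lam m < (R/2)^2 := by
    intro m
    have h1 : L * (4*C+1) = (R/2)^2 := by rw [hLdef]; field_simp
    have h2 := mul_le_mul_of_nonneg_left (hlL m) (by positivity : 0 ≤ 4*C)
    linarith
  have hsch := fun m => scheme H hRΩ hR (hlpos m) (pow_pos (hlpos m) 2) hV' hFM hC (hsmall m)
  choose X Y hX0 hX hY hXY hVV using hsch
  have hkT : ∀ m (k : ℕ), (k:ℝ) * (lam m)^2 ≤ T → (k:ℝ) * (lam m)^2 * M ≤ R/2 := by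
    intro m k hk
    rw [← hTM]; gcongr
  obtain ⟨x, h1, h2, h3, h4⟩ := limit (T := T) hM hT hF' hV' hFM (by linarith) X Y
    (fun m => (lam m)^2) (fun m => √(4*C*lam m) + T * M^2/2 * lam m)
    (fun m => pow_pos (hlpos m) 2) (by simpa using hllim.pow 2)
    (by
      have a := (hllim.const_mul (4*C)).sqrt
      have b := hllim.const_mul (T * M^2/2)
      simpa using a.add b) hX0 hX hY
    (by
      intro m k hk
      have := hXY m k (hkT m k hk)
      have : 0 ≤ T * M^2/2 * lam m := by have := hlpos m; positivity
      linarith)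
    (by
      intro m j k hjk hk
      have a := hVV m j k hjk (hkT m k hk)
      have b : 0 ≤ √(4*C*lam m) := Real.sqrt_nonneg _
      have hl := hlpos m
      have e : ((k:ℝ) - j) * ((lam m ^2)^2 * M^2/(2*lam m)) =
        (((k:ℝ) - j) * lam m^2) * (M^2/2 * lam m) := by
        field_simp
      have d : ((k:ℝ) - j) * lam m^2 ≤ T := by
        refine le_trans ?_ hk
        have : (0:ℝ) ≤ j := Nat.cast_nonneg j
        gcongr
        linarith
      have f := mul_le_mul_of_nonneg_right d (by positivity : 0 ≤ M^2/2 * lam m)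
      rw [e] at a
      linarith)
  exact ⟨T, hT, x, h1, fun t ht => hRΩ (h2 t ht), h3, h4⟩

end Visc

/-- equivalence between being a viscosity supersolution of
`F(x)·∇V(x) ≥ 0` and backward weak monotonicity of `V` along the flow of `F`. -/
theorem stmt_1 {n : ℕ} (Ω : Set (EuclideanSpace ℝ (Fin n))) (hΩ : IsOpen Ω)
    (F : EuclideanSpace ℝ (Fin n) → EuclideanSpace ℝ (Fin n)) (hF : ContinuousOn F Ω)
    (V : EuclideanSpace ℝ (Fin n) → ℝ) (hV : ContinuousOn V Ω) :
    (∀ φ : EuclideanSpace ℝ (Fin n) → ℝ, ContDiff ℝ 1 φ → ∀ x₀ ∈ Ω,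
        IsLocalMinOn (fun x => V x - φ x) Ω x₀ → 0 ≤ ⟪F x₀, gradient φ x₀⟫)
    ↔
    (∀ x₀ ∈ Ω, ∃ ε > (0:ℝ), ∃ x : ℝ → EuclideanSpace ℝ (Fin n),
        x 0 = x₀ ∧ (∀ t ∈ Ioc (-ε) (0:ℝ), x t ∈ Ω) ∧
        (∀ t ∈ Ioc (-ε) (0:ℝ), HasDerivWithinAt x (F (x t)) (Ioc (-ε) (0:ℝ)) t) ∧
        ∀ s t : ℝ, -ε < s → s ≤ t → t ≤ 0 → V (x s) ≤ V (x t)) := by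
  constructor
  · intro H x₀ hx₀
    obtain ⟨T, hT, x, h1, h2, h3, h4⟩ := Visc.forward hΩ hF hV H hx₀
    have hmem : ∀ t ∈ Ioc (-T) (0:ℝ), -t ∈ Icc 0 T := fun t ht =>
      ⟨by linarith [ht.2], by linarith [ht.1]⟩
    refine ⟨T, hT, fun t => x (-t), by simpa using h1, fun t ht => h2 _ (hmem t ht), ?_, ?_⟩
    · intro t ht
      have hn : HasDerivWithinAt (fun t : ℝ => -t) (-1) (Ioc (-T) (0:ℝ)) t :=
        (hasDerivAt_neg t).hasDerivWithinAt
      have := (h3 (-t) (hmem t ht)).scomp t hn hmem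
      simpa [Function.comp_def] using this
    · intro s t hs hst ht
      exact h4 (-t) (-s) (by linarith) (by linarith) (by linarith)
  · intro H φ hφ x₀ hx₀ hmin
    obtain ⟨ε, hε, x, h0, hxΩ, hd, hm⟩ := H x₀ hx₀
    have h00 : (0:ℝ) ∈ Ioc (-ε) (0:ℝ) := ⟨by linarith, le_rfl⟩
    refine Visc.backward (V := V) hx₀ hε h0 hxΩ (by simpa [h0] using hd 0 h00) ?_ hφ hmin
    intro s hs hs0
    have := hm s 0 hs hs0 le_rfl
    rwa [h0] at this
end

section
/- Let Ω ⊆ ℝⁿ be open and let H : Ω × ℝⁿ → ℝ be continuous with H(x,−p) = H(x,p), such that the gradient H_p(x,p) in the second variable exists and is continuous at every (x,p) with H(x,p) > 0. Let U ∈ C¹(Ω) be a C¹-supersolution of the Aronsson equation. Then for every x₀ ∈ Ω with H(x₀,∇U(x₀)) > 0 there exist ε > 0 and a C¹ curve x : [0,ε) → Ω with x(0) = x₀, ẋ(t) = −H_p(x(t),∇U(x(t))) for all t, such that t ↦ H(x(t),∇U(x(t))) is nondecreasing on [0,ε). -/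
open Set
open scoped RealInnerProductSpace

open Filter Topology Metric in
/-- Discrete (Euler / sup-convolution) approximate trajectory. -/
theorem approx_aux {E : Type*} [NormedAddCommGroup E] [InnerProductSpace ℝ E] [ProperSpace E]
    (F : E → E) (V : E → ℝ) (x₀ : E) (R M C δ : ℝ) (hR : 0 < R) (hM : 0 < M) (hδ : 0 < δ)
    (hV : ContinuousOn V (closedBall x₀ R))
    (hFM : ∀ z ∈ closedBall x₀ R, ‖F z‖ ≤ M) (hVC : ∀ z ∈ closedBall x₀ R, |V z| ≤ C)
    (hvisc : ∀ c : ℝ, 0 < c → ∀ y s : E, s ∈ ball x₀ R →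
      IsLocalMax (fun x => V x - c * ‖x - y‖ ^ 2) s → 0 ≤ ⟪F s, s - y⟫)
    (hsm : 4 * δ * C < (R / 2) ^ 2) :
    ∃ y s : ℕ → E, y 0 = x₀ ∧ (∀ j : ℕ, y (j + 1) = y j + δ ^ 2 • F (s j)) ∧
      ∀ j : ℕ, j * δ ^ 2 * M ≤ R / 2 →
        y j ∈ closedBall x₀ (R / 2) ∧ s j ∈ closedBall x₀ R ∧ ‖s j - y j‖ ^ 2 ≤ 4 * δ * C ∧
        (∀ z ∈ closedBall x₀ R,
          V z - (1 / (2 * δ)) * ‖z - y j‖ ^ 2 ≤ V (s j) - (1 / (2 * δ)) * ‖s j - y j‖ ^ 2) ∧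
        0 ≤ ⟪F (s j), s j - y j⟫ := by
  have key : ∀ y : E, ∃ s : E, y ∈ closedBall x₀ (R / 2) →
      s ∈ closedBall x₀ R ∧ ‖s - y‖ ^ 2 ≤ 4 * δ * C ∧
        (∀ z ∈ closedBall x₀ R,
          V z - (1 / (2 * δ)) * ‖z - y‖ ^ 2 ≤ V s - (1 / (2 * δ)) * ‖s - y‖ ^ 2) ∧
        0 ≤ ⟪F s, s - y⟫ := by
    intro y
    by_cases hy : y ∈ closedBall x₀ (R / 2)
    swap
    · exact ⟨y, fun h => absurd h hy⟩
    have hcont : ContinuousOn (fun z => V z - (1 / (2 * δ)) * ‖z - y‖ ^ 2) (closedBall x₀ R) :=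
      hV.sub (by fun_prop)
    obtain ⟨s, hs, hmax⟩ := (isCompact_closedBall x₀ R).exists_isMaxOn
      ⟨x₀, mem_closedBall_self hR.le⟩ hcont
    have hmax' : ∀ z ∈ closedBall x₀ R,
        V z - (1 / (2 * δ)) * ‖z - y‖ ^ 2 ≤ V s - (1 / (2 * δ)) * ‖s - y‖ ^ 2 := fun z hz => hmax hz
    have hyR : y ∈ closedBall x₀ R := closedBall_subset_closedBall (by linarith) hy
    have h1 := hmax' y hyR
    have h2 := abs_le.1 (hVC y hyR)
    have h3 := abs_le.1 (hVC s hs)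
    have h4 : ‖s - y‖ ^ 2 ≤ 4 * δ * C := by
      have : (1 / (2 * δ)) * ‖s - y‖ ^ 2 ≤ 2 * C := by
        simp at h1
        have : (1 / (2 * δ)) * ‖s - y‖ ^ 2 ≤ V s - V y := by
          simp; linarith
        linarith
      have h5 : ‖s - y‖ ^ 2 = (2 * δ) * ((1 / (2 * δ)) * ‖s - y‖ ^ 2) := by field_simp
      rw [h5]
      nlinarith
    have h6 : ‖s - y‖ < R / 2 := lt_of_pow_lt_pow_left₀ 2 (by linarith) (lt_of_le_of_lt h4 hsm)
    have hsb : s ∈ ball x₀ R := by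
      rw [mem_ball]
      rw [mem_closedBall] at hy
      have := dist_triangle s y x₀
      rw [dist_eq_norm s y] at this
      linarith
    refine ⟨s, fun _ => ⟨hs, h4, hmax', hvisc (1 / (2 * δ)) (by positivity) y s hsb ?_⟩⟩
    filter_upwards [isOpen_ball.mem_nhds hsb] with z hz
    exact hmax' z (ball_subset_closedBall hz)
  choose S hS using key
  let y : ℕ → E := fun j => Nat.rec x₀ (fun _ y => y + δ ^ 2 • F (S y)) j
  have hy0 : y 0 = x₀ := rfl
  have hys : ∀ j, y (j + 1) = y j + δ ^ 2 • F (S (y j)) := fun j => rfl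
  have hball : ∀ j : ℕ, j * δ ^ 2 * M ≤ R / 2 → ‖y j - x₀‖ ≤ j * δ ^ 2 * M := by
    intro j
    induction j with
    | zero => intro _; simp [hy0]
    | succ j ih =>
      intro hj
      push_cast at hj ⊢
      have hp : 0 < δ ^ 2 * M := by positivity
      have hj' : j * δ ^ 2 * M ≤ R / 2 := by nlinarith
      have h1 := ih hj'
      have h2 := hS (y j) (by rw [mem_closedBall, dist_eq_norm]; linarith)
      rw [hys]
      have h3 : ‖y j + δ ^ 2 • F (S (y j)) - x₀‖ ≤ ‖y j - x₀‖ + ‖δ ^ 2 • F (S (y j))‖ := by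
        rw [add_sub_right_comm]; exact norm_add_le _ _
      have h4 : ‖δ ^ 2 • F (S (y j))‖ ≤ δ ^ 2 * M := by
        rw [norm_smul, Real.norm_of_nonneg (by positivity)]
        exact mul_le_mul_of_nonneg_left (hFM _ h2.1) (by positivity)
      nlinarith
  refine ⟨y, fun j => S (y j), hy0, hys, fun j hj => ?_⟩
  have h1 : y j ∈ closedBall x₀ (R / 2) := by
    rw [mem_closedBall, dist_eq_norm]; exact (hball j hj).trans hj
  exact ⟨h1, hS _ h1⟩

open Filter Topology Metric in
/-- Consequences for pairs of indices. -/
theorem approx_pair {E : Type*} [NormedAddCommGroup E] [InnerProductSpace ℝ E] [ProperSpace E]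
    (F : E → E) (V : E → ℝ) (x₀ : E) (R M C δ : ℝ) (hR : 0 < R) (hM : 0 < M) (hδ : 0 < δ)
    (hV : ContinuousOn V (closedBall x₀ R))
    (hFM : ∀ z ∈ closedBall x₀ R, ‖F z‖ ≤ M) (hVC : ∀ z ∈ closedBall x₀ R, |V z| ≤ C)
    (hvisc : ∀ c : ℝ, 0 < c → ∀ y s : E, s ∈ ball x₀ R →
      IsLocalMax (fun x => V x - c * ‖x - y‖ ^ 2) s → 0 ≤ ⟪F s, s - y⟫)
    (hsm : 4 * δ * C < (R / 2) ^ 2) :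
    ∃ y s : ℕ → E, y 0 = x₀ ∧
      (∀ j : ℕ, j * δ ^ 2 * M ≤ R / 2 →
        y j ∈ closedBall x₀ (R / 2) ∧ s j ∈ closedBall x₀ R ∧ ‖s j - y j‖ ^ 2 ≤ 4 * δ * C) ∧
      (∀ i j : ℕ, i ≤ j → j * δ ^ 2 * M ≤ R / 2 →
        V (y i) - ((j : ℝ) - i) * (δ ^ 3 * M ^ 2 / 2) ≤ V (s j)) ∧
      (∀ v e, ∀ i j : ℕ, i ≤ j → j * δ ^ 2 * M ≤ R / 2 →
        (∀ l, i ≤ l → l < j → ‖F (s l) - v‖ ≤ e) →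
        ‖y j - y i - (((j : ℝ) - i) * δ ^ 2) • v‖ ≤ ((j : ℝ) - i) * δ ^ 2 * e) := by
  obtain ⟨y, s, hy0, hys, h⟩ := approx_aux F V x₀ R M C δ hR hM hδ hV hFM hVC hvisc hsm
  have hprev : ∀ j : ℕ, ((j + 1 : ℕ) : ℝ) * δ ^ 2 * M ≤ R / 2 → (j : ℝ) * δ ^ 2 * M ≤ R / 2 := by
    intro j hj
    push_cast at hj
    have hp : 0 < δ ^ 2 * M := by positivity
    nlinarith
  refine ⟨y, s, hy0, fun j hj => ⟨(h j hj).1, (h j hj).2.1, (h j hj).2.2.1⟩, ?_, ?_⟩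
  · have hW : ∀ i j : ℕ, i ≤ j → j * δ ^ 2 * M ≤ R / 2 →
        V (y i) - ((j : ℝ) - i) * (δ ^ 3 * M ^ 2 / 2) ≤
          V (s j) - (1 / (2 * δ)) * ‖s j - y j‖ ^ 2 := by
      intro i j hij
      induction j, hij using Nat.le_induction with
      | base =>
        intro hi
        have := (h i hi).2.2.2.1 (y i) (closedBall_subset_closedBall (by linarith) (h i hi).1)
        simpa using this
      | succ j hij ih =>
        intro hj
        have hj' := hprev j hj
        have h1 := ih hj'
        obtain ⟨-, hsj, -, -, hin⟩ := h j hj'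
        have h2 := (h (j + 1) hj).2.2.2.1 (s j) hsj
        have h3 : ‖s j - y (j + 1)‖ ^ 2 ≤ ‖s j - y j‖ ^ 2 + δ ^ 4 * M ^ 2 := by
          have e1 : s j - y (j + 1) = (s j - y j) - δ ^ 2 • F (s j) := by
            rw [hys]; abel
          rw [e1, norm_sub_sq_real, inner_smul_right, real_inner_comm, norm_smul,
            Real.norm_of_nonneg (by positivity), mul_pow]
          have e2 : ‖F (s j)‖ ^ 2 ≤ M ^ 2 := pow_le_pow_left₀ (norm_nonneg _) (hFM _ hsj) 2
          have e3 : 0 ≤ δ ^ 2 * ⟪F (s j), s j - y j⟫ := by positivity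
          have e4 : (δ ^ 2) ^ 2 * ‖F (s j)‖ ^ 2 ≤ (δ ^ 2) ^ 2 * M ^ 2 :=
            mul_le_mul_of_nonneg_left e2 (by positivity)
          nlinarith
        have h4 : (1 / (2 * δ)) * ‖s j - y (j + 1)‖ ^ 2 ≤
            (1 / (2 * δ)) * ‖s j - y j‖ ^ 2 + δ ^ 3 * M ^ 2 / 2 := by
          have := mul_le_mul_of_nonneg_left h3 (show 0 ≤ 1 / (2 * δ) by positivity)
          refine this.trans (le_of_eq ?_)
          field_simp
        push_cast
        linarith
    intro i j hij hj
    have := hW i j hij hj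
    have h2 : 0 ≤ (1 / (2 * δ)) * ‖s j - y j‖ ^ 2 := by positivity
    linarith
  · intro v e i j hij
    induction j, hij using Nat.le_induction with
    | base => intro _ _; simp
    | succ j hij ih =>
      intro hj hl
      have h1 := ih (hprev j hj) (fun l h1 h2 => hl l h1 (by omega))
      have h2 := hl j hij (by omega)
      have e1 : y (j + 1) - y i - ((((j + 1 : ℕ) : ℝ) - i) * δ ^ 2) • v =
          (y j - y i - (((j : ℝ) - i) * δ ^ 2) • v) + δ ^ 2 • (F (s j) - v) := by
        rw [hys]; push_cast; module
      rw [e1]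
      refine (norm_add_le _ _).trans ?_
      rw [norm_smul, Real.norm_of_nonneg (by positivity : (0:ℝ) ≤ δ ^ 2)]
      have := mul_le_mul_of_nonneg_left h2 (by positivity : (0:ℝ) ≤ δ ^ 2)
      push_cast
      linarith

open Filter Topology Metric in
theorem core {E : Type*} [NormedAddCommGroup E] [InnerProductSpace ℝ E] [ProperSpace E]
    (F : E → E) (V : E → ℝ) (x₀ : E) (R : ℝ) (hR : 0 < R)
    (hF : ContinuousOn F (closedBall x₀ R))
    (hV : ContinuousOn V (closedBall x₀ R))
    (hvisc : ∀ c : ℝ, 0 < c → ∀ y s : E, s ∈ ball x₀ R →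
      IsLocalMax (fun x => V x - c * ‖x - y‖ ^ 2) s → 0 ≤ ⟪F s, s - y⟫) :
    ∃ ε > (0:ℝ), ∃ x : ℝ → E, x 0 = x₀ ∧ (∀ t ∈ Ico (0:ℝ) ε, x t ∈ closedBall x₀ R) ∧
      (∀ t ∈ Ico (0:ℝ) ε, HasDerivWithinAt x (F (x t)) (Ico (0:ℝ) ε) t) ∧
      MonotoneOn (fun t => V (x t)) (Ico (0:ℝ) ε) := by
  obtain ⟨M₀, hM₀⟩ := (isCompact_closedBall x₀ R).exists_bound_of_continuousOn hF
  obtain ⟨C, hC⟩ := (isCompact_closedBall x₀ R).exists_bound_of_continuousOn hV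
  set M := max M₀ 1 with hMdef
  have hM : 0 < M := lt_of_lt_of_le one_pos (le_max_right _ _)
  have hFM : ∀ z ∈ closedBall x₀ R, ‖F z‖ ≤ M := fun z hz => (hM₀ z hz).trans (le_max_left _ _)
  have hVC : ∀ z ∈ closedBall x₀ R, |V z| ≤ C := hC
  have hpair : ∀ δ : ℝ, ∃ y s : ℕ → E, 0 < δ → 4 * δ * C < (R / 2) ^ 2 → y 0 = x₀ ∧
      (∀ j : ℕ, j * δ ^ 2 * M ≤ R / 2 →
        y j ∈ closedBall x₀ (R / 2) ∧ s j ∈ closedBall x₀ R ∧ ‖s j - y j‖ ^ 2 ≤ 4 * δ * C) ∧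
      (∀ i j : ℕ, i ≤ j → j * δ ^ 2 * M ≤ R / 2 →
        V (y i) - ((j : ℝ) - i) * (δ ^ 3 * M ^ 2 / 2) ≤ V (s j)) ∧
      (∀ v e, ∀ i j : ℕ, i ≤ j → j * δ ^ 2 * M ≤ R / 2 →
        (∀ l, i ≤ l → l < j → ‖F (s l) - v‖ ≤ e) →
        ‖y j - y i - (((j : ℝ) - i) * δ ^ 2) • v‖ ≤ ((j : ℝ) - i) * δ ^ 2 * e) := by
    intro δ
    by_cases hδ : 0 < δ
    · by_cases hsm : 4 * δ * C < (R / 2) ^ 2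
      · obtain ⟨y, s, h⟩ := approx_pair F V x₀ R M C δ hR hM hδ hV hFM hVC hvisc hsm
        exact ⟨y, s, fun _ _ => h⟩
      · exact ⟨fun _ => 0, fun _ => 0, fun _ h => absurd h hsm⟩
    · exact ⟨fun _ => 0, fun _ => 0, fun h => absurd h hδ⟩
  choose y s hys using hpair
  set T := R / (2 * M) with hT
  have hTpos : 0 < T := by positivity
  have hTM : T * M = R / 2 := by rw [hT]; field_simp
  let 𝒰 : Ultrafilter ℝ := Ultrafilter.of (𝓝[>] (0:ℝ))
  have hle : (𝒰 : Filter ℝ) ≤ 𝓝[>] (0:ℝ) := Ultrafilter.of_le _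
  have hid : Tendsto (fun δ : ℝ => δ) (𝒰 : Filter ℝ) (𝓝 0) :=
    (tendsto_id.mono_left (hle.trans nhdsWithin_le_nhds))
  have hpos : ∀ᶠ δ in (𝒰 : Filter ℝ), 0 < δ := hle self_mem_nhdsWithin
  have hsmall : ∀ r : ℝ, 0 < r → ∀ᶠ δ in (𝒰 : Filter ℝ), 4 * δ * C < r := by
    intro r hr
    have : Tendsto (fun δ : ℝ => 4 * δ * C) (𝒰 : Filter ℝ) (𝓝 (4 * 0 * C)) :=
      (hid.const_mul 4).mul_const C
    simp only [mul_zero, zero_mul] at this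
    exact this.eventually_lt_const hr
  have hsq : ∀ r : ℝ, 0 < r → ∀ᶠ δ in (𝒰 : Filter ℝ), δ ^ 2 * M < r := by
    intro r hr
    have : Tendsto (fun δ : ℝ => δ ^ 2 * M) (𝒰 : Filter ℝ) (𝓝 (0 ^ 2 * M)) :=
      (hid.pow 2).mul_const M
    simp only [ne_eq, OfNat.ofNat_ne_zero, not_false_eq_true, zero_pow, zero_mul] at this
    exact this.eventually_lt_const hr
  have hgood := hpos.and (hsmall ((R / 2) ^ 2) (by positivity))
  -- index
  let J : ℝ → ℝ → ℕ := fun δ t => ⌊t / δ ^ 2⌋₊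
  have hJle : ∀ δ t : ℝ, 0 < δ → 0 ≤ t → (J δ t : ℝ) * δ ^ 2 ≤ t := by
    intro δ t hδ ht
    have := Nat.floor_le (show 0 ≤ t / δ ^ 2 by positivity)
    exact (le_div_iff₀ (by positivity)).1 this
  have hJlt : ∀ δ t : ℝ, 0 < δ → t < (J δ t : ℝ) * δ ^ 2 + δ ^ 2 := by
    intro δ t hδ
    have := Nat.lt_floor_add_one (t / δ ^ 2)
    rw [div_lt_iff₀ (by positivity)] at this
    simp only [J]
    linarith
  have hJok : ∀ δ t : ℝ, 0 < δ → 0 ≤ t → t ≤ T → (J δ t : ℝ) * δ ^ 2 * M ≤ R / 2 := by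
    intro δ t hδ ht htT
    rw [← hTM]
    exact mul_le_mul_of_nonneg_right ((hJle δ t hδ ht).trans htT) hM.le
  have hJmono : ∀ δ a b : ℝ, 0 < δ → a ≤ b → J δ a ≤ J δ b := by
    intro δ a b hδ hab
    exact Nat.floor_mono (by gcongr)
  have hJtend : ∀ t : ℝ, 0 ≤ t →
      Tendsto (fun δ => (J δ t : ℝ) * δ ^ 2) (𝒰 : Filter ℝ) (𝓝 t) := by
    intro t ht
    have h1 : Tendsto (fun δ : ℝ => t - δ ^ 2) (𝒰 : Filter ℝ) (𝓝 t) := by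
      simpa using (tendsto_const_nhds (x := t)).sub (hid.pow 2)
    refine tendsto_of_tendsto_of_tendsto_of_le_of_le' h1 tendsto_const_nhds ?_ ?_
    · filter_upwards [hpos] with δ hδ
      have := hJlt δ t hδ
      linarith
    · filter_upwards [hpos] with δ hδ
      exact hJle δ t hδ ht
  -- the limit
  have hlim : ∀ t : ℝ, ∃ x : E, t ∈ Icc 0 T → x ∈ closedBall x₀ (R / 2) ∧
      Tendsto (fun δ => y δ (J δ t)) (𝒰 : Filter ℝ) (𝓝 x) := by
    intro t
    by_cases ht : t ∈ Icc 0 T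
    swap
    · exact ⟨0, fun h => absurd h ht⟩
    have hmem : ∀ᶠ δ in (𝒰 : Filter ℝ), y δ (J δ t) ∈ closedBall x₀ (R / 2) := by
      filter_upwards [hgood] with δ hδ
      exact ((hys δ hδ.1 hδ.2).2.1 _ (hJok δ t hδ.1 ht.1 ht.2)).1
    obtain ⟨x, hx, hx2⟩ := (isCompact_closedBall x₀ (R / 2)).ultrafilter_le_nhds
      (𝒰.map (fun δ => y δ (J δ t))) (by rw [le_principal_iff]; exact hmem)
    exact ⟨x, fun _ => ⟨hx, hx2⟩⟩
  choose x hx using hlim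
  have hsub : closedBall x₀ (R / 2) ⊆ closedBall x₀ R :=
    closedBall_subset_closedBall (by linarith)
  have hslim : ∀ t ∈ Icc 0 T, Tendsto (fun δ => s δ (J δ t)) (𝒰 : Filter ℝ) (𝓝 (x t)) := by
    intro t ht
    have h0 : Tendsto (fun δ => s δ (J δ t) - y δ (J δ t)) (𝒰 : Filter ℝ) (𝓝 0) := by
      rw [Metric.tendsto_nhds]
      intro r hr
      filter_upwards [hgood, hsmall (r ^ 2) (by positivity)] with δ hδ hδr
      have := ((hys δ hδ.1 hδ.2).2.1 _ (hJok δ t hδ.1 ht.1 ht.2)).2.2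
      rw [dist_zero_right]
      exact lt_of_pow_lt_pow_left₀ 2 hr.le (lt_of_le_of_lt this hδr)
    simpa using h0.add (hx t ht).2
  have hV_at : ∀ t ∈ Icc 0 T, ∀ u : ℝ → E, (∀ᶠ δ in (𝒰 : Filter ℝ), u δ ∈ closedBall x₀ R) →
      Tendsto u (𝒰 : Filter ℝ) (𝓝 (x t)) →
      Tendsto (fun δ => V (u δ)) (𝒰 : Filter ℝ) (𝓝 (V (x t))) := by
    intro t ht u hu hu2
    exact (hV (x t) (hsub (hx t ht).1)).tendsto.comp
      (tendsto_nhdsWithin_iff.2 ⟨hu2, hu⟩)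
  refine ⟨T, hTpos, x, ?_, fun t ht => hsub (hx t ⟨ht.1, ht.2.le⟩).1, ?_, ?_⟩
  · have h1 := (hx 0 ⟨le_rfl, hTpos.le⟩).2
    refine tendsto_nhds_unique h1 (tendsto_const_nhds.congr' ?_)
    filter_upwards [hgood] with δ hδ
    simp [J, (hys δ hδ.1 hδ.2).1]
  · intro t ht
    have ht' : t ∈ Icc 0 T := ⟨ht.1, ht.2.le⟩
    rw [hasDerivWithinAt_iff_isLittleO, Asymptotics.isLittleO_iff]
    intro e he
    obtain ⟨ρ, hρ, hFρ⟩ := Metric.continuousWithinAt_iff.1 (hF (x t) (hsub (hx t ht').1)) e he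
    have hη : 0 < ρ / (4 * M) := by positivity
    have hηM : ρ / (4 * M) * M = ρ / 4 := by field_simp
    set η := ρ / (4 * M) with hηdef
    have hab : ∀ a ∈ Icc 0 T, ∀ b ∈ Icc 0 T, a ≤ b → |a - t| < η → |b - t| < η →
        ‖x b - x a - (b - a) • F (x t)‖ ≤ (b - a) * e := by
      intro a ha b hb hab hat hbt
      have hat' := abs_lt.1 hat
      have hbt' := abs_lt.1 hbt
      have hJb := hJtend b hb.1
      have hJa := hJtend a ha.1
      have hd : Tendsto (fun δ => ((J δ b : ℝ) - J δ a) * δ ^ 2) (𝒰 : Filter ℝ) (𝓝 (b - a)) := by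
        simpa only [sub_mul] using hJb.sub hJa
      have hL := (((hx b hb).2.sub (hx a ha).2).sub (hd.smul_const (F (x t)))).norm
      refine le_of_tendsto_of_tendsto hL (hd.mul_const e) ?_
      have hnear := (Metric.tendsto_nhds.1 (hx t ht').2) (ρ / 4) (by positivity)
      filter_upwards [hgood, hsmall ((ρ / 4) ^ 2) (by positivity), hsq (ρ / 4) (by positivity),
        hnear] with δ hδ hδ1 hδ2 hδ3
      obtain ⟨hδp, hδs⟩ := hδ
      obtain ⟨-, hb1, -, hb3⟩ := hys δ hδp hδs
      refine hb3 _ _ _ _ (hJmono δ a b hδp hab) (hJok δ b hδp hb.1 hb.2) ?_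
      intro l hl1 hl2
      have hl1' : (J δ a : ℝ) ≤ l := by exact_mod_cast hl1
      have hl2' : (l : ℝ) ≤ J δ b := by exact_mod_cast hl2.le
      have hδ2p : 0 < δ ^ 2 := by positivity
      have m1 := mul_le_mul_of_nonneg_right hl1' hδ2p.le
      have m2 := mul_le_mul_of_nonneg_right hl2' hδ2p.le
      have hlok : (l : ℝ) * δ ^ 2 * M ≤ R / 2 :=
        (mul_le_mul_of_nonneg_right m2 hM.le).trans (hJok δ b hδp hb.1 hb.2)
      obtain ⟨-, hsl, hsyl⟩ := hb1 l hlok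
      have hsyl' : ‖s δ l - y δ l‖ < ρ / 4 :=
        lt_of_pow_lt_pow_left₀ 2 (by positivity) (lt_of_le_of_lt hsyl hδ1)
      -- Lipschitz bound
      have hLip : ∀ i j : ℕ, i ≤ j → (j : ℝ) * δ ^ 2 * M ≤ R / 2 →
          ‖y δ j - y δ i‖ ≤ ((j : ℝ) - i) * δ ^ 2 * M := by
        intro i j hij hj
        have := hb3 0 M i j hij hj ?_
        · simpa using this
        · intro k _ hk
          rw [sub_zero]
          refine hFM _ (hb1 k ?_).2.1
          have hk' : (k : ℝ) ≤ j := by exact_mod_cast hk.le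
          refine le_trans ?_ hj
          gcongr
      have q1 := hJlt δ t hδp
      have q2 := hJle δ t hδp ht.1
      have q3 := hJlt δ a hδp
      have q4 := hJle δ b hδp hb.1
      have hyl : ‖y δ l - y δ (J δ t)‖ ≤ (η + δ ^ 2) * M := by
        rcases le_total l (J δ t) with hc | hc
        · rw [norm_sub_rev]
          refine (hLip _ _ hc (hJok δ t hδp ht'.1 ht'.2)).trans ?_
          apply mul_le_mul_of_nonneg_right _ hM.le
          linarith
        · refine (hLip _ _ hc hlok).trans ?_
          apply mul_le_mul_of_nonneg_right _ hM.le
          linarith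
      have hdist : dist (s δ l) (x t) < ρ := by
        have t1 := dist_triangle4 (s δ l) (y δ l) (y δ (J δ t)) (x t)
        rw [dist_eq_norm (s δ l) (y δ l), dist_eq_norm (y δ l)] at t1
        have : (η + δ ^ 2) * M = ρ / 4 + δ ^ 2 * M := by rw [add_mul, hηM]
        linarith
      have := hFρ hsl hdist
      rw [dist_eq_norm] at this
      exact this.le
    have hnb : ∀ᶠ t' in 𝓝[Ico 0 T] t, |t' - t| < η ∧ t' ∈ Ico 0 T := by
      refine Filter.Eventually.and ?_ self_mem_nhdsWithin
      apply nhdsWithin_le_nhds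
      filter_upwards [Metric.ball_mem_nhds t hη] with t' h'
      rwa [mem_ball, Real.dist_eq] at h'
    filter_upwards [hnb] with t' h'
    have h't : t' ∈ Icc 0 T := ⟨h'.2.1, h'.2.2.le⟩
    rcases le_total t t' with hc | hc
    · have := hab t ht' t' h't hc (by simpa using hη) h'.1
      rw [Real.norm_of_nonneg (by linarith)]
      linarith
    · have := hab t' h't t ht' hc h'.1 (by simpa using hη)
      rw [Real.norm_of_nonpos (by linarith), ← norm_neg]
      have e1 : -(x t' - x t - (t' - t) • F (x t)) = x t - x t' - (t - t') • F (x t) := by module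
      rw [e1]
      linarith
  · intro a ha b hb hab
    have ha' : a ∈ Icc 0 T := ⟨ha.1, ha.2.le⟩
    have hb' : b ∈ Icc 0 T := ⟨hb.1, hb.2.le⟩
    have h1 := hV_at a ha' _ (by
      filter_upwards [hgood] with δ hδ
      exact hsub ((hys δ hδ.1 hδ.2).2.1 _ (hJok δ a hδ.1 ha'.1 ha'.2)).1) (hx a ha').2
    have h2 := hV_at b hb' _ (by
      filter_upwards [hgood] with δ hδ
      exact ((hys δ hδ.1 hδ.2).2.1 _ (hJok δ b hδ.1 hb'.1 hb'.2)).2.1) (hslim b hb')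
    have hd : Tendsto (fun δ => ((J δ b : ℝ) * δ ^ 2 - J δ a * δ ^ 2) * (δ * (M ^ 2 / 2)))
        (𝒰 : Filter ℝ) (𝓝 ((b - a) * (0 * (M ^ 2 / 2)))) :=
      ((hJtend b hb.1).sub (hJtend a ha.1)).mul (hid.mul_const _)
    have h3 := h1.sub hd
    simp only [zero_mul, mul_zero, sub_zero] at h3
    refine le_of_tendsto_of_tendsto h3 h2 ?_
    filter_upwards [hgood] with δ hδ
    have := (hys δ hδ.1 hδ.2).2.2.1 _ _ (hJmono δ a b hδ.1 hab) (hJok δ b hδ.1 hb'.1 hb'.2)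
    refine le_trans (le_of_eq ?_) this
    ring

/-- along a suitable trajectory of the closed-loop Hamiltonian dynamics
`ẋ = -H_p(x, ∇U(x))` starting at a non-singular point, the Hamiltonian
`t ↦ H(x_t, ∇U(x_t))` is nondecreasing, whenever `U` is a `C¹`-supersolution of the
Aronsson equation. -/
theorem stmt_3 {n : ℕ} (Ω : Set (EuclideanSpace ℝ (Fin n))) (hΩ : IsOpen Ω)
    (H : EuclideanSpace ℝ (Fin n) → EuclideanSpace ℝ (Fin n) → ℝ)
    (Hp : EuclideanSpace ℝ (Fin n) → EuclideanSpace ℝ (Fin n) → EuclideanSpace ℝ (Fin n))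
    (hHc : ContinuousOn (fun q : EuclideanSpace ℝ (Fin n) × EuclideanSpace ℝ (Fin n) =>
      H q.1 q.2) (Ω ×ˢ univ))
    (hHsymm : ∀ x ∈ Ω, ∀ p, H x (-p) = H x p)
    (hHp : ∀ x ∈ Ω, ∀ p, 0 < H x p → HasGradientAt (H x) (Hp x p) p)
    (hHpc : ContinuousOn (fun q : EuclideanSpace ℝ (Fin n) × EuclideanSpace ℝ (Fin n) =>
      Hp q.1 q.2) {q | q.1 ∈ Ω ∧ 0 < H q.1 q.2})
    (U : EuclideanSpace ℝ (Fin n) → ℝ) (hU : ContDiffOn ℝ 1 U Ω)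
    -- `U` is a `C¹`-supersolution of the Aronsson equation:
    -- `V(x) = H(x,∇U(x))` is a viscosity subsolution of `-F·∇V = 0` ...
    (hsub : ∀ φ : EuclideanSpace ℝ (Fin n) → ℝ, ContDiff ℝ 1 φ → ∀ x₀ ∈ Ω,
      0 < H x₀ (gradient U x₀) →
      IsLocalMaxOn (fun x => H x (gradient U x) - φ x) Ω x₀ →
      -⟪-(Hp x₀ (gradient U x₀)), gradient φ x₀⟫ ≤ 0)
    -- ... and a viscosity supersolution of `F·∇V = 0`, with `F = -H_p(·,∇U(·))`
    (hsup : ∀ φ : EuclideanSpace ℝ (Fin n) → ℝ, ContDiff ℝ 1 φ → ∀ x₀ ∈ Ω,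
      0 < H x₀ (gradient U x₀) →
      IsLocalMinOn (fun x => H x (gradient U x) - φ x) Ω x₀ →
      0 ≤ ⟪-(Hp x₀ (gradient U x₀)), gradient φ x₀⟫) :
    ∀ x₀ ∈ Ω, 0 < H x₀ (gradient U x₀) →
      ∃ ε > (0:ℝ), ∃ x : ℝ → EuclideanSpace ℝ (Fin n),
        x 0 = x₀ ∧ (∀ t ∈ Ico (0:ℝ) ε, x t ∈ Ω) ∧
        (∀ t ∈ Ico (0:ℝ) ε,
          HasDerivWithinAt x (-(Hp (x t) (gradient U (x t)))) (Ico (0:ℝ) ε) t) ∧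
        MonotoneOn (fun t => H (x t) (gradient U (x t))) (Ico (0:ℝ) ε) := by
  intro x₀ hx₀ hpos
  have hgrad : ContinuousOn (gradient U) Ω := by
    have h1 : ContinuousOn (fderiv ℝ U) Ω := hU.continuousOn_fderiv_of_isOpen hΩ le_rfl
    exact (InnerProductSpace.toDual ℝ (EuclideanSpace ℝ (Fin n))).symm.continuous.comp_continuousOn h1
  have hpairc : ContinuousOn (fun x => (x, gradient U x)) Ω := continuousOn_id.prodMk hgrad
  have hVc : ContinuousOn (fun x => H x (gradient U x)) Ω :=
    hHc.comp hpairc (fun x hx => ⟨hx, mem_univ _⟩)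
  have hnhds : {x | x ∈ Ω ∧ 0 < H x (gradient U x)} ∈ nhds x₀ := by
    have h1 := (hVc.continuousAt (hΩ.mem_nhds hx₀)).eventually (lt_mem_nhds hpos)
    filter_upwards [h1, hΩ.mem_nhds hx₀] with x h2 h3
    exact ⟨h3, h2⟩
  obtain ⟨R, hR, hRsub⟩ := Metric.nhds_basis_closedBall.mem_iff.1 hnhds
  have hFc : ContinuousOn (fun x => -(Hp x (gradient U x))) (Metric.closedBall x₀ R) :=
    (hHpc.comp (hpairc.mono fun x hx => (hRsub hx).1) (fun x hx => hRsub hx)).neg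
  obtain ⟨ε, hε, x, h0, hmem, hder, hmono⟩ := core (fun x => -(Hp x (gradient U x)))
    (fun x => H x (gradient U x)) x₀ R hR hFc (hVc.mono fun x hx => (hRsub hx).1) (by
      intro c hc y s hs hmax
      obtain ⟨hsΩ, hspos⟩ := hRsub (Metric.ball_subset_closedBall hs)
      have hφ : ContDiff ℝ 1 (fun x : EuclideanSpace ℝ (Fin n) => c * ‖x - y‖ ^ 2) :=
        contDiff_const.mul ((contDiff_id.sub contDiff_const).norm_sq ℝ)
      have h1 := hsub _ hφ s hsΩ hspos (hmax.on Ω)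
      have hg : gradient (fun x : EuclideanSpace ℝ (Fin n) => c * ‖x - y‖ ^ 2) s =
          (2 * c) • (s - y) := by
        apply HasGradientAt.gradient
        rw [hasGradientAt_iff_hasFDerivAt]
        have h2 := (((hasFDerivAt_id s).sub_const y).norm_sq).const_mul c
        refine h2.congr_fderiv ?_
        ext z
        simp [inner_smul_left]
        ring
      rw [hg, inner_smul_right] at h1
      have h3 : 0 ≤ 2 * c * ⟪-(Hp s (gradient U s)), s - y⟫ := by linarith
      exact nonneg_of_mul_nonneg_right h3 (by positivity))
  exact ⟨ε, hε, x, h0, fun t ht => (hRsub (hmem t ht)).1, hder, hmono⟩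
end

section
/- Let Ω ⊆ ℝⁿ be open and let H : Ω × ℝⁿ → ℝ be continuous with H(x,−p) = H(x,p), with H_p existing and continuous at every (x,p) where H(x,p) > 0, and with H(x,·) positively homogeneous of degree r > 0 for every x ∈ Ω. For U ∈ C¹(Ω) the following are equivalent: (ED) for every x₀ ∈ Ω with H(x₀,∇U(x₀)) > 0 there exists a C¹ solution x_t of ẋ_t = −H_p(x_t,∇U(x_t)), x_0 = x₀ (defined on [0,ε) or (−ε,0]), such that whenever φ is a C² function on [0,ε) or on (−ε,0] for which t ↦ U(x_t) − φ(t) has a minimum at t = 0 and φ'(0) = (d/dt)U(x_t)|_{t=0}, one has −φ''(0) ≥ 0; and: U is a C¹-supersolution of the Aronsson equation. -/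
open Set
open scoped RealInnerProductSpace
open Filter Topology

/-- Discrete penalised-aiming Euler scheme. -/
lemma discrete_scheme {E : Type*} [NormedAddCommGroup E] [InnerProductSpace ℝ E]
    [FiniteDimensional ℝ E] (x₀ : E) (R : ℝ) (hR : 0 < R) (W : E → ℝ) (G : E → E)
    (hW : ContinuousOn W (Metric.closedBall x₀ R))
    (hv : ∀ y ∈ Metric.ball x₀ R, ∀ z : E, ∀ c : ℝ, 0 < c →
      (∀ w ∈ Metric.closedBall x₀ R, W w - c * ‖w - z‖ ^ 2 ≤ W y - c * ‖y - z‖ ^ 2) →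
      0 ≤ ⟪G y, y - z⟫)
    (B M T : ℝ) (hB : ∀ y ∈ Metric.closedBall x₀ R, |W y| ≤ B)
    (hM : ∀ y ∈ Metric.closedBall x₀ R, ‖G y‖ ≤ M) (hT : M * T ≤ R / 2) (hM0 : 0 ≤ M)
    (c h : ℝ) (hc : 0 < c) (hh : 0 < h) (hcB : 2 * B / c < (R / 2) ^ 2) :
    ∃ p y : ℕ → E, p 0 = x₀ ∧ (∀ k, p (k + 1) = p k + h • G (y k)) ∧
      ∀ k : ℕ, k * h ≤ T → ‖p k - x₀‖ ≤ M * (k * h) ∧ y k ∈ Metric.closedBall x₀ R ∧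
        ‖y k - p k‖ ^ 2 ≤ 2 * B / c ∧ W x₀ - c * h ^ 2 * M ^ 2 * k ≤ W (y k) := by
  have hsel : ∀ z : E, ∃ y ∈ Metric.closedBall x₀ R, ∀ w ∈ Metric.closedBall x₀ R,
      W w - c * ‖w - z‖ ^ 2 ≤ W y - c * ‖y - z‖ ^ 2 := by
    intro z
    obtain ⟨y, hy, hmax⟩ := (isCompact_closedBall x₀ R).exists_isMaxOn
      ⟨x₀, Metric.mem_closedBall_self hR.le⟩
      (f := fun w => W w - c * ‖w - z‖ ^ 2) (hW.sub (by fun_prop))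
    exact ⟨y, hy, fun w hw => hmax hw⟩
  choose Y hY1 hY2 using hsel
  let p : ℕ → E := fun k => Nat.rec x₀ (fun _ q => q + h • G (Y q)) k
  have hp1 : ∀ k, p (k + 1) = p k + h • G (Y (p k)) := fun k => rfl
  have hx₀ : x₀ ∈ Metric.closedBall x₀ R := Metric.mem_closedBall_self hR.le
  have key : ∀ z ∈ Metric.closedBall x₀ R, ‖Y z - z‖ ^ 2 ≤ 2 * B / c := by
    intro z hz
    have h1 := hY2 z z hz
    have h2 := abs_le.1 (hB z hz)
    have h3 := abs_le.1 (hB _ (hY1 z))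
    rw [le_div_iff₀ hc]
    simp at h1
    nlinarith
  have main : ∀ k : ℕ, k * h ≤ T → ‖p k - x₀‖ ≤ M * (k * h) ∧
      W x₀ - c * h ^ 2 * M ^ 2 * k ≤ W (Y (p k)) - c * ‖Y (p k) - p k‖ ^ 2 := by
    intro k
    induction k with
    | zero =>
      intro _
      refine ⟨by simp [p], ?_⟩
      have := hY2 x₀ x₀ hx₀
      simpa [p] using this
    | succ k ih =>
      intro hk
      push_cast at hk
      obtain ⟨h1, h2⟩ := ih (by nlinarith)
      have hpk : ‖p k - x₀‖ ≤ R / 2 := by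
        have : M * (k * h) ≤ M * T := mul_le_mul_of_nonneg_left (by nlinarith) hM0
        linarith
      have hpk' : p k ∈ Metric.closedBall x₀ R := by
        rw [Metric.mem_closedBall, dist_eq_norm]; linarith
      have hyk := key _ hpk'
      have hyk2 : ‖Y (p k) - p k‖ < R / 2 := by
        apply lt_of_pow_lt_pow_left₀ 2 (by linarith)
        linarith
      have hball : Y (p k) ∈ Metric.ball x₀ R := by
        rw [Metric.mem_ball, dist_eq_norm]
        have : Y (p k) - x₀ = (Y (p k) - p k) + (p k - x₀) := by abel
        rw [this]
        linarith [norm_add_le (Y (p k) - p k) (p k - x₀)]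
      have hin := hv _ hball (p k) c hc (hY2 (p k))
      have hG := hM _ (hY1 (p k))
      constructor
      · rw [hp1]
        have : p k + h • G (Y (p k)) - x₀ = (p k - x₀) + h • G (Y (p k)) := by abel
        rw [this]
        have h3 := norm_add_le (p k - x₀) (h • G (Y (p k)))
        rw [norm_smul, Real.norm_of_nonneg hh.le] at h3
        push_cast
        nlinarith
      · have h4 := hY2 (p (k+1)) (Y (p k)) (hY1 _)
        have h5 : ‖Y (p k) - p (k+1)‖ ^ 2 = ‖Y (p k) - p k‖ ^ 2
            - 2 * h * ⟪G (Y (p k)), Y (p k) - p k⟫ + h ^ 2 * ‖G (Y (p k))‖ ^ 2 := by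
          rw [hp1, ← sub_sub, norm_sub_sq_real, norm_smul, inner_smul_right,
            real_inner_comm, Real.norm_of_nonneg hh.le]
          ring
        have h6 : ‖G (Y (p k))‖ ^ 2 ≤ M ^ 2 := by gcongr
        have h7 : c * ‖Y (p k) - p (k+1)‖ ^ 2 ≤ c * ‖Y (p k) - p k‖ ^ 2 + c * h ^ 2 * M ^ 2 := by
          rw [h5]
          have h8 : 0 ≤ c * h * ⟪G (Y (p k)), Y (p k) - p k⟫ := by positivity
          have h9 : c * h ^ 2 * ‖G (Y (p k))‖ ^ 2 ≤ c * h ^ 2 * M ^ 2 := by gcongr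
          nlinarith
        push_cast
        linarith
  refine ⟨p, fun k => Y (p k), rfl, hp1, fun k hk => ?_⟩
  obtain ⟨h1, h2⟩ := main k hk
  have hpk : ‖p k - x₀‖ ≤ R / 2 := by
    have : M * (k * h) ≤ M * T := mul_le_mul_of_nonneg_left (by nlinarith) hM0
    linarith
  have hpk' : p k ∈ Metric.closedBall x₀ R := by
    rw [Metric.mem_closedBall, dist_eq_norm]; linarith
  refine ⟨h1, hY1 _, key _ hpk', ?_⟩
  have : 0 ≤ c * ‖Y (p k) - p k‖ ^ 2 := by positivity
  linarith

lemma step_est {E : Type*} [NormedAddCommGroup E] [NormedSpace ℝ E]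
    (p g : ℕ → E) (h : ℝ) (hh : 0 < h) (hp : ∀ k, p (k + 1) = p k + h • g k)
    (v : E) (e : ℝ) (i j : ℕ) (hij : i ≤ j) (hg : ∀ k, i ≤ k → k < j → ‖g k - v‖ ≤ e) :
    ‖p j - p i - (h * (j - i : ℝ)) • v‖ ≤ e * (h * (j - i)) := by
  induction j, hij using Nat.le_induction with
  | base => simp
  | succ j hij ih =>
    have h1 := ih (fun k hk hk' => hg k hk (by omega))
    have h2 := hg j hij (by omega)
    have h3 : p (j + 1) - p i - (h * ((j + 1 : ℕ) - i : ℝ)) • v =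
        (p j - p i - (h * (j - i : ℝ)) • v) + h • (g j - v) := by
      rw [hp]; push_cast; module
    rw [h3]
    refine (norm_add_le _ _).trans ?_
    rw [norm_smul, Real.norm_of_nonneg hh.le]
    push_cast
    nlinarith

lemma nagumo {E : Type*} [NormedAddCommGroup E] [InnerProductSpace ℝ E]
    [FiniteDimensional ℝ E] (x₀ : E) (R : ℝ) (hR : 0 < R) (W : E → ℝ) (G : E → E)
    (hW : ContinuousOn W (Metric.closedBall x₀ R))
    (hG : ContinuousOn G (Metric.closedBall x₀ R))
    (hv : ∀ y ∈ Metric.ball x₀ R, ∀ z : E, ∀ c : ℝ, 0 < c →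
      (∀ w ∈ Metric.closedBall x₀ R, W w - c * ‖w - z‖ ^ 2 ≤ W y - c * ‖y - z‖ ^ 2) →
      0 ≤ ⟪G y, y - z⟫) :
    ∃ T₀ > (0:ℝ), ∀ T, 0 < T → T ≤ T₀ → ∃ x : ℝ → E, x 0 = x₀ ∧ ∀ t ∈ Icc 0 T,
      x t ∈ Metric.closedBall x₀ R ∧
      HasDerivWithinAt x (G (x t)) (Icc 0 T) t ∧ W x₀ ≤ W (x t) := by
  obtain ⟨B, hB⟩ := (isCompact_closedBall x₀ R).exists_bound_of_continuousOn hW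
  obtain ⟨M', hM'⟩ := (isCompact_closedBall x₀ R).exists_bound_of_continuousOn hG
  obtain ⟨M, hM0, hM⟩ : ∃ M > 0, ∀ y ∈ Metric.closedBall x₀ R, ‖G y‖ ≤ M :=
    ⟨max M' 1, by positivity, fun y hy => (hM' y hy).trans (le_max_left _ _)⟩
  refine ⟨R / 2 / M, by positivity, fun T hT0 hT => ?_⟩
  rw [le_div_iff₀ hM0, mul_comm] at hT
  -- parameters
  obtain ⟨c, hc, hcB, hct⟩ : ∃ c : ℕ → ℝ, (∀ m, 0 < c m) ∧ (∀ m, 2 * B / c m < (R / 2) ^ 2) ∧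
      Tendsto c atTop atTop := by
    obtain ⟨N, hN⟩ := exists_nat_gt (2 * B / (R / 2) ^ 2)
    refine ⟨fun m => m + N + 1, fun m => by positivity, fun m => ?_, ?_⟩
    · rw [div_lt_iff₀ (by positivity)]
      rw [div_lt_iff₀ (by positivity)] at hN
      have : 0 ≤ (R/2)^2 * (m + 1) := by positivity
      nlinarith
    · exact tendsto_atTop_add_const_right _ _
        (tendsto_atTop_add_const_right _ _ tendsto_natCast_atTop_atTop)
  set h : ℕ → ℝ := fun m => (c m)⁻¹ ^ 2 with hhdef
  have hh : ∀ m, 0 < h m := fun m => by have := hc m; positivity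
  have hex := fun m => discrete_scheme x₀ R hR W G hW hv B M T hB hM hT hM0.le (c m) (h m) (hc m)
    (hh m) (hcB m)
  choose p y hp0 hp1 hp2 using hex
  let 𝒰 : Ultrafilter ℕ := hyperfilter ℕ
  have h𝒰 : (𝒰 : Filter ℕ) ≤ atTop := by
    have := Nat.hyperfilter_le_atTop
    exact this
  have hci : Tendsto (fun m => (c m)⁻¹) 𝒰 (𝓝 0) := (tendsto_inv_atTop_zero.comp hct).mono_left h𝒰
  have hht : Tendsto h 𝒰 (𝓝 0) := by
    have := hci.pow 2
    rwa [zero_pow two_ne_zero] at this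
  let I : ℕ → ℝ → ℕ := fun m t => ⌊t / h m⌋₊
  have hI1 : ∀ m t, 0 ≤ t → (I m t : ℝ) * h m ≤ t := fun m t ht => by
    rw [← le_div_iff₀ (hh m)]; exact Nat.floor_le (div_nonneg ht (hh m).le)
  have hI2 : ∀ m t, t < (I m t : ℝ) * h m + h m := fun m t => by
    have := Nat.lt_floor_add_one (t / h m)
    rw [div_lt_iff₀ (hh m)] at this
    linarith
  have hIm : ∀ m, Monotone (I m) := fun m a b hab =>
    Nat.floor_mono (div_le_div_of_nonneg_right hab (hh m).le)
  have hpm : ∀ m t, t ∈ Icc 0 T → p m (I m t) ∈ Metric.closedBall x₀ R := by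
    intro m t ht
    have h1 := hI1 m t ht.1
    have h2 := (hp2 m (I m t) (h1.trans ht.2)).1
    have h3 : M * (I m t * h m) ≤ M * T := mul_le_mul_of_nonneg_left (h1.trans ht.2) hM0.le
    rw [Metric.mem_closedBall, dist_eq_norm]
    linarith
  have hlim : ∀ t, ∃ z, t ∈ Icc 0 T →
      z ∈ Metric.closedBall x₀ R ∧ Tendsto (fun m => p m (I m t)) 𝒰 (𝓝 z) := by
    intro t
    by_cases ht : t ∈ Icc 0 T
    · obtain ⟨z, hz, hz'⟩ := (isCompact_closedBall x₀ R).ultrafilter_le_nhds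
        (𝒰.map (fun m => p m (I m t))) (by
          rw [le_principal_iff, Ultrafilter.mem_coe, Ultrafilter.mem_map]
          exact univ_mem' (fun m => hpm m t ht))
      exact ⟨z, fun _ => ⟨hz, hz'⟩⟩
    · exact ⟨x₀, fun h => absurd h ht⟩
  choose x hx using hlim
  have hIt : ∀ t, 0 ≤ t → Tendsto (fun m => (I m t : ℝ) * h m) 𝒰 (𝓝 t) := by
    intro t ht
    refine tendsto_of_tendsto_of_tendsto_of_le_of_le (g := fun m => t - h m) (h := fun _ => t)
      (by simpa using tendsto_const_nhds.sub hht) tendsto_const_nhds ?_ ?_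
    · intro m; have := hI2 m t; simp only; linarith
    · intro m; exact hI1 m t ht
  have hd : ∀ δ > 0, ∀ᶠ m in (𝒰 : Filter ℕ), ∀ k : ℕ, k * h m ≤ T → ‖y m k - p m k‖ < δ := by
    intro δ hδ
    have h1 : Tendsto (fun m => 2 * B / c m) 𝒰 (𝓝 0) := by
      simpa [div_eq_mul_inv] using hci.const_mul (2 * B)
    filter_upwards [h1.eventually (gt_mem_nhds (show 0 < δ ^ 2 by positivity))] with m hm k hk
    have := (hp2 m k hk).2.2.1
    exact lt_of_pow_lt_pow_left₀ 2 hδ.le (by linarith)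
  have hx0 : x 0 = x₀ := by
    have h1 := (hx 0 ⟨le_rfl, hT0.le⟩).2
    have h2 : (fun m => p m (I m 0)) = fun _ => x₀ := by
      funext m; simp [I, hp0]
    rw [h2] at h1
    exact tendsto_nhds_unique h1 tendsto_const_nhds |>.symm ▸ rfl
  have claim : ∀ s ∈ Icc 0 T, ∀ e > 0, ∃ δ > 0, ∀ a ∈ Icc 0 T, ∀ b ∈ Icc 0 T, a ≤ s → s ≤ b →
      b - a < δ → ‖x b - x a - (b - a) • G (x s)‖ ≤ e * (b - a) := by
    intro s hs e he
    obtain ⟨δ, hδ, hδG⟩ := Metric.continuousWithinAt_iff.1 (hG (x s) (hx s hs).1) e he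
    refine ⟨δ / 4 / M, by positivity, fun a ha b hb has hsb hab => ?_⟩
    rw [lt_div_iff₀ hM0] at hab
    have hT1 : Tendsto (fun m => ‖p m (I m b) - p m (I m a) -
        ((I m b : ℝ) * h m - I m a * h m) • G (x s)‖) 𝒰
        (𝓝 ‖x b - x a - (b - a) • G (x s)‖) :=
      ((((hx b hb).2.sub (hx a ha).2)).sub
        (((hIt b hb.1).sub (hIt a ha.1)).smul_const _)).norm
    have hT2 : Tendsto (fun m => e * ((I m b : ℝ) * h m - I m a * h m)) 𝒰 (𝓝 (e * (b - a))) :=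
      ((hIt b hb.1).sub (hIt a ha.1)).const_mul e
    refine le_of_tendsto_of_tendsto hT1 hT2 ?_
    have e1 := Metric.tendsto_nhds.1 (hx s hs).2 (δ / 4) (by positivity)
    have e2 := hd (δ / 4) (by positivity)
    have e3 : ∀ᶠ m in (𝒰 : Filter ℕ), M * h m < δ / 4 := by
      have : Tendsto (fun m => M * h m) 𝒰 (𝓝 0) := by simpa using hht.const_mul M
      exact this.eventually (gt_mem_nhds (by positivity))
    filter_upwards [e1, e2, e3] with m h1 h2 h3
    have hab' : I m a ≤ I m b := hIm m (has.trans hsb)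
    have hkT : ∀ k : ℕ, k ≤ I m b → k * h m ≤ T := by
      intro k hk
      have : (k : ℝ) ≤ I m b := by exact_mod_cast hk
      have h5 := mul_le_mul_of_nonneg_right this (hh m).le
      exact h5.trans ((hI1 m b hb.1).trans hb.2)
    have hlip : ∀ k l : ℕ, I m a ≤ k → k ≤ l → l ≤ I m b →
        ‖p m l - p m k‖ ≤ δ / 2 := by
      intro k l hk hkl hl
      have := step_est (p m) (fun k => G (y m k)) (h m) (hh m) (hp1 m) 0 M k l hkl
        (fun q _ hq => by
          simpa using hM _ (hp2 m q (hkT q (by omega))).2.1)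
      simp only [smul_zero, sub_zero] at this
      refine this.trans ?_
      have hk' : (I m a : ℝ) ≤ k := by exact_mod_cast hk
      have hl' : (l : ℝ) ≤ I m b := by exact_mod_cast hl
      have hb1 := hI1 m b hb.1
      have ha2 := hI2 m a
      have : h m * (l - k : ℝ) ≤ (b - a) + h m := by
        have := mul_le_mul_of_nonneg_left hk' (hh m).le
        have := mul_le_mul_of_nonneg_left hl' (hh m).le
        nlinarith
      have := mul_le_mul_of_nonneg_left this hM0.le
      nlinarith
    have := step_est (p m) (fun k => G (y m k)) (h m) (hh m) (hp1 m) (G (x s)) e _ _ hab' (by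
      intro k hk hk'
      have hyk := hp2 m k (hkT k hk'.le)
      have hs1 : I m a ≤ I m s := hIm m has
      have hs2 : I m s ≤ I m b := hIm m hsb
      have h4 : ‖p m k - p m (I m s)‖ ≤ δ / 2 := by
        rcases le_total k (I m s) with h | h
        · rw [norm_sub_rev]; exact hlip k _ hk h hs2
        · exact hlip _ _ hs1 h hk'.le
      have h5 := h2 k (hkT k hk'.le)
      rw [dist_eq_norm] at h1
      have h6 : dist (y m k) (x s) < δ := by
        rw [dist_eq_norm]
        have : y m k - x s = (y m k - p m k) + (p m k - p m (I m s)) + (p m (I m s) - x s) := by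
          abel
        rw [this]
        refine (norm_add₃_le).trans_lt ?_
        linarith
      have := hδG hyk.2.1 h6
      rw [dist_eq_norm] at this
      exact this.le)
    have hr : h m * ((I m b : ℝ) - I m a) = (I m b : ℝ) * h m - I m a * h m := by ring
    rw [hr] at this
    exact this
  refine ⟨x, hx0, fun t ht => ⟨(hx t ht).1, ?_, ?_⟩⟩
  · rw [hasDerivWithinAt_iff_isLittleO, Asymptotics.isLittleO_iff]
    intro e he
    obtain ⟨δ, hδ, hδ'⟩ := claim t ht e he
    filter_upwards [self_mem_nhdsWithin, nhdsWithin_le_nhds (Metric.ball_mem_nhds t hδ)]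
      with t' ht' htb
    rw [Metric.mem_ball, Real.dist_eq] at htb
    rcases le_total t t' with hle | hle
    · rw [abs_of_nonneg (by linarith)] at htb
      rw [Real.norm_of_nonneg (by linarith : 0 ≤ t' - t)]
      exact hδ' t ht t' ht' le_rfl hle htb
    · rw [abs_of_nonpos (by linarith)] at htb
      rw [Real.norm_of_nonpos (by linarith : t' - t ≤ 0), ← norm_neg]
      have := hδ' t' ht' t ht hle le_rfl (by linarith)
      have e1 : -(x t' - x t - (t' - t) • G (x t)) = x t - x t' - (t - t') • G (x t) := by module
      rw [e1, neg_sub]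
      exact this
  · have h1 : Tendsto (fun m => y m (I m t)) 𝒰 (𝓝 (x t)) := by
      have : Tendsto (fun m => y m (I m t) - p m (I m t)) 𝒰 (𝓝 0) := by
        rw [Metric.tendsto_nhds]
        intro e he
        filter_upwards [hd e he] with m hm
        rw [dist_zero_right]
        exact hm _ ((hI1 m t ht.1).trans ht.2)
      simpa using this.add (hx t ht).2
    have h2 : Tendsto (fun m => W (y m (I m t))) 𝒰 (𝓝 (W (x t))) := by
      refine (hW (x t) (hx t ht).1).tendsto.comp (tendsto_nhdsWithin_iff.2 ⟨h1, ?_⟩)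
      exact Eventually.of_forall fun m => (hp2 m _ ((hI1 m t ht.1).trans ht.2)).2.1
    have h3 : Tendsto (fun m => W x₀ - (c m)⁻¹ * (M ^ 2 * T)) 𝒰 (𝓝 (W x₀)) := by
      simpa using tendsto_const_nhds.sub (hci.mul_const (M ^ 2 * T))
    refine le_of_tendsto_of_tendsto' h3 h2 fun m => ?_
    have hk := (hI1 m t ht.1).trans ht.2
    have h4 := (hp2 m _ hk).2.2.2
    refine le_trans ?_ h4
    have h5 : c m * h m ^ 2 * M ^ 2 * (I m t) = (c m)⁻¹ * (M ^ 2 * (I m t * h m)) := by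
      have := (hc m).ne'
      simp only [hhdef]; field_simp
    rw [h5]
    have : 0 < (c m)⁻¹ := inv_pos.2 (hc m)
    gcongr

lemma compare_fwd (f g f' g' : ℝ → ℝ) (e : ℝ)
    (hf : ∀ t ∈ Ico 0 e, HasDerivAt f (f' t) t) (hg : ∀ t ∈ Ico 0 e, HasDerivAt g (g' t) t)
    (h0 : f 0 = g 0) (hle : ∀ t ∈ Ico 0 e, f' t ≤ g' t) : ∀ t ∈ Ico 0 e, f t ≤ g t := by
  intro t ht
  have hm : MonotoneOn (fun t => g t - f t) (Ico 0 e) := by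
    refine monotoneOn_of_deriv_nonneg (convex_Ico 0 e) ?_ ?_ ?_
    · exact fun s hs => ((hg s hs).sub (hf s hs)).continuousAt.continuousWithinAt
    · exact fun s hs => ((hg s (interior_subset hs)).sub
        (hf s (interior_subset hs))).differentiableAt.differentiableWithinAt
    · intro s hs
      have hs := interior_subset hs
      rw [show deriv (fun t => g t - f t) s = _ from ((hg s hs).sub (hf s hs)).deriv]
      linarith [hle s hs]
  have := hm ⟨le_rfl, ht.1.trans_lt ht.2⟩ ht ht.1
  simp only [h0, sub_self] at this
  linarith

lemma quad_deriv (a k : ℝ) (t : ℝ) :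
    HasDerivAt (fun t : ℝ => a * t + k * t ^ 2) (a + 2 * k * t) t := by
  have h : HasDerivAt (fun t : ℝ => a * t + k * t ^ 2) (a * 1 + k * ((2:ℕ) * t ^ (2 - 1))) t :=
    ((hasDerivAt_id t).const_mul a).add ((hasDerivAt_pow 2 t).const_mul k)
  have e : a * 1 + k * ((2:ℕ) * t ^ (2 - 1)) = a + 2 * k * t := by norm_num; ring
  rwa [e] at h

lemma second_fwd (u φ : ℝ → ℝ) (a : ℝ) (hφ : ContDiff ℝ 2 φ) (ha : deriv φ 0 = a)
    (e : ℝ) (he : 0 < e) (hu : ∀ t ∈ Ico 0 e, u t ≤ u 0 + a * t)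
    (hmin : IsLocalMinOn (fun t => u t - φ t) (Ici (0:ℝ)) 0) : 0 ≤ -(deriv (deriv φ) 0) := by
  by_contra! hneg
  have hpos : 0 < deriv (deriv φ) 0 := by linarith
  have hd1 : Differentiable ℝ φ := hφ.differentiable (by norm_num)
  have hφ' : ContDiff ℝ 1 (deriv φ) := by
    have : ContDiff ℝ (1 + 1) φ := by simpa [one_add_one_eq_two] using hφ
    exact (contDiff_succ_iff_deriv.1 this).2.2
  have hd2 : Differentiable ℝ (deriv φ) := hφ'.differentiable (by norm_num)
  set d := deriv (deriv φ) 0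
  have h1 : ∀ᶠ t in 𝓝[≥] (0:ℝ), a + d / 2 * t ≤ deriv φ t := by
    have := (hasDerivAt_iff_isLittleO.1 (hd2 0).hasDerivAt)
    have := (Asymptotics.isLittleO_iff.1 this) (show 0 < d / 2 by linarith)
    filter_upwards [nhdsWithin_le_nhds this, self_mem_nhdsWithin] with t ht ht0
    have ht0 : 0 ≤ t := ht0
    simp only [sub_zero, smul_eq_mul, Real.norm_eq_abs, abs_of_nonneg ht0, ha] at ht
    have := (abs_le.1 ht).1
    change -(d / 2 * t) ≤ deriv φ t - a - t * d at this
    linarith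
  have h2 : ∀ᶠ t in 𝓝[≥] (0:ℝ), φ t ≤ φ 0 + a * t := by
    filter_upwards [hmin, Ico_mem_nhdsGE he] with t ht ht'
    have := hu t ht'
    linarith
  obtain ⟨δ, hδ, hδ'⟩ := mem_nhdsGE_iff_exists_Ico_subset.1 (h1.and h2)
  have hδ : 0 < δ := hδ
  have := compare_fwd (fun t => φ 0 + (a * t + d / 4 * t ^ 2)) φ (fun t => a + d / 2 * t) (deriv φ) δ
    (fun t _ => by
      have h := (quad_deriv a (d / 4) t).const_add (φ 0)
      have e : a + 2 * (d / 4) * t = a + d / 2 * t := by ring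
      rw [e] at h
      exact h)
    (fun t _ => (hd1 t).hasDerivAt) (by simp) (fun t ht => (hδ' ht).1) (δ / 2)
    ⟨by linarith, by linarith⟩
  have h3 := (hδ' (show δ / 2 ∈ Ico 0 δ from ⟨by linarith, by linarith⟩)).2
  have : 0 < d / 4 * (δ/2)^2 := by positivity
  linarith

lemma locmin_neg (g : ℝ → ℝ) (h : IsLocalMinOn g (Iic (0:ℝ)) 0) :
    IsLocalMinOn (fun t => g (-t)) (Ici (0:ℝ)) 0 := by
  have ht : Tendsto (fun t : ℝ => -t) (𝓝[≥] 0) (𝓝[≤] 0) := by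
    have : Tendsto (fun t : ℝ => -t) (𝓝[≥] 0) (𝓝 (-0)) :=
      (continuous_neg.tendsto 0).mono_left nhdsWithin_le_nhds
    rw [neg_zero] at this
    refine tendsto_nhdsWithin_iff.2 ⟨this, ?_⟩
    filter_upwards [self_mem_nhdsWithin] with t ht
    simpa using ht
  have := ht.eventually h
  simpa [IsLocalMinOn, IsMinFilter] using this

lemma locmin_neg' (g : ℝ → ℝ) (h : IsLocalMinOn (fun t => g (-t)) (Ici (0:ℝ)) 0) :
    IsLocalMinOn g (Iic (0:ℝ)) 0 := by
  have ht : Tendsto (fun t : ℝ => -t) (𝓝[≤] 0) (𝓝[≥] 0) := by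
    have : Tendsto (fun t : ℝ => -t) (𝓝[≤] 0) (𝓝 (-0)) :=
      (continuous_neg.tendsto 0).mono_left nhdsWithin_le_nhds
    rw [neg_zero] at this
    refine tendsto_nhdsWithin_iff.2 ⟨this, ?_⟩
    filter_upwards [self_mem_nhdsWithin] with t ht
    simpa using ht
  have := ht.eventually h
  simpa [IsLocalMinOn, IsMinFilter] using this

lemma second_bwd (u φ : ℝ → ℝ) (a : ℝ) (hφ : ContDiff ℝ 2 φ) (ha : deriv φ 0 = a)
    (e : ℝ) (he : 0 < e) (hu : ∀ t ∈ Ioc (-e) 0, u t ≤ u 0 + a * t)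
    (hmin : IsLocalMinOn (fun t => u t - φ t) (Iic (0:ℝ)) 0) : 0 ≤ -(deriv (deriv φ) 0) := by
  have hd : deriv (fun t => φ (-t)) = fun t => - deriv φ (-t) := by
    funext t; exact deriv_comp_neg φ t
  have := second_fwd (fun t => u (-t)) (fun t => φ (-t)) (-a) (hφ.comp contDiff_neg)
    (by rw [hd]; simp [ha]) e he
    (fun t ht => by
      have := hu (-t) ⟨by linarith [ht.2], by linarith [ht.1]⟩
      simp only [neg_zero]; linarith) (locmin_neg _ hmin)
  rw [hd] at this
  have h2 : deriv (fun t => -deriv φ (-t)) 0 = deriv (deriv φ) 0 := by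
    rw [deriv.fun_neg, deriv_comp_neg]; simp
  rwa [h2] at this

lemma quad_deriv2 (a k : ℝ) : deriv (deriv (fun t : ℝ => a * t + k * t ^ 2)) 0 = 2 * k := by
  have : deriv (fun t : ℝ => a * t + k * t ^ 2) = fun t => a + 2 * k * t := by
    funext t; exact (quad_deriv a k t).deriv
  rw [this]
  have h : HasDerivAt (fun t : ℝ => a + 2 * k * t) (2 * k * 1) 0 :=
    ((hasDerivAt_id (0:ℝ)).const_mul (2*k)).const_add a
  rw [h.deriv, mul_one]

lemma test_fwd (u v ψ : ℝ → ℝ) (r d e : ℝ) (hr : 0 < r) (hd : d < 0) (he : 0 < e)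
    (hu : ∀ t ∈ Ioo (-e) e, HasDerivAt u (-r * v t) t)
    (hψ : HasDerivAt ψ d 0) (hv : ∀ᶠ t in 𝓝 (0:ℝ), v t ≤ v 0 + ψ t - ψ 0) :
    IsLocalMinOn (fun t => u t - (-r * v 0 * t + (-r * d / 4) * t ^ 2)) (Ici (0:ℝ)) 0 := by
  have h1 : ∀ᶠ t in 𝓝[≥] (0:ℝ), v t ≤ v 0 + d / 2 * t := by
    have := (Asymptotics.isLittleO_iff.1 (hasDerivAt_iff_isLittleO.1 hψ)) (show 0 < -d / 2 by linarith)
    filter_upwards [nhdsWithin_le_nhds this, self_mem_nhdsWithin, nhdsWithin_le_nhds hv]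
      with t ht ht0 htv
    have ht0 : 0 ≤ t := ht0
    simp only [sub_zero, smul_eq_mul, Real.norm_eq_abs, abs_of_nonneg ht0] at ht
    have := (abs_le.1 ht).2
    linarith
  obtain ⟨δ, hδ, hδ'⟩ := mem_nhdsGE_iff_exists_Ico_subset.1 (h1.and (Ico_mem_nhdsGE he))
  have hδ : 0 < δ := hδ
  have := compare_fwd (fun t => u 0 + (-r * v 0 * t + (-r * d / 4) * t ^ 2)) u
    (fun t => -r * v 0 + 2 * (-r * d / 4) * t) (fun t => -r * v t) δ
    (fun t _ => (quad_deriv _ _ t).const_add _)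
    (fun t ht => hu t ⟨by linarith [(hδ' ht).2.1], (hδ' ht).2.2⟩) (by simp)
    (fun t ht => by
      have := (hδ' ht).1
      nlinarith)
  filter_upwards [Ico_mem_nhdsGE hδ] with t ht
  have := this t ht
  linarith

lemma test_bwd (u v ψ : ℝ → ℝ) (r d e : ℝ) (hr : 0 < r) (hd : d < 0) (he : 0 < e)
    (hu : ∀ t ∈ Ioo (-e) e, HasDerivAt u (-r * v t) t)
    (hψ : HasDerivAt ψ d 0) (hv : ∀ᶠ t in 𝓝 (0:ℝ), v 0 + ψ t - ψ 0 ≤ v t) :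
    IsLocalMinOn (fun t => u t - (-r * v 0 * t + (-r * d / 4) * t ^ 2)) (Iic (0:ℝ)) 0 := by
  apply locmin_neg'
  have := test_fwd (fun t => u (-t)) (fun t => - v (-t)) (fun t => - ψ (-t)) r d e hr hd he
    (fun t ht => by
      have h : HasDerivAt (fun t => u (-t)) ((-1:ℝ) • (-r * v (-t))) t :=
        (hu (-t) ⟨by linarith [ht.2], by linarith [ht.1]⟩).scomp t (hasDerivAt_neg t)
      have e : (-1:ℝ) • (-r * v (-t)) = -r * -v (-t) := by simp
      rwa [e] at h)
    (by
      have hψ' : HasDerivAt ψ d (-0) := by simpa using hψ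
      have h : HasDerivAt (fun t => -ψ (-t)) (-((-1:ℝ) • d)) 0 :=
        (hψ'.scomp (0:ℝ) (hasDerivAt_neg (0:ℝ))).neg
      have e : -((-1:ℝ) • d) = d := by simp
      rwa [e] at h)
    (by
      have ht : Tendsto (fun t : ℝ => -t) (𝓝 0) (𝓝 0) := by
        simpa using (continuous_neg.tendsto (0:ℝ))
      filter_upwards [ht.eventually hv] with t ht
      simp only [neg_zero]; linarith)
  convert this using 2
  simp

/-- Glueing a forward and a backward viable trajectory. -/
lemma two_sided {E : Type*} [NormedAddCommGroup E] [InnerProductSpace ℝ E]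
    [FiniteDimensional ℝ E] (x₀ : E) (R : ℝ) (hR : 0 < R) (W : E → ℝ) (G : E → E)
    (hW : ContinuousOn W (Metric.closedBall x₀ R))
    (hG : ContinuousOn G (Metric.closedBall x₀ R))
    (hv : ∀ y ∈ Metric.ball x₀ R, ∀ z : E, ∀ c : ℝ, 0 < c →
      (∀ w ∈ Metric.closedBall x₀ R, W w - c * ‖w - z‖ ^ 2 ≤ W y - c * ‖y - z‖ ^ 2) →
      0 ≤ ⟪G y, y - z⟫)
    (hv' : ∀ y ∈ Metric.ball x₀ R, ∀ z : E, ∀ c : ℝ, 0 < c →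
      (∀ w ∈ Metric.closedBall x₀ R, W y + c * ‖y - z‖ ^ 2 ≤ W w + c * ‖w - z‖ ^ 2) →
      ⟪G y, y - z⟫ ≤ 0) :
    ∃ T > (0:ℝ), ∃ x : ℝ → E, x 0 = x₀ ∧ (∀ t ∈ Ioo (-T) T, x t ∈ Metric.closedBall x₀ R) ∧
      (∀ t ∈ Ioo (-T) T, HasDerivWithinAt x (G (x t)) (Ioo (-T) T) t) ∧
      (∀ t ∈ Ico 0 T, W x₀ ≤ W (x t)) ∧ (∀ t ∈ Ioc (-T) 0, W (x t) ≤ W x₀) := by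
  obtain ⟨T₁, hT₁, h1⟩ := nagumo x₀ R hR W G hW hG hv
  obtain ⟨T₂, hT₂, h2⟩ := nagumo x₀ R hR (fun y => - W y) (fun y => - G y) hW.neg hG.neg (by
    intro y hy z c hc hw
    have := hv' y hy z c hc (fun w hw' => by have := hw w hw'; linarith)
    rw [inner_neg_left]; linarith)
  set T := min T₁ T₂
  have hT : 0 < T := lt_min hT₁ hT₂
  obtain ⟨a, ha0, ha⟩ := h1 T hT (min_le_left _ _)
  obtain ⟨b, hb0, hb⟩ := h2 T hT (min_le_right _ _)
  let x : ℝ → E := fun t => if 0 ≤ t then a t else b (-t)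
  have hxa : ∀ t, 0 ≤ t → x t = a t := fun t ht => if_pos ht
  have hxb : ∀ t, t ≤ 0 → x t = b (-t) := by
    intro t ht
    rcases ht.lt_or_eq with h | h
    · exact if_neg (not_le.2 h)
    · subst h; simp [x, ha0, hb0]
  have hda : ∀ t ∈ Icc 0 T, HasDerivWithinAt x (G (x t)) (Icc 0 T) t := by
    intro t ht
    have := (ha t ht).2.1
    rw [hxa t ht.1]
    exact this.congr (fun s hs => hxa s hs.1) (hxa t ht.1)
  have hdb : ∀ t ∈ Icc (-T) 0, HasDerivWithinAt x (G (x t)) (Icc (-T) 0) t := by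
    intro t ht
    have h3 := (hb (-t) ⟨by linarith [ht.2], by linarith [ht.1]⟩).2.1
    have h4 : HasDerivWithinAt (fun s => b (-s)) ((-1 : ℝ) • (- G (b (-t)))) (Icc (-T) 0) t :=
      h3.scomp t (hasDerivAt_neg t).hasDerivWithinAt
        (fun s hs => ⟨by linarith [hs.2], by linarith [hs.1]⟩)
    rw [hxb t ht.2]
    simp only [neg_smul, one_smul, neg_neg] at h4
    exact h4.congr (fun s hs => hxb s hs.2) (hxb t ht.2)
  refine ⟨T, hT, x, by rw [hxa 0 le_rfl, ha0], ?_, ?_, ?_, ?_⟩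
  · intro t ht
    rcases le_total 0 t with h | h
    · rw [hxa t h]; exact (ha t ⟨h, ht.2.le⟩).1
    · rw [hxb t h]; exact (hb (-t) ⟨by linarith, by linarith [ht.1]⟩).1
  · intro t ht
    have hA : HasDerivWithinAt x (G (x t)) (Icc 0 T) t := by
      by_cases h : t ∈ Icc 0 T
      · exact hda t h
      · exact HasFDerivWithinAt.of_notMem_closure (by rwa [isClosed_Icc.closure_eq])
    have hB : HasDerivWithinAt x (G (x t)) (Icc (-T) 0) t := by
      by_cases h : t ∈ Icc (-T) 0
      · exact hdb t h
      · exact HasFDerivWithinAt.of_notMem_closure (by rwa [isClosed_Icc.closure_eq])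
    refine (hA.union hB).mono ?_
    intro s hs
    rcases le_total 0 s with h | h
    · exact Or.inl ⟨h, hs.2.le⟩
    · exact Or.inr ⟨hs.1.le, h⟩
  · intro t ht
    rw [hxa t ht.1]; exact (ha t ⟨ht.1, ht.2.le⟩).2.2
  · intro t ht
    rw [hxb t ht.2]
    have := (hb (-t) ⟨by linarith [ht.2], by linarith [ht.1]⟩).2.2
    linarith

lemma grad_quad {E : Type*} [NormedAddCommGroup E] [InnerProductSpace ℝ E]
    [CompleteSpace E] (c : ℝ) (z y : E) :
    HasGradientAt (fun w : E => c * ‖w - z‖ ^ 2) ((2 * c) • (y - z)) y := by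
  rw [hasGradientAt_iff_hasFDerivAt]
  have h := (((hasFDerivAt_id y).sub_const z).norm_sq).const_mul c
  have e : (InnerProductSpace.toDual ℝ E) ((2 * c) • (y - z)) =
      c • 2 • (innerSL ℝ) (id y - z) ∘SL ContinuousLinearMap.id ℝ E := by
    ext w
    simp [inner_smul_left]
    ring
  rw [e]
  exact h

/-- for a positively `r`-homogeneous Hamiltonian, property (ED)
(a second-order test condition along a trajectory of the Hamiltonian dynamics)
is equivalent to `U` being a `C¹`-supersolution of the Aronsson equation. -/
theorem stmt_4 {n : ℕ} (Ω : Set (EuclideanSpace ℝ (Fin n))) (hΩ : IsOpen Ω)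
    (H : EuclideanSpace ℝ (Fin n) → EuclideanSpace ℝ (Fin n) → ℝ)
    (Hp : EuclideanSpace ℝ (Fin n) → EuclideanSpace ℝ (Fin n) → EuclideanSpace ℝ (Fin n))
    (hHc : ContinuousOn (fun q : EuclideanSpace ℝ (Fin n) × EuclideanSpace ℝ (Fin n) =>
      H q.1 q.2) (Ω ×ˢ univ))
    (hHsymm : ∀ x ∈ Ω, ∀ p, H x (-p) = H x p)
    (hHp : ∀ x ∈ Ω, ∀ p, 0 < H x p → HasGradientAt (H x) (Hp x p) p)
    (hHpc : ContinuousOn (fun q : EuclideanSpace ℝ (Fin n) × EuclideanSpace ℝ (Fin n) =>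
      Hp q.1 q.2) {q | q.1 ∈ Ω ∧ 0 < H q.1 q.2})
    (r : ℝ) (hr : 0 < r)
    (hhom : ∀ x ∈ Ω, ∀ p : EuclideanSpace ℝ (Fin n), ∀ t : ℝ, 0 < t →
      H x (t • p) = t ^ r * H x p)
    (U : EuclideanSpace ℝ (Fin n) → ℝ) (hU : ContDiffOn ℝ 1 U Ω) :
    -- (ED)
    (∀ x₀ ∈ Ω, 0 < H x₀ (gradient U x₀) →
      ∃ ε > (0:ℝ), ∃ x : ℝ → EuclideanSpace ℝ (Fin n),
        x 0 = x₀ ∧ (∀ t ∈ Ioo (-ε) ε, x t ∈ Ω) ∧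
        (∀ t ∈ Ioo (-ε) ε,
          HasDerivWithinAt x (-(Hp (x t) (gradient U (x t)))) (Ioo (-ε) ε) t) ∧
        ∀ φ : ℝ → ℝ, ContDiff ℝ 2 φ →
          deriv φ 0 = ⟪gradient U x₀, -(Hp x₀ (gradient U x₀))⟫ →
          (IsLocalMinOn (fun t => U (x t) - φ t) (Ici (0:ℝ)) 0 ∨
            IsLocalMinOn (fun t => U (x t) - φ t) (Iic (0:ℝ)) 0) →
          0 ≤ -(deriv (deriv φ) 0))
    ↔
    -- `U` is a `C¹`-supersolution of the Aronsson equation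
    ((∀ φ : EuclideanSpace ℝ (Fin n) → ℝ, ContDiff ℝ 1 φ → ∀ x₀ ∈ Ω,
        0 < H x₀ (gradient U x₀) →
        IsLocalMaxOn (fun x => H x (gradient U x) - φ x) Ω x₀ →
        -⟪-(Hp x₀ (gradient U x₀)), gradient φ x₀⟫ ≤ 0) ∧
     (∀ φ : EuclideanSpace ℝ (Fin n) → ℝ, ContDiff ℝ 1 φ → ∀ x₀ ∈ Ω,
        0 < H x₀ (gradient U x₀) →
        IsLocalMinOn (fun x => H x (gradient U x) - φ x) Ω x₀ →
        0 ≤ ⟪-(Hp x₀ (gradient U x₀)), gradient φ x₀⟫)) := by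
  have hUd : ∀ y ∈ Ω, HasGradientAt U (gradient U y) y := fun y hy =>
    ((hU.differentiableOn one_ne_zero).differentiableAt (hΩ.mem_nhds hy)).hasGradientAt
  have hgc : ContinuousOn (fun y => gradient U y) Ω := by
    have := hU.continuousOn_fderiv_of_isOpen hΩ le_rfl
    exact (InnerProductSpace.toDual ℝ (EuclideanSpace ℝ (Fin n))).symm.continuous.comp_continuousOn
      this
  have hVc : ContinuousOn (fun y => H y (gradient U y)) Ω :=
    hHc.comp (continuousOn_id.prodMk hgc) (fun y hy => ⟨hy, mem_univ _⟩)
  have hFc : ContinuousOn (fun y => -(Hp y (gradient U y))) {y | y ∈ Ω ∧ 0 < H y (gradient U y)} :=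
    (hHpc.comp (continuousOn_id.prodMk (hgc.mono fun y hy => hy.1)) (fun y hy => hy)).neg
  have hEuler : ∀ y ∈ Ω, 0 < H y (gradient U y) →
      ⟪gradient U y, -(Hp y (gradient U y))⟫ = -r * H y (gradient U y) := by
    intro y hy hpos
    set q := gradient U y
    have h1 := (hHp y hy q hpos).hasFDerivAt
    have h2 : HasDerivAt (fun t : ℝ => t • q) q 1 := by
      simpa using (hasDerivAt_id (1:ℝ)).smul_const q
    have h3 : HasDerivAt (fun t : ℝ => H y (t • q)) ⟪Hp y q, q⟫ 1 := by
      have h1' : HasFDerivAt (H y) (InnerProductSpace.toDual ℝ _ (Hp y q)) ((1:ℝ) • q) := by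
        rwa [one_smul]
      exact h1'.comp_hasDerivAt (1:ℝ) h2
    have h4 : HasDerivAt (fun t : ℝ => t ^ r * H y q) (r * 1 ^ (r - 1) * H y q) 1 :=
      (Real.hasDerivAt_rpow_const (Or.inl one_ne_zero)).mul_const _
    have h5 : (fun t : ℝ => t ^ r * H y q) =ᶠ[𝓝 1] fun t : ℝ => H y (t • q) := by
      filter_upwards [lt_mem_nhds (zero_lt_one (α := ℝ))] with t ht
      exact (hhom y hy q t ht).symm
    have h6 := (h3.congr_of_eventuallyEq h5).unique h4
    rw [Real.one_rpow, mul_one] at h6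
    rw [inner_neg_right, real_inner_comm, h6]; ring
  -- derivative of `U` along a trajectory
  have htraj : ∀ (ε : ℝ) (x : ℝ → EuclideanSpace ℝ (Fin n)), (∀ t ∈ Ioo (-ε) ε, x t ∈ Ω) →
      (∀ t ∈ Ioo (-ε) ε,
          HasDerivWithinAt x (-(Hp (x t) (gradient U (x t)))) (Ioo (-ε) ε) t) →
      ∀ t ∈ Ioo (-ε) ε, 0 < H (x t) (gradient U (x t)) →
        HasDerivAt (fun t => U (x t)) (-r * H (x t) (gradient U (x t))) t := by
    intro ε x hxΩ hx t ht hpos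
    have h1 := (hx t ht).hasDerivAt (isOpen_Ioo.mem_nhds ht)
    have h2 := (hUd _ (hxΩ t ht)).hasFDerivAt.comp_hasDerivAt t h1
    have h3 : HasDerivAt (fun t => U (x t))
      ⟪gradient U (x t), -(Hp (x t) (gradient U (x t)))⟫ t := h2
    rwa [hEuler _ (hxΩ t ht) hpos] at h3
  have hopen : ∀ x₀ ∈ Ω, 0 < H x₀ (gradient U x₀) →
      {y | y ∈ Ω ∧ 0 < H y (gradient U y)} ∈ 𝓝 x₀ := by
    intro x₀ hx₀ hpos
    exact (hΩ.eventually_mem hx₀).and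
      ((hVc.continuousAt (hΩ.mem_nhds hx₀)).eventually (lt_mem_nhds hpos))
  constructor
  · intro hED
    -- common part
    have common : ∀ φ : EuclideanSpace ℝ (Fin n) → ℝ, ContDiff ℝ 1 φ → ∀ x₀ ∈ Ω,
        0 < H x₀ (gradient U x₀) →
        (IsLocalMaxOn (fun x => H x (gradient U x) - φ x) Ω x₀ ∨
          IsLocalMinOn (fun x => H x (gradient U x) - φ x) Ω x₀) →
        0 ≤ ⟪-(Hp x₀ (gradient U x₀)), gradient φ x₀⟫ := by
      intro φ hφ x₀ hx₀ hpos hext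
      by_contra! hneg
      obtain ⟨ε, hε, x, hx0, hxΩ, hxd, htest⟩ := hED x₀ hx₀ hpos
      have hm0 : (0:ℝ) ∈ Ioo (-ε) ε := ⟨by linarith, hε⟩
      have hxd0 := (hxd 0 hm0).hasDerivAt (isOpen_Ioo.mem_nhds hm0)
      have hxt : Tendsto x (𝓝 0) (𝓝 x₀) := by
        have := hxd0.continuousAt.tendsto
        rwa [hx0] at this
      have hψ : HasDerivAt (fun t => φ (x t)) ⟪-(Hp x₀ (gradient U x₀)), gradient φ x₀⟫ 0 := by
        have h1 : HasGradientAt φ (gradient φ (x 0)) (x 0) :=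
          (hφ.differentiable one_ne_zero (x 0)).hasGradientAt
        have h2 : HasDerivAt (fun t => φ (x t))
            ⟪gradient φ (x 0), -(Hp (x 0) (gradient U (x 0)))⟫ 0 :=
          h1.hasFDerivAt.comp_hasDerivAt (0:ℝ) hxd0
        rwa [hx0, real_inner_comm] at h2
      obtain ⟨e', he', hpos'⟩ := Metric.eventually_nhds_iff.1
        (hxt.eventually (hopen x₀ hx₀ hpos))
      set e := min e' ε
      have he : 0 < e := lt_min he' hε
      have hu : ∀ t ∈ Ioo (-e) e,
          HasDerivAt (fun t => U (x t)) (-r * H (x t) (gradient U (x t))) t := by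
        intro t ht
        have h1 : e ≤ ε := min_le_right _ _
        have h2 : e ≤ e' := min_le_left _ _
        refine htraj ε x hxΩ hxd t ⟨by linarith [ht.1], by linarith [ht.2]⟩ ?_
        refine (hpos' ?_).2
        rw [dist_zero_right, Real.norm_eq_abs, abs_lt]
        exact ⟨by linarith [ht.1], by linarith [ht.2]⟩
      have hxt' : Tendsto x (𝓝 0) (𝓝[Ω] x₀) := tendsto_nhdsWithin_iff.2
        ⟨hxt, hxt.eventually (hΩ.eventually_mem hx₀)⟩
      set d := ⟪-(Hp x₀ (gradient U x₀)), gradient φ x₀⟫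
      have hlm : IsLocalMinOn (fun t => U (x t) -
            (-r * H (x 0) (gradient U (x 0)) * t + (-r * d / 4) * t ^ 2)) (Ici (0:ℝ)) 0 ∨
          IsLocalMinOn (fun t => U (x t) -
            (-r * H (x 0) (gradient U (x 0)) * t + (-r * d / 4) * t ^ 2)) (Iic (0:ℝ)) 0 := by
        rcases hext with hext | hext
        · left
          refine test_fwd (fun t => U (x t)) (fun t => H (x t) (gradient U (x t)))
            (fun t => φ (x t)) r d e hr hneg he hu hψ ?_
          filter_upwards [hxt'.eventually hext] with t ht
          rw [hx0]; linarith
        · right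
          refine test_bwd (fun t => U (x t)) (fun t => H (x t) (gradient U (x t)))
            (fun t => φ (x t)) r d e hr hneg he hu hψ ?_
          filter_upwards [hxt'.eventually hext] with t ht
          rw [hx0]; linarith
      have := htest (fun t => -r * H (x 0) (gradient U (x 0)) * t + (-r * d / 4) * t ^ 2)
        (by fun_prop) (by
          rw [(quad_deriv _ _ 0).deriv, hEuler x₀ hx₀ hpos, hx0]; ring) hlm
      rw [quad_deriv2] at this
      nlinarith
    refine ⟨fun φ hφ x₀ hx₀ hpos hm => ?_, fun φ hφ x₀ hx₀ hpos hm => ?_⟩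
    · linarith [common φ hφ x₀ hx₀ hpos (Or.inl hm)]
    · exact common φ hφ x₀ hx₀ hpos (Or.inr hm)
  · rintro ⟨hsub, hsup⟩ x₀ hx₀ hpos
    obtain ⟨R, hR, hRb⟩ := Metric.nhds_basis_closedBall.mem_iff.1 (hopen x₀ hx₀ hpos)
    obtain ⟨T, hT, x, hx0, hxB, hxd, hfw, hbw⟩ := two_sided x₀ R hR
      (fun y => H y (gradient U y)) (fun y => -(Hp y (gradient U y)))
      (hVc.mono fun y hy => (hRb hy).1) (hFc.mono hRb)
      (by
        intro y hy z c hc hw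
        have hyR := hRb (Metric.ball_subset_closedBall hy)
        have := hsub (fun w => c * ‖w - z‖ ^ 2)
          (contDiff_const.mul ((contDiff_id.sub contDiff_const).norm_sq ℝ)) y hyR.1 hyR.2
          (by
            filter_upwards [nhdsWithin_le_nhds (Metric.isOpen_ball.mem_nhds hy)] with w hw'
            exact hw w (Metric.ball_subset_closedBall hw'))
        rw [(grad_quad c z y).gradient, inner_smul_right] at this
        by_contra! hn
        nlinarith)
      (by
        intro y hy z c hc hw
        have hyR := hRb (Metric.ball_subset_closedBall hy)
        have := hsup (fun w => (-c) * ‖w - z‖ ^ 2)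
          (contDiff_const.mul ((contDiff_id.sub contDiff_const).norm_sq ℝ)) y hyR.1 hyR.2
          (by
            filter_upwards [nhdsWithin_le_nhds (Metric.isOpen_ball.mem_nhds hy)] with w hw'
            have := hw w (Metric.ball_subset_closedBall hw')
            linarith)
        rw [(grad_quad (-c) z y).gradient, inner_smul_right] at this
        by_contra! hn
        nlinarith)
    have hxΩ : ∀ t ∈ Ioo (-T) T, x t ∈ Ω := fun t ht => (hRb (hxB t ht)).1
    refine ⟨T, hT, x, hx0, hxΩ, hxd, ?_⟩
    intro φ hφ hφ' hmin
    rw [hEuler x₀ hx₀ hpos] at hφ'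
    have hu : ∀ t ∈ Ioo (-T) T,
        HasDerivAt (fun t => U (x t)) (-r * H (x t) (gradient U (x t))) t := fun t ht =>
      htraj T x hxΩ hxd t ht (hRb (hxB t ht)).2
    set a := -r * H x₀ (gradient U x₀) with ha
    rcases hmin with hmin | hmin
    · refine second_fwd (fun t => U (x t)) φ a hφ hφ' T hT ?_ hmin
      refine compare_fwd _ _ (fun t => -r * H (x t) (gradient U (x t))) (fun _ => a) T
        (fun t ht => hu t ⟨by linarith [ht.1], ht.2⟩)
        (fun t _ => by simpa using ((hasDerivAt_id t).const_mul a).const_add (U (x 0)))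
        (by simp) ?_
      intro t ht
      have := hfw t ht
      nlinarith
    · refine second_bwd (fun t => U (x t)) φ a hφ hφ' T hT ?_ hmin
      have := compare_fwd (fun t => U (x (-t))) (fun t => U (x 0) + (-a) * t)
        (fun t => r * H (x (-t)) (gradient U (x (-t)))) (fun _ => -a) T
        (fun t ht => by
          have h : HasDerivAt (fun t => U (x (-t)))
              ((-1:ℝ) • (-r * H (x (-t)) (gradient U (x (-t))))) t :=
            (hu (-t) ⟨by linarith [ht.2], by linarith [ht.1]⟩).scomp t (hasDerivAt_neg t)
          simpa using h)
        (fun t _ => by simpa using ((hasDerivAt_id t).const_mul (-a)).const_add (U (x 0)))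
        (by simp) (fun t ht => by
          have := hbw (-t) ⟨by linarith [ht.2], by linarith [ht.1]⟩
          nlinarith)
      intro t ht
      have := this (-t) ⟨by linarith [ht.2], by linarith [ht.1]⟩
      simp only [neg_neg] at this
      linarith
end

section
/- Let Ω ⊆ ℝⁿ be open and bounded, A ⊆ ℝᵐ nonempty and compact, and f : Ω × A → ℝⁿ continuous, uniformly Lipschitz in the first variable, with f(x,A) convex and −f(x,A) ⊆ f(x,A) for every x; set H(x,p) = max_{a∈A}(−f(x,a)·p) and assume H_p exists and is continuous at every (x,p) with H(x,p) > 0. Let U ∈ C¹(Ω) ∩ C(cl Ω) be a C¹-solution of the Aronsson equation on {x ∈ Ω : H(x,∇U(x)) > 0}. Then for every k ∈ ℝ and every W ∈ C(cl Ω) which is a viscosity subsolution of H(x,∇W(x)) ≤ k in Ω and satisfies W = U on ∂Ω, one has H(x,∇U(x)) ≤ k for all x ∈ Ω. -/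
open Set
open scoped RealInnerProductSpace

section Aux
open Filter Topology Metric

lemma aux_global {E : Type*} [NormedAddCommGroup E] [InnerProductSpace ℝ E] [FiniteDimensional ℝ E]
    {φ : E → ℝ} {x : E} (h : ContDiffAt ℝ 1 φ x) :
    ∃ φ' : E → ℝ, ContDiff ℝ 1 φ' ∧ φ' =ᶠ[𝓝 x] φ := by
  have h1 : ∀ᶠ y in 𝓝 x, ContDiffAt ℝ 1 φ y := h.eventually (by simp)
  obtain ⟨r, hr, hb⟩ := Metric.eventually_nhds_iff_ball.1 h1
  let χ : ContDiffBump x := ⟨r / 4, r / 2, by positivity, by linarith⟩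
  refine ⟨fun y => χ y * φ y, ?_, ?_⟩
  · rw [contDiff_iff_contDiffAt]
    intro y
    by_cases hy : y ∈ ball x r
    · exact χ.contDiffAt.mul (hb y hy)
    · have h2 : y ∈ (closedBall x (r / 2))ᶜ := by
        simp only [mem_compl_iff, mem_closedBall, mem_ball, not_lt, not_le] at hy ⊢
        linarith
      have h3 : (fun y => χ y * φ y) =ᶠ[𝓝 y] fun _ => 0 := by
        filter_upwards [isClosed_closedBall.isOpen_compl.mem_nhds h2] with w hw
        have : χ w = 0 := by
          apply χ.zero_of_le_dist
          simp only [mem_compl_iff, mem_closedBall, not_le] at hw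
          exact hw.le
        simp [this]
      exact contDiffAt_const.congr_of_eventuallyEq h3
  · filter_upwards [χ.eventuallyEq_one] with y hy
    simp [hy]

lemma aux_sq {E : Type*} [NormedAddCommGroup E] [InnerProductSpace ℝ E] (N : ℝ) (w y : E) :
    ∃ q : E →L[ℝ] ℝ, HasFDerivAt (fun y => N * ‖y - w‖ ^ 2) q y ∧
      ∀ v, q v = 2 * N * ⟪y - w, v⟫ := by
  have h := (((hasFDerivAt_id (𝕜 := ℝ) y).sub_const w).norm_sq).const_mul N
  refine ⟨_, h, fun v => ?_⟩
  have : (N • 2 • (innerSL ℝ (id y - w)).comp (ContinuousLinearMap.id ℝ E)) v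
      = N * (2 * ⟪y - w, v⟫) := by
    simp [inner_sub_left]
  rw [this]
  ring

lemma aux_sq_cd {E : Type*} [NormedAddCommGroup E] [InnerProductSpace ℝ E] (N : ℝ) (w : E) :
    ContDiff ℝ 1 (fun y : E => N * ‖y - w‖ ^ 2) :=
  contDiff_const.mul ((contDiff_id.sub contDiff_const).norm_sq ℝ)

set_option maxHeartbeats 2000000 in
lemma aux_key {E P : Type*} [NormedAddCommGroup E] [InnerProductSpace ℝ E] [FiniteDimensional ℝ E]
    [PseudoMetricSpace P] (Ω : Set E) (hΩo : IsOpen Ω) (hΩb : Bornology.IsBounded Ω)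
    (A : Set P) (hAc : IsCompact A) (f : E → P → E)
    (hfc : ContinuousOn (fun q : E × P => f q.1 q.2) (Ω ×ˢ A))
    (L : ℝ) (hL : 0 ≤ L) (hLip : ∀ a ∈ A, ∀ x ∈ Ω, ∀ y ∈ Ω, ‖f x a - f y a‖ ≤ L * ‖x - y‖)
    (U : E → ℝ) (hUc : ContinuousOn U (closure Ω)) (hU1 : ContDiffOn ℝ 1 U Ω)
    (W : E → ℝ) (hWc : ContinuousOn W (closure Ω))
    (V : E → ℝ) (hVc : ContinuousOn V Ω) (k k0 : ℝ) (hk : k < k0)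
    (hW : ∀ x ∈ Ω, ∀ φ : E → ℝ, ContDiffAt ℝ 1 φ x → IsLocalMax (fun y => W y - φ y) x →
      ∀ a ∈ A, -(fderiv ℝ φ x (f x a)) ≤ k)
    (hV : ∀ x ∈ Ω, k0 < V x → ∃ a ∈ A, -(fderiv ℝ U x (f x a)) = V x ∧
      ∀ φ : E → ℝ, ContDiffAt ℝ 1 φ x → IsLocalMax (fun y => V y - φ y) x →
        fderiv ℝ φ x (f x a) = 0)
    (hWU : ∀ x ∈ frontier Ω, W x = U x) :
    ∀ x ∈ Ω, k0 < V x → W x ≤ U x := by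
  intro x1 hx1 hVx1
  by_contra hcon
  push Not at hcon
  have hcpt : IsCompact (closure Ω) := hΩb.isCompact_closure
  set g : E → ℝ := fun x => W x - U x with hg
  have hgc : ContinuousOn g (closure Ω) := hWc.sub hUc
  have hgx1 : 0 < g x1 := by simp only [hg]; linarith
  have hx1c : x1 ∈ closure Ω := subset_closure hx1
  obtain ⟨xB, -, hB⟩ := hcpt.exists_isMaxOn ⟨x1, hx1c⟩ hgc
  set B := g xB
  have hB' : ∀ x ∈ closure Ω, g x ≤ B := fun x hx => hB hx
  have hBpos : 0 < B := hgx1.trans_le (hB' _ hx1c)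
  set m := g x1 / 2 with hm
  have hmpos : 0 < m := by positivity
  set δ := m * (V x1 - k0) with hδ
  have hVk : 0 < V x1 - k0 := by linarith
  have hδpos : 0 < δ := by positivity
  have hδx1 : δ / (V x1 - k0) = m := by rw [hδ]; field_simp
  set D1 : Set E := closure Ω ∩ g ⁻¹' Ici (m / 2) with hD1
  have hD1c : IsCompact D1 :=
    hcpt.of_isClosed_subset (hgc.preimage_isClosed_of_isClosed isClosed_closure isClosed_Ici)
      inter_subset_left
  have hD1Ω : D1 ⊆ Ω := by
    rintro x ⟨hx, hgx⟩
    by_contra hxn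
    have : x ∈ frontier Ω := by
      rw [hΩo.frontier_eq]; exact ⟨hx, hxn⟩
    have h0 : g x = 0 := by simp [hg, hWU x this]
    simp only [mem_preimage, mem_Ici] at hgx
    linarith
  set k1 := k0 + δ / (B + 1) with hk1
  have hk1' : k0 < k1 := by
    have : 0 < δ / (B + 1) := by positivity
    linarith
  set D2 : Set E := D1 ∩ V ⁻¹' Ici k1 with hD2
  have hD2c : IsCompact D2 :=
    hD1c.of_isClosed_subset ((hVc.mono hD1Ω).preimage_isClosed_of_isClosed hD1c.isClosed
      isClosed_Ici) inter_subset_left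
  have hx1D1 : x1 ∈ D1 := ⟨hx1c, by simp only [mem_preimage, mem_Ici]; linarith⟩
  have hx1D2 : x1 ∈ D2 := by
    refine ⟨hx1D1, ?_⟩
    simp only [mem_preimage, mem_Ici, hk1]
    have : δ / (B + 1) ≤ V x1 - k0 := by
      rw [div_le_iff₀ (by positivity), hδ, mul_comm]
      have := hB' _ hx1c
      gcongr
      linarith
    linarith
  -- uniform continuity
  set ρ := min (m / 4) ((k0 - k) / (8 * (L + 1))) with hρ
  have hkk : 0 < k0 - k := by linarith
  have hρpos : 0 < ρ := by positivity
  have hρ1 : ρ ≤ m / 4 := min_le_left _ _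
  have hρ2 : 2 * L * ρ ≤ (k0 - k) / 4 := by
    have h1 : ρ ≤ (k0 - k) / (8 * (L + 1)) := min_le_right _ _
    rw [le_div_iff₀ (by positivity)] at h1
    nlinarith
  obtain ⟨η1, hη1, hu1⟩ := Metric.uniformContinuousOn_iff.1
    (hD1c.uniformContinuousOn_of_continuous (hgc.mono inter_subset_left)) ρ hρpos
  have hfd : ContinuousOn (fun q : E × P => fderiv ℝ U q.1 (f q.1 q.2)) (D1 ×ˢ A) := by
    have h1 : ContinuousOn (fderiv ℝ U) Ω := hU1.continuousOn_fderiv_of_isOpen hΩo le_rfl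
    have h2 : ContinuousOn (fun q : E × P => fderiv ℝ U q.1) (D1 ×ˢ A) :=
      h1.comp continuousOn_fst (fun q hq => hD1Ω hq.1)
    exact h2.clm_apply (hfc.mono (prod_mono hD1Ω Subset.rfl))
  obtain ⟨η2, hη2, hu2⟩ := Metric.uniformContinuousOn_iff.1
    ((hD1c.prod hAc).uniformContinuousOn_of_continuous hfd) ((k0 - k) / 4) (by positivity)
  set η := min η1 η2 with hη
  have hηpos : 0 < η := lt_min hη1 hη2
  set N := (B + 1) / η ^ 2 with hN
  have hNpos : 0 < N := by positivity
  have hNη : N * η ^ 2 = B + 1 := by rw [hN]; field_simp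
  have hΨc : ContinuousOn (fun q : E × E => g q.1 - δ / (V q.2 - k0) - N * ‖q.1 - q.2‖ ^ 2)
      (D1 ×ˢ D2) := by
    refine ContinuousOn.sub (ContinuousOn.sub ?_ ?_) ?_
    · exact (hgc.mono inter_subset_left).comp continuousOn_fst (fun q hq => hq.1)
    · refine continuousOn_const.div ?_ ?_
      · refine ContinuousOn.sub ?_ continuousOn_const
        exact hVc.comp continuousOn_snd (fun q hq => hD1Ω hq.2.1)
      · intro q hq
        have := hq.2.2
        simp only [mem_preimage, mem_Ici] at this
        linarith
    · fun_prop
  obtain ⟨⟨z, w⟩, ⟨hz, hw⟩, hmax⟩ := (hD1c.prod hD2c).exists_isMaxOn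
    ⟨(x1, x1), hx1D1, hx1D2⟩ hΨc
  simp only at hz hw
  have hmax' : ∀ y ∈ D1, ∀ y' ∈ D2, g y - δ / (V y' - k0) - N * ‖y - y'‖ ^ 2 ≤
      g z - δ / (V w - k0) - N * ‖z - w‖ ^ 2 := fun y hy y' hy' =>
    hmax (show (y, y') ∈ D1 ×ˢ D2 from ⟨hy, hy'⟩)
  have hVw : k1 ≤ V w := hw.2
  have hVw' : 0 < V w - k0 := by linarith
  have hgzB : g z ≤ B := hB' _ hz.1
  have hval := hmax' x1 hx1D1 x1 hx1D2
  rw [hδx1] at hval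
  simp only [sub_self, norm_zero] at hval
  have hdpos : 0 < δ / (V w - k0) := by positivity
  have hnn : 0 ≤ N * ‖z - w‖ ^ 2 := by positivity
  have hclose : ‖z - w‖ < η := by
    by_contra hc
    push Not at hc
    have : N * η ^ 2 ≤ N * ‖z - w‖ ^ 2 := by gcongr
    linarith
  have hgzw : |g z - g w| < ρ := by
    have := hu1 z hz w hw.1 (by rw [dist_eq_norm]; exact hclose.trans_le (min_le_left _ _))
    rwa [Real.dist_eq] at this
  have hpen : N * ‖z - w‖ ^ 2 < ρ := by
    have h1 := hmax' w hw.1 w hw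
    simp only [sub_self, norm_zero] at h1
    have := (abs_lt.1 hgzw).2
    linarith
  have hgz : m / 2 < g z := by linarith
  have hgw : m / 2 < g w := by
    have := (abs_lt.1 hgzw).2
    linarith
  have hVw1 : k1 < V w := by
    have h1 : δ / (V w - k0) < B + 1 := by linarith
    rw [div_lt_comm₀ hVw' (by positivity)] at h1
    simp only [hk1]; linarith
  have hzΩ := hD1Ω hz
  have hwΩ := hD1Ω hw.1
  have hnear : ∀ y ∈ Ω, m / 2 < g y → ∀ᶠ y' in 𝓝 y, y' ∈ D1 := by
    intro y hy hgy
    have hcont : ContinuousAt g y :=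
      (hgc.mono subset_closure).continuousAt (hΩo.mem_nhds hy)
    filter_upwards [hΩo.mem_nhds hy, hcont.eventually (lt_mem_nhds hgy)] with y' h1 h2
    exact ⟨subset_closure h1, le_of_lt h2⟩
  obtain ⟨a, ha, hVa, hVt⟩ := hV w hwΩ (by linarith)
  -- test for W at z
  obtain ⟨q1, hq1, hq1'⟩ := aux_sq N w z
  have hUz : ContDiffAt ℝ 1 U z := hU1.contDiffAt (hΩo.mem_nhds hzΩ)
  have hT1 := hW z hzΩ (fun y => U y + N * ‖y - w‖ ^ 2) (hUz.add (aux_sq_cd N w).contDiffAt)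
    (by
      filter_upwards [hnear z hzΩ hgz] with y hy
      have := hmax' y hy w hw
      simp only [hg] at this
      linarith) a ha
  have hfd1 : fderiv ℝ (fun y => U y + N * ‖y - w‖ ^ 2) z = fderiv ℝ U z + q1 :=
    ((hUz.differentiableAt (by simp)).hasFDerivAt.add hq1).fderiv
  rw [hfd1, add_apply, hq1'] at hT1
  obtain ⟨q2, hq2, hq2'⟩ := aux_sq N z w
  set c0 := δ / (V w - k0) with hc0
  set c := c0 + N * ‖w - z‖ ^ 2 with hc
  have hcd2 : ContDiffAt ℝ 1 (fun y => k0 + δ / (c - N * ‖y - z‖ ^ 2)) w := by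
    refine contDiffAt_const.add (contDiffAt_const.div
      (contDiffAt_const.sub (aux_sq_cd N z).contDiffAt) ?_)
    simp only [hc]; linarith
  have hT2 := hVt (fun y => k0 + δ / (c - N * ‖y - z‖ ^ 2)) hcd2 (by
      have hcc : ContinuousAt (fun y => c - N * ‖y - z‖ ^ 2) w := by fun_prop
      have hcpos : 0 < c - N * ‖w - z‖ ^ 2 := by simp only [hc]; linarith
      have hVcw : ContinuousAt V w := hVc.continuousAt (hΩo.mem_nhds hwΩ)
      filter_upwards [hnear w hwΩ hgw, hVcw.eventually (lt_mem_nhds hVw1),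
        hcc.eventually (lt_mem_nhds hcpos)] with y hy hVy hcy
      have h1 := hmax' z hz y ⟨hy, le_of_lt hVy⟩
      have h2 : c - N * ‖w - z‖ ^ 2 = c0 := by simp [hc]
      rw [h2]
      have h3 : δ / c0 = V w - k0 := by rw [hc0]; field_simp
      rw [h3]
      have h4 : c - N * ‖y - z‖ ^ 2 ≤ δ / (V y - k0) := by
        simp only [hc]
        rw [norm_sub_rev w z, norm_sub_rev y z]
        linarith
      have h5 : 0 < V y - k0 := by linarith
      rw [le_div_comm₀ hcy h5] at h4
      linarith)
  have hfd2 : HasFDerivAt (fun y => k0 + δ / (c - N * ‖y - z‖ ^ 2))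
      ((δ / c0 ^ 2) • q2) w := by
    have h2 : c - N * ‖w - z‖ ^ 2 = c0 := by simp [hc]
    have hd : HasDerivAt (fun t : ℝ => k0 + δ / (c - t)) (δ / c0 ^ 2) (N * ‖w - z‖ ^ 2) := by
      have h3 := ((hasDerivAt_const (N * ‖w - z‖ ^ 2) δ).div
        ((hasDerivAt_id (N * ‖w - z‖ ^ 2)).const_sub c)
        (by simp only [id]; rw [h2]; exact hdpos.ne')).const_add k0
      have h4 : δ / c0 ^ 2 = (0 * (c - N * ‖w - z‖ ^ 2) - δ * (-1)) / (c - N * ‖w - z‖ ^ 2) ^ 2 := by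
        rw [h2]; ring
      rw [h4]
      exact h3
    exact HasDerivAt.comp_hasFDerivAt (h₂ := fun t : ℝ => k0 + δ / (c - t))
      (f := fun y => N * ‖y - z‖ ^ 2) w hd hq2
  rw [hfd2.fderiv, smul_apply, hq2', smul_eq_mul] at hT2
  have hzero : 2 * N * ⟪w - z, f w a⟫ = 0 := by
    have : δ / c0 ^ 2 ≠ 0 := by positivity
    exact (mul_eq_zero.1 hT2).resolve_left this
  -- conclusion
  have hu := hu2 (z, a) ⟨hz, ha⟩ (w, a) ⟨hw.1, ha⟩ (by
    rw [Prod.dist_eq]; simp only [dist_self]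
    rw [max_eq_left dist_nonneg, dist_eq_norm]
    exact hclose.trans_le (min_le_right _ _))
  rw [Real.dist_eq] at hu
  simp only at hu
  have hin : ⟪z - w, f z a⟫ ≤ L * ‖z - w‖ ^ 2 - ⟪w - z, f w a⟫ := by
    have h1 : ⟪z - w, f z a - f w a⟫ ≤ ‖z - w‖ * (L * ‖z - w‖) :=
      (real_inner_le_norm _ _).trans
        (mul_le_mul_of_nonneg_left (hLip a ha z hzΩ w hwΩ) (norm_nonneg _))
    have h2 : ⟪w - z, f w a⟫ = -⟪z - w, f w a⟫ := by rw [← inner_neg_left, neg_sub]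
    rw [inner_sub_right] at h1
    rw [h2]; linarith
  have hin2 : 2 * N * ⟪z - w, f z a⟫ ≤ 2 * N * (L * ‖z - w‖ ^ 2 - ⟪w - z, f w a⟫) := by
    gcongr
  have h6 : 2 * L * (N * ‖z - w‖ ^ 2) ≤ 2 * L * ρ := by gcongr
  have h7 := (abs_lt.1 hu).2
  nlinarith


lemma aux_traj {E P : Type*} [NormedAddCommGroup E] [InnerProductSpace ℝ E] [FiniteDimensional ℝ E]
    (Ω : Set E) (hΩo : IsOpen Ω) (A : Set P) (f : E → P → E)
    (L : ℝ) (hL : 0 ≤ L) (hLip : ∀ a ∈ A, ∀ x ∈ Ω, ∀ y ∈ Ω, ‖f x a - f y a‖ ≤ L * ‖x - y‖)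
    (W : E → ℝ) (hWc : ContinuousOn W Ω) (k : ℝ)
    (hW : ∀ x ∈ Ω, ∀ φ : E → ℝ, ContDiffAt ℝ 1 φ x → IsLocalMax (fun y => W y - φ y) x →
      ∀ a ∈ A, -(fderiv ℝ φ x (f x a)) ≤ k)
    (a : P) (ha : a ∈ A) (x : ℝ → E) (s0 s1 : ℝ) (hs : s0 ≤ s1)
    (hxΩ : ∀ s ∈ Icc s0 s1, x s ∈ Ω)
    (hx : ∀ s ∈ Icc s0 s1, HasDerivWithinAt x (f (x s) a) (Icc s0 s1) s) :
    W (x s0) - W (x s1) ≤ k * (s1 - s0) := by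
  by_contra hcon
  push Not at hcon
  obtain ⟨k', hk', hcon'⟩ : ∃ k', k < k' ∧ k' * (s1 - s0) < W (x s0) - W (x s1) := by
    have hc : ContinuousAt (fun t => t * (s1 - s0)) k := by fun_prop
    have h1 := hc.eventually (gt_mem_nhds hcon)
    have h2 : ∀ᶠ t in 𝓝[>] k, t * (s1 - s0) < W (x s0) - W (x s1) := nhdsWithin_le_nhds h1
    obtain ⟨t, h3, h4⟩ := (h2.and self_mem_nhdsWithin).exists
    exact ⟨t, h4, h3⟩
  have hxc : ContinuousOn x (Icc s0 s1) := fun s hs => (hx s hs).continuousWithinAt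
  have hCc : IsCompact (x '' Icc s0 s1) := isCompact_Icc.image_of_continuousOn hxc
  obtain ⟨r, hr, hrΩ⟩ := hCc.exists_cthickening_subset_open hΩo
    (by rintro _ ⟨s, hs, rfl⟩; exact hxΩ s hs)
  set D := cthickening r (x '' Icc s0 s1) with hD
  have hDc : IsCompact D := hCc.cthickening
  have hxD : ∀ s ∈ Icc s0 s1, x s ∈ D := fun s hs =>
    self_subset_cthickening _ (mem_image_of_mem x hs)
  have hs0 : s0 ∈ Icc s0 s1 := ⟨le_rfl, hs⟩
  obtain ⟨B, hB⟩ := (hDc.image_of_continuousOn (hWc.mono hrΩ)).isBounded.exists_norm_le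
  have hB' : ∀ y ∈ D, |W y| ≤ B := fun y hy => hB _ (mem_image_of_mem W hy)
  have hB0 : 0 ≤ B := (abs_nonneg _).trans (hB' _ (hxD s0 hs0))
  have hkk : 0 < k' - k := by linarith
  set γ := W (x s0) - W (x s1) - k' * (s1 - s0) with hγ
  have hγpos : 0 < γ := by simp only [hγ]; linarith
  set ρ := min γ ((k' - k) / (4 * (L + 1))) with hρ
  have hρpos : 0 < ρ := by positivity
  have hρ1 : ρ ≤ γ := min_le_left _ _
  have hρ2 : 2 * L * ρ < k' - k := by
    have h1 : ρ ≤ (k' - k) / (4 * (L + 1)) := min_le_right _ _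
    rw [le_div_iff₀ (by positivity)] at h1
    nlinarith
  obtain ⟨η1, hη1, hu1⟩ := Metric.uniformContinuousOn_iff.1
    (hDc.uniformContinuousOn_of_continuous (hWc.mono hrΩ)) ρ hρpos
  set η := min η1 r with hη
  have hηpos : 0 < η := lt_min hη1 hr
  set N := (2 * B + 1) / η ^ 2 with hN
  have hNpos : 0 < N := by positivity
  have hNη : N * η ^ 2 = 2 * B + 1 := by rw [hN]; field_simp
  have hΨc : ContinuousOn (fun q : ℝ × E => W q.2 + k' * q.1 - N * ‖x q.1 - q.2‖ ^ 2)
      (Icc s0 s1 ×ˢ D) := by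
    refine ContinuousOn.sub (ContinuousOn.add ?_ ?_) ?_
    · exact (hWc.mono hrΩ).comp continuousOn_snd (fun q hq => hq.2)
    · fun_prop
    · have : ContinuousOn (fun q : ℝ × E => x q.1) (Icc s0 s1 ×ˢ D) :=
        hxc.comp continuousOn_fst (fun q hq => hq.1)
      exact continuousOn_const.mul ((this.sub continuousOn_snd).norm.pow 2)
  obtain ⟨⟨s, y⟩, ⟨hsI, hy⟩, hmax⟩ := (isCompact_Icc.prod hDc).exists_isMaxOn
    ⟨(s0, x s0), hs0, hxD s0 hs0⟩ hΨc
  simp only at hsI hy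
  have hmax' : ∀ s' ∈ Icc s0 s1, ∀ y' ∈ D, W y' + k' * s' - N * ‖x s' - y'‖ ^ 2 ≤
      W y + k' * s - N * ‖x s - y‖ ^ 2 := fun s' hs' y' hy' =>
    hmax (show (s', y') ∈ Icc s0 s1 ×ˢ D from ⟨hs', hy'⟩)
  have hcmp := hmax' s hsI (x s) (hxD s hsI)
  simp only [sub_self, norm_zero] at hcmp
  have hclose : ‖x s - y‖ < η := by
    by_contra hc
    push Not at hc
    have h1 : N * η ^ 2 ≤ N * ‖x s - y‖ ^ 2 := by gcongr
    have h2 := abs_le.1 (hB' y hy)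
    have h3 := abs_le.1 (hB' _ (hxD s hsI))
    linarith [h2.2, h3.1]
  have hdiff : |W (x s) - W y| < ρ := by
    have := hu1 (x s) (hxD s hsI) y hy
      (by rw [dist_eq_norm]; exact hclose.trans_le (min_le_left _ _))
    rwa [Real.dist_eq] at this
  have hd1 := (abs_lt.1 hdiff).1
  have hpen : N * ‖x s - y‖ ^ 2 < ρ := by linarith
  have hnn : 0 ≤ N * ‖x s - y‖ ^ 2 := by positivity
  have hs1 : s < s1 := by
    refine lt_of_le_of_ne hsI.2 ?_
    intro he
    have h1 := hmax' s0 hs0 (x s0) (hxD s0 hs0)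
    simp only [sub_self, norm_zero] at h1
    rw [he] at h1 hd1 hnn
    simp only [hγ] at hρ1
    linarith
  have hyΩ := hrΩ hy
  have hxsΩ := hxΩ s hsI
  -- test in y
  obtain ⟨q1, hq1, hq1'⟩ := aux_sq N (x s) y
  have hT1 := hW y hyΩ (fun y => N * ‖y - x s‖ ^ 2) (aux_sq_cd N (x s)).contDiffAt (by
    have hyb : y ∈ ball (x s) r := by
      rw [mem_ball, dist_comm, dist_eq_norm]; exact hclose.trans_le (min_le_right _ _)
    filter_upwards [isOpen_ball.mem_nhds hyb] with y' hy'
    have hy'D : y' ∈ D := by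
      have : y' ∈ thickening r (x '' Icc s0 s1) :=
        mem_thickening_iff.2 ⟨x s, mem_image_of_mem x hsI, hy'⟩
      exact thickening_subset_cthickening _ _ this
    have := hmax' s hsI y' hy'D
    rw [norm_sub_rev y', norm_sub_rev y]
    linarith) a ha
  rw [hq1.fderiv, hq1'] at hT1
  have hder : HasDerivWithinAt (fun t => k' * t - N * ‖x t - y‖ ^ 2)
      (k' * 1 - N * (2 * ⟪x s - y, f (x s) a⟫)) (Icc s0 s1) s :=
    ((hasDerivWithinAt_id s _).const_mul k').sub
      ((((hx s hsI).sub_const y).norm_sq).const_mul N)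
  have hlm : IsLocalMaxOn (fun t => k' * t - N * ‖x t - y‖ ^ 2) (Icc s0 s1) s := by
    have : IsMaxOn (fun t => k' * t - N * ‖x t - y‖ ^ 2) (Icc s0 s1) s := by
      intro t ht
      have := hmax' t ht y hy
      simp only [mem_ofPred_eq]
      linarith
    exact this.localize
  have hcone : s1 - s ∈ posTangentConeAt (Icc s0 s1) s := by
    apply sub_mem_posTangentConeAt_of_segment_subset
    rw [segment_eq_Icc hs1.le]
    exact Icc_subset_Icc hsI.1 le_rfl
  have hT2 := hlm.hasFDerivWithinAt_nonpos hder.hasFDerivWithinAt hcone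
  have hT2' : (s1 - s) * (k' * 1 - N * (2 * ⟪x s - y, f (x s) a⟫)) ≤ 0 := by
    simpa using hT2
  have hT3 : k' * 1 - N * (2 * ⟪x s - y, f (x s) a⟫) ≤ 0 := by
    by_contra hc
    push Not at hc
    have : 0 < s1 - s := by linarith
    have := mul_pos this hc
    linarith
  have hin : ⟪x s - y, f (x s) a⟫ ≤ L * ‖x s - y‖ ^ 2 + ⟪x s - y, f y a⟫ := by
    have h1 : ⟪x s - y, f (x s) a - f y a⟫ ≤ ‖x s - y‖ * (L * ‖x s - y‖) :=
      (real_inner_le_norm _ _).trans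
        (mul_le_mul_of_nonneg_left (hLip a ha _ hxsΩ y hyΩ) (norm_nonneg _))
    rw [inner_sub_right] at h1
    linarith
  have h2 : ⟪y - x s, f y a⟫ = -⟪x s - y, f y a⟫ := by rw [← inner_neg_left, neg_sub]
  rw [h2] at hT1
  have hin2 : 2 * N * ⟪x s - y, f (x s) a⟫ ≤ 2 * N * (L * ‖x s - y‖ ^ 2 + ⟪x s - y, f y a⟫) := by
    gcongr
  have h6 : 2 * L * (N * ‖x s - y‖ ^ 2) ≤ 2 * L * ρ := by gcongr
  nlinarith

lemma aux_min {E P : Type*} [NormedAddCommGroup E] [InnerProductSpace ℝ E] [FiniteDimensional ℝ E]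
    (Ω : Set E) (hΩo : IsOpen Ω) (A : Set P) (f : E → P → E)
    (L : ℝ) (hL : 0 ≤ L) (hLip : ∀ a ∈ A, ∀ x ∈ Ω, ∀ y ∈ Ω, ‖f x a - f y a‖ ≤ L * ‖x - y‖)
    (W : E → ℝ) (hWc : ContinuousOn W Ω) (k : ℝ)
    (hW : ∀ x ∈ Ω, ∀ φ : E → ℝ, ContDiffAt ℝ 1 φ x → IsLocalMax (fun y => W y - φ y) x →
      ∀ a ∈ A, -(fderiv ℝ φ x (f x a)) ≤ k) :
    ∀ x ∈ Ω, ∀ φ : E → ℝ, ContDiffAt ℝ 1 φ x → IsLocalMin (fun y => W y - φ y) x →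
      ∀ a ∈ A, -(fderiv ℝ φ x (f x a)) ≤ k := by
  intro x hx φ hφ hmin a ha
  obtain ⟨r, hr, hrΩ⟩ := Metric.nhds_basis_closedBall.mem_iff.1 (hΩo.mem_nhds hx)
  let C : ℝ := ‖f x a‖ + L * r + 1
  have hC : 0 < C := by positivity
  have hε : 0 < r / C := by positivity
  have h0 : (0 : ℝ) ∈ Icc (-(r / C)) (r / C) := ⟨by linarith, hε.le⟩
  have hPL : IsPicardLindelof (fun _ : ℝ => fun y => f y a)
      (⟨0, h0⟩ : Icc (-(r / C)) (r / C)) x ⟨r, hr.le⟩ 0 ⟨C, hC.le⟩ ⟨L, hL⟩ := by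
    apply IsPicardLindelof.of_time_independent
    · intro y hy
      change ‖f y a‖ ≤ C
      have hy' : y ∈ closedBall x r := hy
      have h1 := hLip a ha y (hrΩ hy') x hx
      have h2 : ‖y - x‖ ≤ r := by rw [← dist_eq_norm]; exact hy'
      have h3 : ‖f y a‖ ≤ ‖f y a - f x a‖ + ‖f x a‖ := by
        simpa using norm_add_le (f y a - f x a) (f x a)
      have h4 : L * ‖y - x‖ ≤ L * r := by gcongr
      simp only [C]; linarith
    · apply LipschitzOnWith.of_dist_le_mul
      intro y hy z hz
      rw [dist_eq_norm, dist_eq_norm]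
      exact hLip a ha y (hrΩ hy) z (hrΩ hz)
    · change C * max (r / C - 0) (0 - (-(r / C))) ≤ r - 0
      simp only [sub_zero, zero_sub, neg_neg, max_self]
      rw [mul_div_cancel₀ _ hC.ne']
  obtain ⟨α, hα0, hα⟩ := hPL.exists_eq_forall_mem_Icc_hasDerivWithinAt₀
  simp only at hα0 hα
  have hαat : HasDerivAt α (f x a) 0 := by
    have := (hα 0 h0).hasDerivAt (Icc_mem_nhds (by linarith) hε)
    rwa [hα0] at this
  have hev : ∀ᶠ t in 𝓝[<] (0 : ℝ), φ (α t) + k * t ≤ φ (α 0) + k * 0 := by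
    have hc := hαat.continuousAt
    rw [ContinuousAt, hα0] at hc
    have hΩ' : ∀ᶠ t in 𝓝 (0 : ℝ), α t ∈ Ω := hc.eventually (hΩo.mem_nhds hx)
    obtain ⟨d, hd, hdb⟩ := Metric.eventually_nhds_iff_ball.1 hΩ'
    have hm : ∀ᶠ t in 𝓝 (0 : ℝ), W x - φ x ≤ W (α t) - φ (α t) := hc.eventually hmin
    have h1 : ∀ᶠ t in 𝓝 (0 : ℝ), -(min d (r / C)) < t := by
      apply lt_mem_nhds
      have := lt_min hd hε
      linarith
    filter_upwards [nhdsWithin_le_nhds hm, nhdsWithin_le_nhds h1, self_mem_nhdsWithin]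
      with t ht1 ht2 ht3
    have ht3' : t < 0 := ht3
    have hsub : Icc t 0 ⊆ Icc (-(r / C)) (r / C) := by
      apply Icc_subset_Icc _ hε.le
      have := min_le_right d (r / C)
      linarith
    have := aux_traj Ω hΩo A f L hL hLip W hWc k hW a ha α t 0 ht3'.le
      (by
        intro s hs
        apply hdb
        rw [mem_ball, Real.dist_eq, sub_zero, abs_lt]
        have := min_le_left d (r / C)
        constructor
        · linarith [hs.1]
        · linarith [hs.2])
      (fun s hs => (hα s (hsub hs)).mono hsub)
    rw [hα0] at this ⊢
    linarith
  have hφd : HasFDerivAt φ (fderiv ℝ φ x) (α 0) := by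
    rw [hα0]; exact (hφ.differentiableAt (by simp)).hasFDerivAt
  have hh : HasDerivAt (fun t => φ (α t) + k * t) (fderiv ℝ φ x (f x a) + k * 1) 0 :=
    (hφd.comp_hasDerivAt (0 : ℝ) hαat).add ((hasDerivAt_id (0 : ℝ)).const_mul k)
  have hlm : IsLocalMaxOn (fun t => φ (α t) + k * t) (Iio 0) 0 := hev
  have hcone : (-1 : ℝ) ∈ posTangentConeAt (Iio 0) (0 : ℝ) := by
    apply mem_posTangentConeAt_of_frequently_mem
    apply Eventually.frequently
    filter_upwards [self_mem_nhdsWithin] with t ht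
    have : (0 : ℝ) < t := ht
    simpa using this
  have := hlm.hasFDerivWithinAt_nonpos hh.hasDerivWithinAt.hasFDerivWithinAt hcone
  have h9 : (-1) * (fderiv ℝ φ x (f x a) + k * 1) ≤ 0 := by simpa using this
  linarith

end Aux

open Filter Topology

/-- a `C¹`-solution of the Aronsson equation is absolutely minimizing:
if `W` is a viscosity subsolution of `H(x,∇W) ≤ k` in `Ω` agreeing with `U` on `∂Ω`,
then `H(x,∇U(x)) ≤ k` in `Ω`. -/
theorem stmt_6 {n m : ℕ} (Ω : Set (EuclideanSpace ℝ (Fin n)))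
    (hΩo : IsOpen Ω) (hΩb : Bornology.IsBounded Ω)
    (A : Set (EuclideanSpace ℝ (Fin m))) (hA : A.Nonempty) (hAc : IsCompact A)
    (f : EuclideanSpace ℝ (Fin n) → EuclideanSpace ℝ (Fin m) → EuclideanSpace ℝ (Fin n))
    (hfc : ContinuousOn (fun q : EuclideanSpace ℝ (Fin n) × EuclideanSpace ℝ (Fin m) =>
      f q.1 q.2) (Ω ×ˢ A))
    (L : ℝ) (hLip : ∀ a ∈ A, ∀ x ∈ Ω, ∀ y ∈ Ω, ‖f x a - f y a‖ ≤ L * ‖x - y‖)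
    (hconv : ∀ x ∈ Ω, Convex ℝ (f x '' A))
    (hsymm : ∀ x ∈ Ω, ∀ a ∈ A, ∃ a' ∈ A, f x a' = -f x a)
    (H : EuclideanSpace ℝ (Fin n) → EuclideanSpace ℝ (Fin n) → ℝ)
    -- `H(x,p) = max_{a ∈ A} (-f(x,a)·p)`
    (hH : ∀ x p, IsGreatest ((fun a => -⟪f x a, p⟫) '' A) (H x p))
    (Hp : EuclideanSpace ℝ (Fin n) → EuclideanSpace ℝ (Fin n) → EuclideanSpace ℝ (Fin n))
    (hHp : ∀ x p, 0 < H x p → HasGradientAt (H x) (Hp x p) p)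
    (hHpc : ContinuousOn (fun q : EuclideanSpace ℝ (Fin n) × EuclideanSpace ℝ (Fin n) =>
      Hp q.1 q.2) {q | 0 < H q.1 q.2})
    (U : EuclideanSpace ℝ (Fin n) → ℝ)
    (hUc : ContinuousOn U (closure Ω)) (hU1 : ContDiffOn ℝ 1 U Ω)
    -- `U` is a `C¹`-solution of the Aronsson equation: with `V(x) = H(x,∇U(x))` and
    -- `F(x) = -H_p(x,∇U(x))`, `V` is both a viscosity sub- and supersolution of
    -- `-F·∇V = 0` and of `F·∇V = 0`
    (hsolmax : ∀ φ : EuclideanSpace ℝ (Fin n) → ℝ, ContDiff ℝ 1 φ → ∀ x₀ ∈ Ω,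
      0 < H x₀ (gradient U x₀) →
      IsLocalMaxOn (fun x => H x (gradient U x) - φ x) Ω x₀ →
      -⟪-(Hp x₀ (gradient U x₀)), gradient φ x₀⟫ ≤ 0 ∧
        ⟪-(Hp x₀ (gradient U x₀)), gradient φ x₀⟫ ≤ 0)
    (hsolmin : ∀ φ : EuclideanSpace ℝ (Fin n) → ℝ, ContDiff ℝ 1 φ → ∀ x₀ ∈ Ω,
      0 < H x₀ (gradient U x₀) →
      IsLocalMinOn (fun x => H x (gradient U x) - φ x) Ω x₀ →
      0 ≤ -⟪-(Hp x₀ (gradient U x₀)), gradient φ x₀⟫ ∧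
        0 ≤ ⟪-(Hp x₀ (gradient U x₀)), gradient φ x₀⟫)
    (k : ℝ) (W : EuclideanSpace ℝ (Fin n) → ℝ) (hWc : ContinuousOn W (closure Ω))
    -- `W` is a viscosity subsolution of `H(x,∇W(x)) ≤ k` in `Ω`
    (hWsub : ∀ φ : EuclideanSpace ℝ (Fin n) → ℝ, ContDiff ℝ 1 φ → ∀ x₀ ∈ Ω,
      IsLocalMaxOn (fun x => W x - φ x) Ω x₀ → H x₀ (gradient φ x₀) ≤ k)
    (hWU : ∀ x ∈ frontier Ω, W x = U x) :
    ∀ x ∈ Ω, H x (gradient U x) ≤ k := by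
  set L' := max L 0 with hL'
  have hL'0 : 0 ≤ L' := le_max_right _ _
  have hLip' : ∀ a ∈ A, ∀ x ∈ Ω, ∀ y ∈ Ω, ‖f x a - f y a‖ ≤ L' * ‖x - y‖ := by
    intro a ha x hx y hy
    refine (hLip a ha x hx y hy).trans ?_
    gcongr
    exact le_max_left _ _
  have hgr : ∀ (φ : EuclideanSpace ℝ (Fin n) → ℝ) (x v : EuclideanSpace ℝ (Fin n)),
      ⟪v, gradient φ x⟫ = fderiv ℝ φ x v := by
    intro φ x v
    rw [real_inner_comm, ← toDual_gradient]
    simp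
  have hWΩ : ContinuousOn W Ω := hWc.mono subset_closure
  -- local test functions
  have hW : ∀ x ∈ Ω, ∀ φ : EuclideanSpace ℝ (Fin n) → ℝ, ContDiffAt ℝ 1 φ x →
      IsLocalMax (fun y => W y - φ y) x → ∀ a ∈ A, -(fderiv ℝ φ x (f x a)) ≤ k := by
    intro x hx φ hφ hmax a ha
    obtain ⟨ψ, hψ, hψφ⟩ := aux_global hφ
    have h1 : IsLocalMaxOn (fun y => W y - ψ y) Ω x := by
      apply IsLocalMax.on
      filter_upwards [hmax, hψφ] with y h1 h2
      rw [h2, hψφ.eq_of_nhds]; exact h1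
    have h2 := hWsub ψ hψ x hx h1
    have h3 := (hH x (gradient ψ x)).2 (mem_image_of_mem _ ha)
    rw [hgr, hψφ.fderiv_eq] at h3
    linarith
  have hWmin := aux_min Ω hΩo A f L' hL'0 hLip' W hWΩ k hW
  intro x0 hx0
  by_contra hcon
  push Not at hcon
  -- `0 ≤ k`, because of the constant trajectory
  have hk0 : 0 ≤ k := by
    obtain ⟨a, ha⟩ := hA
    obtain ⟨a', ha', haa'⟩ := hsymm x0 hx0 a ha
    have hmid := hconv x0 hx0 (mem_image_of_mem _ ha) (mem_image_of_mem _ ha')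
      (show (0 : ℝ) ≤ 1 / 2 by norm_num) (show (0 : ℝ) ≤ 1 / 2 by norm_num) (by norm_num)
    rw [haa'] at hmid
    simp only [smul_neg, add_neg_cancel] at hmid
    obtain ⟨b, hb, hb0⟩ := hmid
    have := aux_traj Ω hΩo A f L' hL'0 hLip' W hWΩ k hW b hb (fun _ => x0) 0 1 zero_le_one
      (fun _ _ => hx0) (fun s _ => by
        rw [hb0]; exact hasDerivWithinAt_const _ _ _)
    linarith
  set V : EuclideanSpace ℝ (Fin n) → ℝ := fun x => H x (gradient U x) with hV
  have hfdU : ContinuousOn (fderiv ℝ U) Ω := hU1.continuousOn_fderiv_of_isOpen hΩo le_rfl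
  have hVc : ContinuousOn V Ω := by
    have hVs : ∀ x, V x = sSup ((fun a : A => -(fderiv ℝ U x (f x a))) '' univ) := by
      intro x
      change H x (gradient U x) = _
      rw [← (hH x (gradient U x)).csSup_eq]
      congr 1
      ext t
      simp [hgr]
    have hcA : CompactSpace A := isCompact_iff_compactSpace.1 hAc
    rw [continuousOn_iff_continuous_domRestrict]
    have h1 : Continuous (fun x : Ω =>
        sSup ((fun a : A => -(fderiv ℝ U x (f x a))) '' univ)) := by
      apply IsCompact.continuous_sSup (f := fun (x : Ω) (a : A) => -(fderiv ℝ U x (f x a)))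
        isCompact_univ
      have h2 : Continuous (fun q : Ω × A => fderiv ℝ U q.1) :=
        (continuousOn_iff_continuous_domRestrict.1 hfdU).comp continuous_fst
      have h3 : Continuous (fun q : Ω × A => f q.1 q.2) :=
        hfc.comp_continuous (f := fun q : Ω × A => ((q.1 : EuclideanSpace ℝ (Fin n)),
          (q.2 : EuclideanSpace ℝ (Fin m)))) (by fun_prop) (fun q => ⟨q.1.2, q.2.2⟩)
      exact (h2.clm_apply h3).neg
    convert h1 using 1
    ext x
    exact hVs x
  set k0 := (k + V x0) / 2 with hk0'
  have hkV : k < V x0 := hcon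
  have hkk0 : k < k0 := by simp only [hk0']; linarith
  have hk0V : k0 < V x0 := by simp only [hk0']; linarith
  have hVt : ∀ x ∈ Ω, k0 < V x → ∃ a ∈ A, -(fderiv ℝ U x (f x a)) = V x ∧
      ∀ φ : EuclideanSpace ℝ (Fin n) → ℝ, ContDiffAt ℝ 1 φ x →
        IsLocalMax (fun y => V y - φ y) x → fderiv ℝ φ x (f x a) = 0 := by
    intro x hx hVx
    have hpos : 0 < H x (gradient U x) := by
      have : k0 < H x (gradient U x) := hVx
      linarith
    obtain ⟨a, ha, hae⟩ := (hH x (gradient U x)).1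
    simp only at hae
    have hHpa : Hp x (gradient U x) = -f x a := by
      have hg := (hHp x _ hpos).hasFDerivAt
      have hi : HasFDerivAt (fun q => ⟪f x a, q⟫) (innerSL ℝ (f x a)) (gradient U x) :=
        (innerSL ℝ (f x a)).hasFDerivAt
      have hmin : IsLocalMin (fun q => H x q + ⟪f x a, q⟫) (gradient U x) := by
        refine Eventually.of_forall fun q => ?_
        have := (hH x q).2 (mem_image_of_mem _ ha)
        simp only at this ⊢
        linarith
      have h0 := hmin.hasFDerivAt_eq_zero (hg.add hi)
      have h1 : ∀ v, ⟪Hp x (gradient U x) + f x a, v⟫ = 0 := by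
        intro v
        have := congrArg (fun l => l v) h0
        simpa [inner_add_left] using this
      have h2 := h1 (Hp x (gradient U x) + f x a)
      exact eq_neg_of_add_eq_zero_left (inner_self_eq_zero.1 h2)
    refine ⟨a, ha, ?_, ?_⟩
    · rw [← hgr]; exact hae
    · intro φ hφ hmax
      obtain ⟨ψ, hψ, hψφ⟩ := aux_global hφ
      have h1 : IsLocalMaxOn (fun y => H y (gradient U y) - ψ y) Ω x := by
        apply IsLocalMax.on
        filter_upwards [hmax, hψφ] with y h1 h2
        rw [h2, hψφ.eq_of_nhds]; exact h1
      have h2 := hsolmax ψ hψ x hx hpos h1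
      rw [hHpa, neg_neg, hgr, hψφ.fderiv_eq] at h2
      linarith [h2.1, h2.2]
  have hle := aux_key Ω hΩo hΩb A hAc f hfc L' hL'0 hLip' U hUc hU1 W hWc V hVc k k0 hkk0
    hW hVt hWU
  have hge := aux_key Ω hΩo hΩb A hAc f hfc L' hL'0 hLip' (fun x => -U x) hUc.neg hU1.neg
    (fun x => -W x) hWc.neg V hVc k k0 hkk0
    (by
      intro x hx φ hφ hmax a ha
      obtain ⟨a', ha', haa'⟩ := hsymm x hx a ha
      have hmin : IsLocalMin (fun y => W y - (-φ y)) x := by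
        filter_upwards [hmax] with y hy
        linarith
      have := hWmin x hx (fun y => -φ y) hφ.neg hmin a' ha'
      rw [haa', fderiv_fun_neg] at this
      simpa using this)
    (by
      intro x hx hVx
      obtain ⟨a, ha, h1, h2⟩ := hVt x hx hVx
      obtain ⟨a', ha', haa'⟩ := hsymm x hx a ha
      refine ⟨a', ha', ?_, ?_⟩
      · rw [haa', fderiv_fun_neg, ← h1]; simp
      · intro φ hφ hmax
        rw [haa', map_neg, h2 φ hφ hmax, neg_zero])
    (by intro x hx; simp [hWU x hx])
  have hWU' : ∀ᶠ y in 𝓝 x0, W y = U y := by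
    have hVx0 : ContinuousAt V x0 := hVc.continuousAt (hΩo.mem_nhds hx0)
    filter_upwards [hΩo.mem_nhds hx0, hVx0.eventually (lt_mem_nhds hk0V)] with y hy hVy
    have h1 := hle y hy hVy
    have h2 := hge y hy hVy
    linarith
  have hlm : IsLocalMax (fun y => W y - U y) x0 := by
    filter_upwards [hWU'] with y hy
    rw [hy, hWU'.self_of_nhds]; simp
  obtain ⟨a, ha, h1, -⟩ := hVt x0 hx0 hk0V
  have h2 := hW x0 hx0 U (hU1.contDiffAt (hΩo.mem_nhds hx0)) hlm a ha
  linarith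
end
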